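/- Let Ω ⊂ ℂⁿ, n ≥ 2, be a bounded pseudoconvex domain with C^∞ boundary, and let p ∈ ∂Ω be a strongly pseudoconvex boundary point. If F : Ω → Ω is a holomorphic map such that F(z₀) = z₀ for some z₀ ∈ Ω and F(z) = z + o(‖z−p‖²) as z → p within Ω, then F(z) = z for all z ∈ Ω. -/

import Mathlib

open Complex Topology Filter Metric Set Function

noncomputable section

/-- `ℂⁿ` as a normed space. -/
abbrev En (n : ℕ) : Type := EuclideanSpace ℂ (Fin n)

/-- A domain: a nonempty open connected set. -/
def IsDomain' {n : ℕ} (Ω : Set (En n)) : Prop :=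
  IsOpen Ω ∧ IsConnected Ω

/-- The Levi form of `ρ` at `q` in direction `ξ`:
`(1/4)(H_q(ξ,ξ) + H_q(iξ,iξ))` with `H_q` the second real Fréchet derivative. -/
def LeviForm {n : ℕ} (ρ : En n → ℝ) (q ξ : En n) : ℝ :=
  (1 / 4) * (iteratedFDeriv ℝ 2 ρ q ![ξ, ξ] + iteratedFDeriv ℝ 2 ρ q ![I • ξ, I • ξ])

/-- `ξ` lies in the complex tangent space of `{ρ = 0}` at `q`. -/
def InCplxTangent {n : ℕ} (ρ : En n → ℝ) (q ξ : En n) : Prop :=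
  fderiv ℝ ρ q ξ = 0 ∧ fderiv ℝ ρ q (I • ξ) = 0

/-- `ρ` is a `C^m` defining function for `Ω`. -/
def IsDefiningFunction {n : ℕ} (Ω : Set (En n)) (m : ℕ∞) (ρ : En n → ℝ) : Prop :=
  ContDiff ℝ m ρ ∧ Ω = {z | ρ z < 0} ∧ frontier Ω = {z | ρ z = 0} ∧
    ∀ q ∈ frontier Ω, fderiv ℝ ρ q ≠ 0

/-- `q` is a strongly pseudoconvex point with respect to `ρ`. -/
def StronglyPcxAt {n : ℕ} (ρ : En n → ℝ) (q : En n) : Prop :=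
  ∀ ξ : En n, ξ ≠ 0 → InCplxTangent ρ q ξ → 0 < LeviForm ρ q ξ

/-- `Ω` is pseudoconvex with `C^∞` boundary, witnessed by the defining function `ρ`. -/
def IsPcxCinfBoundary {n : ℕ} (Ω : Set (En n)) (ρ : En n → ℝ) : Prop :=
  IsDefiningFunction Ω ⊤ ρ ∧
    ∀ q ∈ frontier Ω, ∀ ξ : En n, InCplxTangent ρ q ξ → 0 ≤ LeviForm ρ q ξ

/-- `F z = z + o(‖z - p‖^k)` as `z → p` within `Ω`. -/
def LittleOh {n : ℕ} (Ω : Set (En n)) (F : En n → En n) (p : En n) (k : ℕ) : Prop :=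
  Tendsto (fun z => ‖F z - z‖ / ‖z - p‖ ^ k) (𝓝[Ω] p) (𝓝 0)

/-- `F` is an automorphism of `Ω`: a holomorphic bijection with holomorphic inverse. -/
def IsAutomorphismOf {n : ℕ} (F : En n → En n) (Ω : Set (En n)) : Prop :=
  DifferentiableOn ℂ F Ω ∧ MapsTo F Ω Ω ∧
    ∃ G : En n → En n, DifferentiableOn ℂ G Ω ∧ MapsTo G Ω Ω ∧
      (∀ z ∈ Ω, G (F z) = z) ∧ (∀ z ∈ Ω, F (G z) = z)

/-!
The iterates `Fᵏ` converge to a map `g` with `F ∘ g = g`. If `g` is open at a point near `p`, then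
`F` is the identity on an open set, hence everywhere.

Convergence only needs that `1` is the sole unimodular eigenvalue of `dF(z₀)`. An eigenvalue `μ ≠ 1`
with `|μ| = 1` yields, through the Cesàro averages of `μ⁻ᵏ Fᵏ`, a bounded holomorphic `f` with
`f ∘ F = μ f` whose derivative at `z₀` is nonzero. At distance `τ` from `p` along the normal,
`(μ - 1) f = f ∘ F - f` is `o(τ)` times the size of `f` on a ball of radius comparable to `τ`;
iterating this on shrinking balls makes `f` smaller than `rᴾ` with `P τ` as large as desired, and
three circles on discs ending at `p` force `f = 0`.

To see that `dg` is injective at a point `z` at distance `τ` from `p`, compare `g` with `Fᵏ` for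
`k` of order `1 / τ`: there `Fᵏ` is within `ε τ` of the identity. Closer to the centre of the
inner tangent ball at `p`, `Fᵏ - g` is exponentially small in `1 / τ`, and three circles carry a
small factor up to `z`. Smallness relative to `τ` alone does not suffice, because the box around
`z` has size `τ` in the complex normal direction but `√τ` in the tangential ones. Strong
pseudoconvexity provides a holomorphic peak function `L`, the Levi polynomial, with
`Re L ≤ -c ‖z - p‖²` near `p`; a Harnack inequality for `‖L‖ + ‖z - p‖²` then shows that `Fᵏ` and
`g` respect these anisotropic scales.
-/

section HolomorphicMaps

variable {E V : Type*} [NormedAddCommGroup E] [NormedAddCommGroup V]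

theorem mapsTo_closedBall_of_norm_le {f : E → V} {z : E} {r B : ℝ}
    (hB : ∀ x ∈ ball z r, ‖f x‖ ≤ B) : MapsTo f (ball z r) (closedBall (f z) (2 * B)) := by
  intro x hx
  have hr : 0 < r := pos_of_mem_ball hx
  rw [mem_closedBall, dist_eq_norm]
  linarith [norm_sub_le (f x) (f z), hB x hx, hB z (mem_ball_self hr)]

theorem exists_ball_subset_forall_norm_le {f : E → V} {Ω : Set E} {z : E} (hΩ : IsOpen Ω)
    (hf : ContinuousOn f Ω) (hz : z ∈ Ω) :
    ∃ r > 0, ball z r ⊆ Ω ∧ ∀ x ∈ ball z r, ‖f x‖ ≤ ‖f z‖ + 1 := by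
  have hnear : ∀ᶠ x in 𝓝 z, x ∈ Ω ∧ ‖f x‖ < ‖f z‖ + 1 :=
    (eventually_mem_set.2 (hΩ.mem_nhds hz)).and
      ((hf.continuousAt (hΩ.mem_nhds hz)).norm.eventually_lt_const (lt_add_one _))
  obtain ⟨r, hr, hball⟩ := Metric.eventually_nhds_iff_ball.1 hnear
  exact ⟨r, hr, fun x hx => (hball x hx).1, fun x hx => (hball x hx).2.le⟩

variable [NormedSpace ℂ E] [NormedSpace ℂ V]

theorem norm_sub_le_of_norm_le_ball {f : E → V} {z w : E} {r B : ℝ}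
    (hd : DifferentiableOn ℂ f (ball z r)) (hB : ∀ x ∈ ball z r, ‖f x‖ ≤ B) (hw : w ∈ ball z r) :
    ‖f w - f z‖ ≤ 2 * B / r * ‖w - z‖ := by
  simpa [dist_eq_norm] using
    dist_le_div_mul_dist_of_mapsTo_ball hd (mapsTo_closedBall_of_norm_le hB) hw

theorem norm_fderiv_le_of_norm_le_ball {f : E → V} {z : E} {r B : ℝ} (hr : 0 < r)
    (hd : DifferentiableOn ℂ f (ball z r)) (hB : ∀ x ∈ ball z r, ‖f x‖ ≤ B) :
    ‖fderiv ℂ f z‖ ≤ 2 * B / r :=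
  norm_fderiv_le_div_of_mapsTo_ball hd (mapsTo_closedBall_of_norm_le hB) hr

theorem norm_fderiv_apply_le_of_norm_le_disc {f : E → V} {z v : E} {r B : ℝ} (hr : 0 < r)
    (hd : ∀ ζ : ℂ, ‖ζ‖ < r → DifferentiableAt ℂ f (z + ζ • v))
    (hB : ∀ ζ : ℂ, ‖ζ‖ < r → ‖f (z + ζ • v)‖ ≤ B) :
    ‖fderiv ℂ f z v‖ ≤ 2 * B / r := by
  have hline : DifferentiableOn ℂ (fun ζ : ℂ => f (z + ζ • v)) (ball 0 r) := fun ζ hζ =>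
    ((hd ζ (by simpa using hζ)).comp (f := fun ζ : ℂ => z + ζ • v) ζ
      (by fun_prop)).differentiableWithinAt
  have hderiv : deriv (fun ζ : ℂ => f (z + ζ • v)) 0 = fderiv ℂ f z v :=
    (by simpa using hd 0 (by simpa using hr) : DifferentiableAt ℂ f z).lineDeriv_eq_fderiv
  rw [← hderiv, norm_deriv_eq_norm_fderiv]
  exact norm_fderiv_le_of_norm_le_ball hr hline fun ζ hζ => hB ζ (by simpa using hζ)

theorem norm_sub_sub_fderiv_le_of_norm_le_ball {f : E → V} {z w : E} {r B : ℝ}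
    (hd : DifferentiableOn ℂ f (ball z r)) (hB : ∀ x ∈ ball z r, ‖f x‖ ≤ B) (hw : w ∈ ball z r) :
    ‖f w - f z - fderiv ℂ f z (w - z)‖ ≤ 4 * B * (‖w - z‖ / r) ^ 2 := by
  have hr : 0 < r := pos_of_mem_ball hw
  set g : E → V := fun x => f x - fderiv ℂ f z (x - z) with hg
  have hsub : ∀ x, g x - g z = f x - f z - fderiv ℂ f z (x - z) := fun x => by
    simp only [hg, sub_self, map_zero, sub_zero]; abel
  have hgd : DifferentiableOn ℂ g (ball z r) := hd.sub (by fun_prop)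
  have hmap : MapsTo g (ball z r) (closedBall (g z) (4 * B)) := by
    intro x hx
    have hlin : ‖fderiv ℂ f z (x - z)‖ ≤ 2 * B / r * r :=
      (fderiv ℂ f z).le_of_opNorm_le_of_le (norm_fderiv_le_of_norm_le_ball hr hd hB)
        (mem_ball_iff_norm.1 hx).le
    have hosc := mapsTo_closedBall_of_norm_le hB hx
    rw [mem_closedBall, dist_eq_norm] at hosc
    rw [div_mul_cancel₀ _ hr.ne'] at hlin
    rw [mem_closedBall, dist_eq_norm, hsub]
    linarith [norm_sub_le (f x - f z) (fderiv ℂ f z (x - z))]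
  have ho : (g · - g z) =o[𝓝 z] (fun w ↦ ‖w - z‖ ^ 1) := by
    simp only [pow_one, hsub]
    exact (hd.differentiableAt (ball_mem_nhds _ hr)).hasFDerivAt.isLittleO.norm_right
  simpa [dist_eq_norm, hsub] using dist_le_mul_div_pow_of_mapsTo_ball_of_isLittleO hgd hmap ho hw

theorem continuousAt_fderiv_of_differentiableOn {f : E → V} {Ω : Set E} {z : E}
    (hΩ : IsOpen Ω) (hd : DifferentiableOn ℂ f Ω) (hz : z ∈ Ω) :
    ContinuousAt (fderiv ℂ f) z := by
  obtain ⟨r, hr, hball, hB⟩ := exists_ball_subset_forall_norm_le hΩ hd.continuousOn hz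
  replace hd := hd.mono hball
  set B := ‖f z‖ + 1
  have hB0 : 0 ≤ B := by positivity
  rw [ContinuousAt, tendsto_iff_norm_sub_tendsto_zero]
  have hlim : Tendsto (fun w => 32 * B / r ^ 2 * ‖w - z‖) (𝓝 z) (𝓝 0) := by
    have : Continuous fun w : E => 32 * B / r ^ 2 * ‖w - z‖ := by fun_prop
    simpa using this.tendsto z
  refine squeeze_zero' (Eventually.of_forall fun _ => norm_nonneg _) ?_ hlim
  filter_upwards [ball_mem_nhds z (half_pos hr)] with w hw
  rw [mem_ball, dist_eq_norm] at hw
  rcases eq_or_ne w z with rfl | hne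
  · simp
  have hs : 0 < ‖w - z‖ := norm_pos_iff.2 (sub_ne_zero.2 hne)
  set s : ℝ := ‖w - z‖
  have hsub : ball w s ⊆ ball z r := ball_subset_ball' (by rw [dist_eq_norm]; linarith)
  set φ : E → V := fun x => f x - f z - fderiv ℂ f z (x - z)
  have hφd : DifferentiableOn ℂ φ (ball w s) := ((hd.mono hsub).sub_const _).sub (by fun_prop)
  have hφB : ∀ x ∈ ball w s, ‖φ x‖ ≤ 4 * B * (2 * s / r) ^ 2 := by
    intro x hx
    have : ‖x - z‖ ≤ 2 * s := by
      rw [mem_ball, dist_eq_norm] at hx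
      linarith [norm_sub_le_norm_sub_add_norm_sub x w z]
    grw [norm_sub_sub_fderiv_le_of_norm_le_ball hd hB (hsub hx), this]
  have hder : fderiv ℂ φ w = fderiv ℂ f w - fderiv ℂ f z := by
    have hlin : HasFDerivAt (fun x => fderiv ℂ f z (x - z)) (fderiv ℂ f z) w :=
      (fderiv ℂ f z).hasFDerivAt.comp w ((hasFDerivAt_id w).sub_const z)
    exact (((hd.differentiableAt (isOpen_ball.mem_nhds (hsub (mem_ball_self hs)))).hasFDerivAt
      |>.sub_const _).sub hlin).fderiv
  calc ‖fderiv ℂ f w - fderiv ℂ f z‖ ≤ 2 * (4 * B * (2 * s / r) ^ 2) / s :=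
        hder ▸ norm_fderiv_le_of_norm_le_ball hs hφd hφB
    _ = 32 * B / r ^ 2 * s := by field_simp; ring

theorem hasStrictFDerivAt_of_differentiableOn {f : E → V} {Ω : Set E} {z : E}
    (hΩ : IsOpen Ω) (hd : DifferentiableOn ℂ f Ω) (hz : z ∈ Ω) :
    HasStrictFDerivAt f (fderiv ℂ f z) z :=
  hasStrictFDerivAt_of_hasFDerivAt_of_continuousAt (f' := fderiv ℂ f)
    (by filter_upwards [hΩ.mem_nhds hz] with x hx using
      (hd.differentiableAt (hΩ.mem_nhds hx)).hasFDerivAt)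
    (continuousAt_fderiv_of_differentiableOn hΩ hd hz)

theorem exists_tendsto_fderiv_of_norm_le [FiniteDimensional ℂ E] [FiniteDimensional ℂ V]
    {ι : Type*} (U : Ultrafilter ι) {f : ι → E → V} {z : E} {r B : ℝ} (hr : 0 < r)
    (hd : ∀ i, DifferentiableOn ℂ (f i) (ball z r)) (hB : ∀ i, ∀ x ∈ ball z r, ‖f i x‖ ≤ B) :
    ∃ D : E →L[ℂ] V, Tendsto (fun i => fderiv ℂ (f i) z) U (𝓝 D) := by
  have : ProperSpace (E →L[ℂ] V) := FiniteDimensional.proper ℂ _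
  obtain ⟨D, -, hD⟩ := (isCompact_closedBall (0 : E →L[ℂ] V) (2 * B / r)).ultrafilter_le_nhds
    (U.map fun i => fderiv ℂ (f i) z) (le_principal_iff.2 (Ultrafilter.mem_map.2
      (Filter.univ_mem' fun i => by
        simpa using norm_fderiv_le_of_norm_le_ball hr (hd i) (hB i))))
  exact ⟨D, hD⟩

-- The remainder in the second order Taylor estimate is uniform in `i`, so it survives the limit.
theorem exists_hasFDerivAt_of_tendsto_ultrafilter [FiniteDimensional ℂ E] [FiniteDimensional ℂ V]
    {ι : Type*} {U : Ultrafilter ι} {f : ι → E → V} {g : E → V} {Ω : Set E} {B : ℝ}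
    (hΩ : IsOpen Ω) (hd : ∀ i, DifferentiableOn ℂ (f i) Ω) (hB : ∀ i, ∀ x ∈ Ω, ‖f i x‖ ≤ B)
    (hlim : ∀ x ∈ Ω, Tendsto (fun i => f i x) U (𝓝 (g x))) {z : E} (hz : z ∈ Ω) :
    ∃ D : E →L[ℂ] V, HasFDerivAt g D z ∧ Tendsto (fun i => fderiv ℂ (f i) z) U (𝓝 D) := by
  obtain ⟨r, hr, hball⟩ := Metric.isOpen_iff.1 hΩ z hz
  obtain ⟨D, hD⟩ := exists_tendsto_fderiv_of_norm_le U hr (fun i => (hd i).mono hball)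
    fun i x hx => hB i x (hball hx)
  refine ⟨D, HasFDerivAt.of_isLittleO ?_, hD⟩
  have htaylor : ∀ w ∈ ball z r, ‖g w - g z - D (w - z)‖ ≤ 4 * B * (‖w - z‖ / r) ^ 2 := by
    intro w hw
    have hconv : Tendsto (fun i => ‖f i w - f i z - fderiv ℂ (f i) z (w - z)‖) U
        (𝓝 ‖g w - g z - D (w - z)‖) :=
      (((hlim w (hball hw)).sub (hlim z hz)).sub
        (((ContinuousLinearMap.apply ℂ V (w - z)).continuous.tendsto D).comp hD)).norm
    exact le_of_tendsto hconv (Eventually.of_forall fun i =>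
      norm_sub_sub_fderiv_le_of_norm_le_ball ((hd i).mono hball) (fun x hx => hB i x (hball hx)) hw)
  have hO : (fun w => g w - g z - D (w - z)) =O[𝓝 z] fun w => ‖w - z‖ ^ 2 := by
    refine Asymptotics.IsBigO.of_bound (4 * B / r ^ 2) ?_
    filter_upwards [ball_mem_nhds z hr] with w hw
    refine (htaylor w hw).trans_eq ?_
    rw [Real.norm_of_nonneg (by positivity)]
    ring
  exact hO.trans_isLittleO ((Asymptotics.isLittleO_norm_pow_id one_lt_two).comp_tendsto
    (tendsto_sub_nhds_zero_iff.2 tendsto_id))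

theorem eqOn_zero_ball_of_eventuallyEq_zero [CompleteSpace V] {f : E → V} {z : E} {r : ℝ}
    (hd : DifferentiableOn ℂ f (ball z r)) (h0 : f =ᶠ[𝓝 z] 0) : EqOn f 0 (ball z r) := by
  intro w hw
  set ℓ : ℂ → E := fun ζ => z + ζ • (w - z) with hℓ
  have hℓc : Continuous ℓ := by fun_prop
  have hℓd : Differentiable ℂ ℓ := by fun_prop
  have hℓ0 : ℓ 0 = z := by simp [hℓ]
  have hℓ1 : ℓ 1 = w := by simp [hℓ]
  have hdisc : ∀ ζ : ℂ, ‖ζ‖ ≤ 1 → ℓ ζ ∈ ball z r := fun ζ hζ => by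
    rw [mem_ball, dist_eq_norm, hℓ, add_sub_cancel_left, norm_smul]
    rw [mem_ball, dist_eq_norm] at hw
    exact (mul_le_of_le_one_left (norm_nonneg _) hζ).trans_lt hw
  have hpre : IsOpen (ℓ ⁻¹' ball z r) := isOpen_ball.preimage hℓc
  have hconn : IsPreconnected (ℓ ⁻¹' ball z r) := by
    refine Convex.isPreconnected fun a ha b hb s t hs ht hst => ?_
    have : ℓ (s • a + t • b) = s • ℓ a + t • ℓ b := by
      have hz : z = s • z + t • z := by rw [← add_smul, hst, one_smul]
      simp only [hℓ]
      nth_rw 1 [hz]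
      simp only [add_smul, smul_add, smul_assoc]
      abel
    rw [mem_preimage, this]
    exact convex_ball z r ha hb hs ht hst
  have hzero := ((hd.comp hℓd.differentiableOn (mapsTo_preimage ℓ _)).analyticOnNhd hpre
    ).eqOn_zero_of_preconnected_of_eventuallyEq_zero hconn
    (z₀ := 0) (hdisc 0 (by simp)) ((hℓc.tendsto' 0 z hℓ0).eventually h0)
  simpa [hℓ1] using hzero (hdisc 1 (by simp))

theorem eqOn_of_isPreconnected_of_eventuallyEq [CompleteSpace V] {f g : E → V} {Ω : Set E}
    (hΩ : IsOpen Ω) (hc : IsPreconnected Ω) (hf : DifferentiableOn ℂ f Ω)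
    (hg : DifferentiableOn ℂ g Ω) {z : E} (hz : z ∈ Ω) (h0 : f =ᶠ[𝓝 z] g) : EqOn f g Ω := by
  have hsub : Ω ⊆ {x | f =ᶠ[𝓝 x] g} := by
    refine hc.subset_of_closure_inter_subset isOpen_setOfPred_eventually_nhds ⟨z, hz, h0⟩ ?_
    rintro x ⟨hx, hxΩ⟩
    obtain ⟨r, hr, hball⟩ := Metric.isOpen_iff.1 hΩ x hxΩ
    obtain ⟨y, hy : f =ᶠ[𝓝 y] g, hxy⟩ := Metric.mem_closure_iff.1 hx (r / 2) (half_pos hr)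
    have hyx : ball y (r / 2) ⊆ ball x r := ball_subset_ball' (by rw [dist_comm] at hxy; linarith)
    have hzero := eqOn_zero_ball_of_eventuallyEq_zero ((hf.sub hg).mono (hyx.trans hball))
      (hy.mono fun u hu => sub_eq_zero.2 hu)
    filter_upwards [isOpen_ball.mem_nhds (mem_ball.2 hxy)] with u hu using sub_eq_zero.1 (hzero hu)
  exact fun x hx => (hsub hx).self_of_nhds

end HolomorphicMaps

section ThreeCircles

variable {V : Type*} [NormedAddCommGroup V] [NormedSpace ℂ V]

theorem frontier_ball_sdiff_closedBall_subset {X : Type*} [PseudoMetricSpace X] (x : X) (r R : ℝ) :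
    frontier (ball x R \ closedBall x r) ⊆ sphere x R ∪ sphere x r := by
  rw [sdiff_eq]
  refine (frontier_inter_subset _ _).trans (union_subset_union ?_ ?_)
  · exact inter_subset_left.trans frontier_ball_subset_sphere
  · rw [frontier_compl]
    exact inter_subset_right.trans frontier_closedBall_subset_sphere

-- Maximum principle for `ζ⁻ᵖ f` on the annulus.
theorem norm_le_mul_div_pow_of_diffContOnCl {f : ℂ → V} {r R B : ℝ} {p : ℕ} (hr : 0 < r)
    (hf : DiffContOnCl ℂ f (ball 0 R)) (hR : ∀ ζ : ℂ, ‖ζ‖ = R → ‖f ζ‖ ≤ B)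
    (hs : ∀ ζ : ℂ, ‖ζ‖ = r → ‖f ζ‖ ≤ B * (r / R) ^ p) {ζ : ℂ} (h1 : r ≤ ‖ζ‖) (h2 : ‖ζ‖ < R) :
    ‖f ζ‖ ≤ B * (‖ζ‖ / R) ^ p := by
  rcases h1.eq_or_lt with h | h1
  · exact h ▸ hs ζ h.symm
  set W : Set ℂ := ball 0 R \ closedBall 0 r with hW
  have hWne : ∀ x ∈ closure W, x ^ p ≠ 0 := by
    have hW' : W ⊆ (ball 0 r)ᶜ := fun x hx h => hx.2 (ball_subset_closedBall h)
    intro x hx h0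
    have hxr : ¬‖x‖ < r := by
      simpa using closure_minimal hW' isOpen_ball.isClosed_compl hx
    exact hxr (by simpa [eq_zero_of_pow_eq_zero h0] using hr)
  have hgd : DiffContOnCl ℂ (fun x : ℂ => (x ^ p)⁻¹ • f x) W :=
    ((differentiable_pow p).diffContOnCl.inv hWne).smul (hf.mono sdiff_subset)
  have hR0 : 0 < R := (norm_nonneg _).trans_lt h2
  have hmax := Complex.norm_le_of_forall_mem_frontier_norm_le (C := B / R ^ p)
    (isBounded_ball.subset sdiff_subset) hgd (fun x hx => by
      rw [norm_smul, norm_inv, norm_pow]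
      rcases frontier_ball_sdiff_closedBall_subset _ _ _ hx with h | h <;>
        rw [mem_sphere_zero_iff_norm] at h
      · rw [h, inv_mul_eq_div]
        grw [hR x h]
      · rw [h]
        grw [hs x h, div_pow]
        exact le_of_eq (by field_simp)) (subset_closure (show ζ ∈ W by simp [hW, h1, h2]))
  rw [norm_smul, norm_inv, norm_pow, inv_mul_le_iff₀ (pow_pos (hr.trans h1) p)] at hmax
  exact hmax.trans_eq (by rw [div_pow]; ring)

theorem norm_le_mul_div_pow_of_differentiableOn {f : ℂ → V} {r R B : ℝ} {p : ℕ} (hr : 0 < r)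
    (hd : DifferentiableOn ℂ f (ball 0 R)) (hB : ∀ ζ : ℂ, ‖ζ‖ < R → ‖f ζ‖ ≤ B)
    (hs : ∀ ζ : ℂ, ‖ζ‖ = r → ‖f ζ‖ ≤ B * (r / R) ^ p) {ζ : ℂ} (h1 : r ≤ ‖ζ‖) (h2 : ‖ζ‖ < R) :
    ‖f ζ‖ ≤ B * (‖ζ‖ / R) ^ p := by
  have hR : 0 < R := (norm_nonneg _).trans_lt h2
  have hB0 : 0 ≤ B := (norm_nonneg _).trans (hB ζ h2)
  have hlim : Tendsto (fun R' : ℝ => B * (‖ζ‖ / R') ^ p) (𝓝[<] R) (𝓝 (B * (‖ζ‖ / R) ^ p)) := by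
    have : ContinuousAt (fun R' : ℝ => B * (‖ζ‖ / R') ^ p) R := by
      fun_prop (disch := exact hR.ne')
    exact this.tendsto.mono_left nhdsWithin_le_nhds
  refine ge_of_tendsto hlim ?_
  filter_upwards [Ioo_mem_nhdsLT h2] with R' ⟨hζR', hR'R⟩
  have hR'0 : 0 < R' := (norm_nonneg _).trans_lt hζR'
  refine norm_le_mul_div_pow_of_diffContOnCl hr ?_ (fun x hx => hB x (hx.trans_lt hR'R))
    (fun x hx => (hs x hx).trans (by gcongr)) h1 hζR'
  exact (hd.mono (closure_ball_subset_closedBall.trans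
    (closedBall_subset_ball hR'R))).diffContOnCl

end ThreeCircles

section Iterates

variable {E : Type*} [NormedAddCommGroup E]

theorem eventually_norm_sub_le_mul_sq {F : E → E} {Ω : Set E} {p : E}
    (ho : (fun z => F z - z) =o[𝓝[Ω] p] fun z => ‖z - p‖ ^ 2) {K ε : ℝ} (hK : 0 < K)
    (hε : 0 < ε) :
    ∀ᶠ τ : ℝ in 𝓝[>] 0, ∀ z ∈ Ω, ‖z - p‖ ≤ K * τ → ‖F z - z‖ ≤ ε * τ ^ 2 := by
  have hquad := eventually_nhdsWithin_iff.1 (ho.def (show 0 < ε / K ^ 2 by positivity))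
  obtain ⟨η, hη, hball⟩ := Metric.eventually_nhds_iff.1 hquad
  filter_upwards [Ioo_mem_nhdsGT (div_pos hη hK)] with τ ⟨hτ, hτη⟩ z hz hzp
  rw [lt_div_iff₀' hK] at hτη
  have hF := hball (by rw [dist_eq_norm]; exact hzp.trans_lt hτη) hz
  rw [norm_pow, norm_norm] at hF
  grw [hF, hzp]
  exact le_of_eq (by field_simp)

-- Each of the at most `M / τ` steps moves the point by `O(ε τ²)`.
theorem eventually_norm_iterate_sub_le {F : E → E} {Ω : Set E} {p : E} (hFΩ : MapsTo F Ω Ω)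
    (ho : (fun z => F z - z) =o[𝓝[Ω] p] fun z => ‖z - p‖ ^ 2)
    {K M ε : ℝ} (hK : 0 < K) (hM : 0 < M) (hε : 0 < ε) :
    ∀ᶠ τ : ℝ in 𝓝[>] 0, ∀ z ∈ Ω, ‖z - p‖ ≤ K * τ → ∀ k : ℕ, k * τ ≤ M →
      ‖F^[k] z - z‖ ≤ ε * τ := by
  filter_upwards [eventually_norm_sub_le_mul_sq ho (K := K + ε) (by positivity) (div_pos hε hM),
    self_mem_nhdsWithin] with τ hstep (hτ : 0 < τ) z hz hzp
  have hfar : ∀ k : ℕ, k * τ ≤ M → k * (ε / M * τ ^ 2) ≤ ε * τ := fun k hk =>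
    calc k * (ε / M * τ ^ 2) = k * τ * (ε / M * τ) := by ring
      _ ≤ M * (ε / M * τ) := by gcongr
      _ = ε * τ := by field_simp
  suffices H : ∀ k : ℕ, k * τ ≤ M → ‖F^[k] z - z‖ ≤ k * (ε / M * τ ^ 2) from
    fun k hk => (H k hk).trans (hfar k hk)
  intro k hk
  induction k with
  | zero => simp
  | succ k ih =>
    push_cast at hk
    have hk' : k * τ ≤ M := by linarith
    have hnear : ‖F^[k] z - p‖ ≤ (K + ε) * τ := by
      linarith [norm_sub_le_norm_sub_add_norm_sub (F^[k] z) z p, ih hk', hfar k hk']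
    have hmove := hstep _ (hFΩ.iterate k hz) hnear
    rw [iterate_succ_apply']
    push_cast
    linarith [norm_sub_le_norm_sub_add_norm_sub (F (F^[k] z)) (F^[k] z) z, ih hk']

theorem differentiableOn_iterate {𝕜 : Type*} [NontriviallyNormedField 𝕜] [NormedSpace 𝕜 E]
    {F : E → E} {Ω : Set E} (hF : DifferentiableOn 𝕜 F Ω) (hFΩ : MapsTo F Ω Ω) :
    ∀ k : ℕ, DifferentiableOn 𝕜 F^[k] Ω
  | 0 => differentiableOn_id
  | k + 1 => (differentiableOn_iterate hF hFΩ k).comp hF hFΩ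

end Iterates

section TwistedAverage

variable {E : Type*} [NormedAddCommGroup E] [NormedSpace ℂ E]

/-- The Cesàro averages of `μ⁻ᵏ Fᵏ`. For `‖μ‖ = 1` their limits are eigenfunctions of composition
with `F` for the eigenvalue `μ`. The average is over `N + 1` terms, so that it is never empty. -/
def twistedAverage (F : E → E) (μ : ℂ) (N : ℕ) (z : E) : E :=
  ((N : ℂ) + 1)⁻¹ • ∑ k ∈ Finset.range (N + 1), μ⁻¹ ^ k • F^[k] z

variable {F : E → E} {Ω : Set E} {B : ℝ} {μ : ℂ} {z : E}

theorem norm_inv_pow_smul (hμ : ‖μ‖ = 1) (k : ℕ) (x : E) : ‖μ⁻¹ ^ k • x‖ = ‖x‖ := by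
  rw [norm_smul, norm_pow, norm_inv, hμ, inv_one, one_pow, one_mul]

theorem norm_natCast_add_one_inv (N : ℕ) : ‖((N : ℂ) + 1)⁻¹‖ = 1 / ((N : ℝ) + 1) := by
  rw [norm_inv, one_div, ← Nat.cast_add_one, Complex.norm_natCast, Nat.cast_add_one]

theorem norm_twistedAverage_le (hμ : ‖μ‖ = 1) (hB : ∀ k, ‖F^[k] z‖ ≤ B) (N : ℕ) :
    ‖twistedAverage F μ N z‖ ≤ B := by
  have hsum : ‖∑ k ∈ Finset.range (N + 1), μ⁻¹ ^ k • F^[k] z‖ ≤ (N + 1) * B :=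
    (norm_sum_le_of_le _ fun k _ => (norm_inv_pow_smul hμ k _).trans_le (hB k)).trans_eq
      (by simp)
  rw [twistedAverage, norm_smul, norm_natCast_add_one_inv, one_div]
  exact (inv_mul_le_iff₀ (by positivity)).2 hsum

theorem differentiableOn_twistedAverage (hF : DifferentiableOn ℂ F Ω) (hFΩ : MapsTo F Ω Ω)
    (μ : ℂ) (N : ℕ) : DifferentiableOn ℂ (twistedAverage F μ N) Ω :=
  (DifferentiableOn.fun_sum fun k _ => (differentiableOn_iterate hF hFΩ k).const_smul _).const_smul
    _

theorem twistedAverage_apply_sub_smul (hμ : μ ≠ 0) (N : ℕ) (z : E) :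
    twistedAverage F μ N (F z) - μ • twistedAverage F μ N z =
      ((N : ℂ) + 1)⁻¹ • μ • (μ⁻¹ ^ (N + 1) • F^[N + 1] z - z) := by
  have hshift : ∀ k, μ⁻¹ ^ k • F^[k] (F z) = μ • μ⁻¹ ^ (k + 1) • F^[k + 1] z := fun k => by
    rw [smul_smul, pow_succ', mul_inv_cancel_left₀ hμ, iterate_succ_apply]
  have htele := Finset.sum_range_sub (fun k => μ⁻¹ ^ k • F^[k] z) (N + 1)
  simp only [pow_zero, one_smul, iterate_zero, id, Finset.sum_sub_distrib] at htele
  simp only [twistedAverage, hshift]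
  rw [← Finset.smul_sum, smul_comm μ, ← smul_sub, ← smul_sub, htele]

theorem tendsto_twistedAverage_apply_sub_smul (hμ : ‖μ‖ = 1) (hB : ∀ k, ‖F^[k] z‖ ≤ B) :
    Tendsto (fun N => twistedAverage F μ N (F z) - μ • twistedAverage F μ N z) atTop (𝓝 0) := by
  have hμ0 : μ ≠ 0 := by rintro rfl; simp at hμ
  have hbound : Tendsto (fun N : ℕ => 1 / ((N : ℝ) + 1) * (B + B)) atTop (𝓝 0) := by
    simpa using (tendsto_one_div_add_atTop_nhds_zero_nat (𝕜 := ℝ)).mul_const (B + B)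
  refine squeeze_zero_norm (fun N => ?_) hbound
  rw [twistedAverage_apply_sub_smul hμ0, norm_smul, norm_smul, hμ, one_mul,
    norm_natCast_add_one_inv]
  gcongr
  refine (norm_sub_le _ _).trans (add_le_add ?_ (hB 0))
  exact (norm_inv_pow_smul hμ _ _).trans_le (hB _)

theorem hasFDerivAt_twistedAverage {A : E →L[ℂ] E} (hF : HasFDerivAt F A z) (hfix : F z = z)
    (N : ℕ) : HasFDerivAt (twistedAverage F μ N)
      (((N : ℂ) + 1)⁻¹ • ∑ k ∈ Finset.range (N + 1), μ⁻¹ ^ k • A ^ k) z :=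
  (HasFDerivAt.fun_sum fun k _ => (hF.iterate hfix k).const_smul _).const_smul _

theorem pow_apply_eq_smul {A : E →L[ℂ] E} {v : E} (hv : A v = μ • v) (k : ℕ) :
    (A ^ k) v = μ ^ k • v := by
  induction k with
  | zero => simp
  | succ k ih => rw [pow_succ, mul_apply_eq_comp, hv, map_smul, ih, smul_smul, pow_succ']

theorem fderiv_twistedAverage_apply {A : E →L[ℂ] E} (hF : HasFDerivAt F A z) (hfix : F z = z)
    (hμ : μ ≠ 0) {v : E} (hv : A v = μ • v) (N : ℕ) :
    fderiv ℂ (twistedAverage F μ N) z v = v := by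
  rw [(hasFDerivAt_twistedAverage hF hfix N).fderiv]
  simp only [_root_.smul_apply, _root_.sum_apply, pow_apply_eq_smul hv, smul_smul, ← mul_pow,
    inv_mul_cancel₀ hμ, one_pow, Finset.sum_const, Finset.card_range, one_smul]
  rw [← Nat.cast_smul_eq_nsmul ℂ, smul_smul, Nat.cast_add_one,
    inv_mul_cancel₀ (Nat.cast_add_one_ne_zero N), one_smul]

theorem exists_eigenfunction [FiniteDimensional ℂ E] {A : E →L[ℂ] E} (hΩ : IsOpen Ω)
    (hB : ∀ z ∈ Ω, ‖z‖ ≤ B) (hF : DifferentiableOn ℂ F Ω) (hFΩ : MapsTo F Ω Ω)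
    (hz : z ∈ Ω) (hfix : F z = z) (hA : HasFDerivAt F A z) (hμ : ‖μ‖ = 1) :
    ∃ f : E → E, DifferentiableOn ℂ f Ω ∧ (∀ w ∈ Ω, ‖f w‖ ≤ B) ∧ (∀ w ∈ Ω, f (F w) = μ • f w) ∧
      ∀ v, A v = μ • v → fderiv ℂ f z v = v := by
  have : ProperSpace E := FiniteDimensional.proper ℂ E
  have hμ0 : μ ≠ 0 := by rintro rfl; simp at hμ
  have horbit : ∀ w ∈ Ω, ∀ k, ‖F^[k] w‖ ≤ B := fun w hw k => hB _ (hFΩ.iterate k hw)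
  have hbound : ∀ N, ∀ w ∈ Ω, ‖twistedAverage F μ N w‖ ≤ B := fun N w hw =>
    norm_twistedAverage_le hμ (horbit w hw) N
  set U : Ultrafilter ℕ := hyperfilter ℕ
  have hlim : ∀ w ∈ Ω, ∃ x ∈ closedBall (0 : E) B,
      Tendsto (fun N => twistedAverage F μ N w) U (𝓝 x) := fun w hw =>
    (isCompact_closedBall (0 : E) B).ultrafilter_le_nhds (U.map fun N => twistedAverage F μ N w)
      (le_principal_iff.2 (Ultrafilter.mem_map.2 (univ_mem' fun N => by
        simpa using hbound N w hw)))
  choose! f hfB hf using hlim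
  have hderiv := fun w hw => exists_hasFDerivAt_of_tendsto_ultrafilter (z := w) hΩ
    (differentiableOn_twistedAverage hF hFΩ μ) hbound hf hw
  refine ⟨f, fun w hw => ?_, fun w hw => by simpa using hfB w hw, fun w hw => ?_, fun v hv => ?_⟩
  · obtain ⟨D, hD, -⟩ := hderiv w hw
    exact hD.differentiableAt.differentiableWithinAt
  · refine sub_eq_zero.1 (tendsto_nhds_unique ((hf _ (hFΩ hw)).sub ((hf w hw).const_smul μ)) ?_)
    exact (tendsto_twistedAverage_apply_sub_smul hμ (horbit w hw)).mono_left
      Nat.hyperfilter_le_atTop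
  · obtain ⟨D, hD, hDlim⟩ := hderiv z hz
    have hconst := ((ContinuousLinearMap.apply ℂ E v).continuous.tendsto D).comp hDlim
    rw [hD.fderiv]
    exact tendsto_nhds_unique hconst (tendsto_const_nhds.congr fun N =>
      (fderiv_twistedAverage_apply hA hfix hμ0 hv N).symm)

end TwistedAverage

section Moebius

/-- The automorphism of the unit disc moving `0` to `a` along the real axis. It is meant for
`|a| < 1` and `‖w‖ < 1`, where the denominator does not vanish. -/
def moebius (a : ℝ) (w : ℂ) : ℂ := (w + a) / (1 + a * w)

variable {a : ℝ} {w : ℂ}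

theorem sq_norm_one_add_mul_sub_sq_norm_add (a : ℝ) (w : ℂ) :
    ‖1 + a * w‖ ^ 2 - ‖w + a‖ ^ 2 = (1 - a ^ 2) * (1 - ‖w‖ ^ 2) := by
  simp only [Complex.sq_norm, Complex.normSq_apply]
  simp
  ring

theorem one_sub_norm_le_norm_one_add_mul (ha : |a| ≤ 1) (w : ℂ) : 1 - ‖w‖ ≤ ‖1 + a * w‖ := by
  have htri := norm_sub_norm_le (1 : ℂ) (-(a * w))
  rw [norm_neg, norm_mul, Complex.norm_real, norm_one, sub_neg_eq_add, Real.norm_eq_abs] at htri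
  linarith [mul_le_of_le_one_left (norm_nonneg w) ha]

theorem one_add_mul_ne_zero (ha : |a| ≤ 1) (hw : ‖w‖ < 1) : 1 + a * w ≠ 0 :=
  norm_pos_iff.1 ((sub_pos.2 hw).trans_le (one_sub_norm_le_norm_one_add_mul ha w))

theorem one_sub_sq_norm_moebius (ha : |a| ≤ 1) (hw : ‖w‖ < 1) :
    1 - ‖moebius a w‖ ^ 2 = (1 - a ^ 2) * (1 - ‖w‖ ^ 2) / ‖1 + a * w‖ ^ 2 := by
  have hne : ‖1 + a * w‖ ^ 2 ≠ 0 := pow_ne_zero _ (norm_ne_zero_iff.2 (one_add_mul_ne_zero ha hw))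
  rw [eq_div_iff hne, moebius, norm_div, div_pow, sub_mul, div_mul_cancel₀ _ hne, one_mul]
  exact sq_norm_one_add_mul_sub_sq_norm_add a w

theorem norm_moebius_lt_one (ha : |a| < 1) (hw : ‖w‖ < 1) : ‖moebius a w‖ < 1 := by
  have hpos : 0 < (1 - a ^ 2) * (1 - ‖w‖ ^ 2) / ‖1 + a * w‖ ^ 2 :=
    div_pos (mul_pos (sub_pos.2 ((sq_lt_one_iff_abs_lt_one a).2 ha))
      (sub_pos.2 (pow_lt_one₀ (norm_nonneg w) hw two_ne_zero)))
      (pow_pos (norm_pos_iff.2 (one_add_mul_ne_zero ha.le hw)) 2)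
  rw [← one_sub_sq_norm_moebius ha.le hw, sub_pos] at hpos
  exact (sq_lt_one_iff₀ (norm_nonneg _)).1 hpos

theorem differentiableOn_moebius (ha : |a| < 1) : DifferentiableOn ℂ (moebius a) (ball 0 1) :=
  DifferentiableOn.div (by fun_prop) (by fun_prop) fun _ hw =>
    one_add_mul_ne_zero ha.le (mem_ball_zero_iff.1 hw)

theorem mapsTo_moebius (ha : |a| < 1) : MapsTo (moebius a) (ball 0 1) (ball 0 1) := fun _ hw =>
  mem_ball_zero_iff.2 (norm_moebius_lt_one ha (mem_ball_zero_iff.1 hw))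

theorem moebius_moebius_neg (ha : |a| < 1) (hw : ‖w‖ < 1) : moebius a (moebius (-a) w) = w := by
  have hne : (1 : ℂ) + (-a : ℝ) * w ≠ 0 := one_add_mul_ne_zero (by rw [abs_neg]; exact ha.le) hw
  have hsq : (1 - a ^ 2 : ℂ) ≠ 0 := by
    exact_mod_cast (sub_pos.2 ((sq_lt_one_iff_abs_lt_one a).2 ha)).ne'
  have hden : 1 + a * moebius (-a) w = (1 - a ^ 2) / (1 + (-a : ℝ) * w) := by
    rw [moebius, eq_div_iff hne, add_mul, mul_assoc, div_mul_cancel₀ _ hne]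
    push_cast; ring
  have hnum : moebius (-a) w + a = (1 - a ^ 2) * w / (1 + (-a : ℝ) * w) := by
    rw [moebius, eq_div_iff hne, add_mul, div_mul_cancel₀ _ hne]
    push_cast; ring
  rw [moebius, hden, hnum, div_div_div_cancel_right₀ hne, mul_div_cancel_left₀ _ hsq]

theorem norm_moebius_sub_le (ha : |a| ≤ 1) {r : ℝ} (hr : r < 1) (hw : ‖w‖ ≤ r) :
    ‖moebius a w - a‖ ≤ (1 - a ^ 2) * r / (1 - r) := by
  have hne := one_add_mul_ne_zero ha (hw.trans_lt hr)
  have hsq : 0 ≤ 1 - a ^ 2 := sub_nonneg.2 ((sq_le_one_iff_abs_le_one a).2 ha)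
  have heq : moebius a w - a = (1 - a ^ 2 : ℝ) * w / (1 + a * w) := by
    rw [moebius, eq_div_iff hne, sub_mul, div_mul_cancel₀ _ hne]
    push_cast; ring
  have hden : 1 - r ≤ ‖1 + a * w‖ := by
    linarith [one_sub_norm_le_norm_one_add_mul ha w]
  rw [heq, norm_div, norm_mul, Complex.norm_real, Real.norm_of_nonneg hsq]
  exact div_le_div₀ (mul_nonneg hsq ((norm_nonneg w).trans hw))
    (mul_le_mul_of_nonneg_left hw hsq) (sub_pos.2 hr) hden

theorem norm_moebius_one_sub_sub_le {τ r : ℝ} (hτ : 0 ≤ τ) (hτ1 : τ ≤ 1) (hr : r ≤ 1 / 2)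
    (hw : ‖w‖ ≤ r) : ‖moebius (1 - τ) w - (1 - τ : ℝ)‖ ≤ 4 * τ * r := by
  have hr0 : 0 ≤ r := (norm_nonneg w).trans hw
  calc ‖moebius (1 - τ) w - (1 - τ : ℝ)‖ ≤ (1 - (1 - τ) ^ 2) * r / (1 - r) :=
        norm_moebius_sub_le (abs_le.2 ⟨by linarith, by linarith⟩) (by linarith) hw
    _ ≤ 2 * τ * r / (1 / 2) := by gcongr <;> nlinarith
    _ = 4 * τ * r := by ring

end Moebius

section DiscUniqueness

variable {V : Type*} [NormedAddCommGroup V] [NormedSpace ℂ V] {f : ℂ → V} {B r : ℝ} {P : ℕ}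

theorem norm_le_max_pow_of_norm_le_on_disc (hr : 0 < r) (hd : DifferentiableOn ℂ f (ball 0 1))
    (hB : ∀ ζ : ℂ, ‖ζ‖ < 1 → ‖f ζ‖ ≤ B) (hs : ∀ ζ : ℂ, ‖ζ‖ ≤ r → ‖f ζ‖ ≤ B * r ^ P) {ζ : ℂ}
    (hζ : ‖ζ‖ < 1) : ‖f ζ‖ ≤ B * max r ‖ζ‖ ^ P := by
  rcases le_total ‖ζ‖ r with h | h
  · rw [max_eq_left h]
    exact hs ζ h
  · rw [max_eq_right h]
    simpa using norm_le_mul_div_pow_of_differentiableOn (R := 1) hr hd hB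
      (by simpa using fun ζ hζ => hs ζ hζ.le) h hζ

theorem norm_le_max_pow_of_norm_moebius_le (hr : 0 < r) (hd : DifferentiableOn ℂ f (ball 0 1))
    (hB : ∀ ζ : ℂ, ‖ζ‖ < 1 → ‖f ζ‖ ≤ B) {a : ℝ} (ha : |a| < 1)
    (hs : ∀ w : ℂ, ‖w‖ ≤ r → ‖f (moebius a w)‖ ≤ B * r ^ P) {ζ : ℂ} (hζ : ‖ζ‖ < 1) :
    ‖f ζ‖ ≤ B * max r ‖moebius (-a) ζ‖ ^ P := by
  have := norm_le_max_pow_of_norm_le_on_disc (f := f ∘ moebius a) hr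
    (hd.comp (differentiableOn_moebius ha) (mapsTo_moebius ha))
    (fun w hw => hB _ (norm_moebius_lt_one ha hw)) hs (ζ := moebius (-a) ζ)
    (norm_moebius_lt_one (by rwa [abs_neg]) hζ)
  rwa [comp_apply, moebius_moebius_neg ha hζ] at this

theorem norm_moebius_le_exp {τ : ℝ} (hτ : 0 < τ) (hτ1 : τ ≤ 1) {ζ : ℂ} (hζ : ‖ζ‖ < 1) :
    ‖moebius (-(1 - τ)) ζ‖ ≤ Real.exp (-((1 - ‖ζ‖ ^ 2) / 8 * τ)) := by
  set a : ℝ := -(1 - τ)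
  have ha : |a| ≤ 1 := by rw [abs_neg, abs_of_nonneg (by linarith)]; linarith
  have hζ2 : 0 ≤ 1 - ‖ζ‖ ^ 2 := sub_nonneg.2 (pow_le_one₀ (norm_nonneg _) hζ.le)
  have hden : ‖1 + a * ζ‖ ≤ 2 := by
    have htri := norm_add_le (1 : ℂ) (a * ζ)
    rw [norm_mul, Complex.norm_real, norm_one, Real.norm_eq_abs] at htri
    linarith [mul_le_one₀ ha (norm_nonneg ζ) hζ.le]
  have hτa : τ ≤ 1 - a ^ 2 := by
    have : 1 - a ^ 2 = τ + τ * (1 - τ) := by ring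
    nlinarith
  have hmoebius : (1 - ‖ζ‖ ^ 2) / 4 * τ ≤ 1 - ‖moebius a ζ‖ ^ 2 :=
    calc (1 - ‖ζ‖ ^ 2) / 4 * τ = τ * (1 - ‖ζ‖ ^ 2) / 2 ^ 2 := by ring
      _ ≤ (1 - a ^ 2) * (1 - ‖ζ‖ ^ 2) / ‖1 + a * ζ‖ ^ 2 := by
        exact div_le_div₀ (mul_nonneg (hτ.le.trans hτa) hζ2) (mul_le_mul_of_nonneg_right hτa hζ2)
          (pow_pos (norm_pos_iff.2 (one_add_mul_ne_zero ha hζ)) 2) (by gcongr)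
      _ = _ := (one_sub_sq_norm_moebius ha hζ).symm
  refine le_of_sq_le_sq ?_ (Real.exp_pos _).le
  rw [← Real.exp_nat_mul]
  refine le_trans ?_ (Real.add_one_le_exp _)
  push_cast
  linarith

-- The Möbius maps centred at `1 - τ` move `ζ` to a point of modulus `≤ exp (-κ τ)`, so three
-- circles give `‖f ζ‖ ≤ B exp (-κ τ P)` with `τ P` as large as we please.
theorem eq_zero_of_norm_moebius_le (hr : 0 < r) (hr1 : r < 1)
    (hd : DifferentiableOn ℂ f (ball 0 1)) (hB : ∀ ζ : ℂ, ‖ζ‖ < 1 → ‖f ζ‖ ≤ B)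
    (hs : ∀ K : ℝ, ∃ τ : ℝ, 0 < τ ∧ τ ≤ 1 ∧ ∃ P : ℕ, K ≤ P * τ ∧
      ∀ w : ℂ, ‖w‖ ≤ r → ‖f (moebius (1 - τ) w)‖ ≤ B * r ^ P) {ζ : ℂ} (hζ : ‖ζ‖ < 1) :
    f ζ = 0 := by
  have hB0 : 0 ≤ B := (norm_nonneg _).trans (hB ζ hζ)
  have hζ2 : ‖ζ‖ ^ 2 < 1 := pow_lt_one₀ (norm_nonneg _) hζ two_ne_zero
  set κ : ℝ := min ((1 - ‖ζ‖ ^ 2) / 8) (-Real.log r)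
  have hκ0 : 0 < κ := lt_min (by linarith) (neg_pos.2 (Real.log_neg hr hr1))
  have hexp : ∀ K : ℝ, ‖f ζ‖ ≤ B * Real.exp (-(κ * K)) := by
    intro K
    obtain ⟨τ, hτ, hτ1, P, hP, hsmall⟩ := hs K
    have hmoebius : ‖moebius (-(1 - τ)) ζ‖ ≤ Real.exp (-(κ * τ)) := by
      refine (norm_moebius_le_exp hτ hτ1 hζ).trans ?_
      gcongr
      exact min_le_left _ _
    have hre : r ≤ Real.exp (-(κ * τ)) := by
      rw [← Real.log_le_iff_le_exp hr]
      have : κ * τ ≤ κ := mul_le_of_le_one_right hκ0.le hτ1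
      linarith [min_le_right ((1 - ‖ζ‖ ^ 2) / 8) (-Real.log r)]
    calc ‖f ζ‖ ≤ B * max r ‖moebius (-(1 - τ)) ζ‖ ^ P :=
          norm_le_max_pow_of_norm_moebius_le hr hd hB
            (by rw [abs_of_nonneg (by linarith)]; linarith) hsmall hζ
      _ ≤ B * Real.exp (-(κ * τ)) ^ P := by
          gcongr
          exact max_le hre hmoebius
      _ = B * Real.exp (-(κ * (P * τ))) := by rw [← Real.exp_nat_mul]; congr 2; ring
      _ ≤ B * Real.exp (-(κ * K)) := by gcongr
  have hlim : Tendsto (fun K : ℝ => B * Real.exp (-(κ * K))) atTop (𝓝 0) := by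
    simpa using (Real.tendsto_exp_neg_atTop_nhds_zero.comp
      (tendsto_id.const_mul_atTop hκ0)).const_mul B
  exact norm_le_zero_iff.1 (ge_of_tendsto' hlim hexp)

end DiscUniqueness

section Slices

theorem norm_le_mul_pow_of_comp_eq_smul {E V : Type*} [NormedAddCommGroup E] [NormedSpace ℂ E]
    [NormedAddCommGroup V] [NormedSpace ℂ V] {F : E → E} {f : E → V} {z : E} {R B s : ℝ} {μ : ℂ}
    (hμ : μ ≠ 1) (hs : 0 < s) (hd : DifferentiableOn ℂ f (ball z R))
    (hB : ∀ w ∈ ball z R, ‖f w‖ ≤ B) (heq : ∀ w ∈ ball z R, f (F w) = μ • f w)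
    (hF : ∀ w ∈ ball z R, ‖F w - w‖ ≤ min ‖μ - 1‖ 1 * s / 4) (m : ℕ) :
    ∀ w ∈ ball z (R - m * s), ‖f w‖ ≤ B * (1 / 2) ^ m := by
  induction m with
  | zero => intro w hw; simpa using hB w (by simpa using hw)
  | succ m ih =>
    intro w hw
    push_cast at hw
    have hsub : ball w s ⊆ ball z (R - m * s) := ball_subset_ball' (by
      rw [mem_ball] at hw; linarith)
    have hsubR : ball z (R - m * s) ⊆ ball z R := ball_subset_ball (by
      linarith [mul_nonneg m.cast_nonneg hs.le])
    have hwR := hsubR (hsub (mem_ball_self hs))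
    have hB0 : 0 ≤ B * (1 / 2) ^ m := (norm_nonneg _).trans (ih w (hsub (mem_ball_self hs)))
    have hFw : ‖F w - w‖ ≤ ‖μ - 1‖ * s / 4 := by
      grw [hF w hwR, min_le_left]
    have hFs : F w ∈ ball w s := by
      rw [mem_ball_iff_norm]
      grw [hF w hwR, min_le_right]
      linarith
    have hμ0 : 0 < ‖μ - 1‖ := norm_pos_iff.2 (sub_ne_zero.2 hμ)
    refine le_of_mul_le_mul_left ?_ hμ0
    calc ‖μ - 1‖ * ‖f w‖ = ‖f (F w) - f w‖ := by
          rw [heq w hwR, ← norm_smul, sub_smul, one_smul]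
      _ ≤ 2 * (B * (1 / 2) ^ m) / s * ‖F w - w‖ := norm_sub_le_of_norm_le_ball
          (hd.mono (hsub.trans hsubR)) (fun x hx => ih x (hsub hx)) hFs
      _ ≤ 2 * (B * (1 / 2) ^ m) / s * (‖μ - 1‖ * s / 4) := by gcongr
      _ = ‖μ - 1‖ * (B * (1 / 2) ^ (m + 1)) := by rw [pow_succ]; field_simp; ring

variable {E V : Type*} [NormedAddCommGroup E] [InnerProductSpace ℂ E] [NormedAddCommGroup V]
  [NormedSpace ℂ V] {p e u : E}

theorem norm_add_one_sub_smul_sq (hu : inner ℂ e u = -((‖u‖ ^ 2 : ℝ) : ℂ)) (ζ : ℂ) :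
    ‖e + (1 - ζ) • u‖ ^ 2 = ‖e‖ ^ 2 - (1 - ‖ζ‖ ^ 2) * ‖u‖ ^ 2 := by
  generalize hq : ‖u‖ ^ 2 = q at *
  rw [@norm_add_sq ℂ, inner_smul_right, hu, norm_smul, mul_pow, Complex.sq_norm, Complex.sq_norm,
    Complex.normSq_apply, Complex.normSq_apply, hq]
  simp
  ring

theorem norm_le_of_inner_eq_neg_norm_sq (hu : inner ℂ e u = -((‖u‖ ^ 2 : ℝ) : ℂ)) :
    ‖u‖ ≤ ‖e‖ := by
  have h := norm_add_one_sub_smul_sq hu 0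
  refine le_of_sq_le_sq ?_ (norm_nonneg e)
  norm_num at h
  linarith [sq_nonneg ‖e + u‖]

-- `u` is minus the projection of `e` to the complex line of `w - p`.
theorem exists_slice {w : E} (hw : w ∈ ball (p - e) ‖e‖) :
    ∃ (u : E) (ζ : ℂ), u ≠ 0 ∧ inner ℂ e u = -((‖u‖ ^ 2 : ℝ) : ℂ) ∧ ‖ζ‖ < 1 ∧
      w = p + (1 - ζ) • u := by
  obtain ⟨v, rfl⟩ : ∃ v, w = p + v := ⟨w - p, by abel⟩
  have hlt : ‖e + v‖ ^ 2 < ‖e‖ ^ 2 := by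
    rw [mem_ball_iff_norm, show p + v - (p - e) = e + v by abel] at hw
    gcongr
  have hin : inner ℂ v e ≠ 0 := by
    intro h
    rw [@norm_add_sq ℂ, inner_eq_zero_symm.1 h, map_zero] at hlt
    linarith [sq_nonneg ‖v‖]
  have hv : v ≠ 0 := by rintro rfl; simp at hin
  set S : Submodule ℂ E := Submodule.span ℂ {v}
  set β : ℂ := -(inner ℂ v e / (‖v‖ ^ 2 : ℝ)) with hβ
  have hβ0 : β ≠ 0 := neg_ne_zero.2 (div_ne_zero hin
    (by exact_mod_cast (pow_pos (norm_pos_iff.2 hv) 2).ne'))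
  have hβv : β • v = -S.starProjection e := by
    rw [Submodule.starProjection_singleton, hβ, neg_smul]; rfl
  have hu : inner ℂ e (β • v) = -((‖β • v‖ ^ 2 : ℝ) : ℂ) := by
    have hproj := S.inner_starProjection_left_eq_right e (S.starProjection e)
    rw [S.starProjection_eq_self_iff.2 (S.starProjection_apply_mem e)] at hproj
    rw [hβv, inner_neg_right, norm_neg, ← hproj, inner_self_eq_norm_sq_to_K]
    norm_cast
  have hv' : (1 - (1 - β⁻¹)) • β • v = v := by
    rw [sub_sub_cancel, smul_smul, inv_mul_cancel₀ hβ0, one_smul]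
  refine ⟨β • v, 1 - β⁻¹, smul_ne_zero hβ0 hv, hu, ?_, by rw [hv']⟩
  rw [← hv', norm_add_one_sub_smul_sq hu, sub_lt_self_iff] at hlt
  exact (sq_lt_one_iff₀ (norm_nonneg _)).1
    (sub_pos.1 (pos_of_mul_pos_left hlt (sq_nonneg _)))

theorem add_one_sub_smul_mem_ball (hu0 : u ≠ 0) (hu : inner ℂ e u = -((‖u‖ ^ 2 : ℝ) : ℂ)) {ζ : ℂ}
    (hζ : ‖ζ‖ < 1) : p + (1 - ζ) • u ∈ ball (p - e) ‖e‖ := by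
  rw [mem_ball_iff_norm, show p + (1 - ζ) • u - (p - e) = e + (1 - ζ) • u by abel]
  refine lt_of_pow_lt_pow_left₀ 2 (norm_nonneg e) ?_
  rw [norm_add_one_sub_smul_sq hu, sub_lt_self_iff]
  exact mul_pos (sub_pos.2 (pow_lt_one₀ (norm_nonneg _) hζ two_ne_zero))
    (pow_pos (norm_pos_iff.2 hu0) 2)

theorem ball_add_smul_subset_ball (hu0 : u ≠ 0) (hu : inner ℂ e u = -((‖u‖ ^ 2 : ℝ) : ℂ)) {τ : ℝ}
    (hτ : 0 ≤ τ) (hτ1 : τ ≤ 1) :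
    ball (p + (τ : ℂ) • u) (‖u‖ ^ 2 / (2 * ‖e‖) * τ) ⊆ ball (p - e) ‖e‖ := by
  have hu1 := norm_pos_iff.2 hu0
  have hue := norm_le_of_inner_eq_neg_norm_sq hu
  have he : 0 < ‖e‖ := hu1.trans_le hue
  set c : ℝ := ‖u‖ ^ 2 / (2 * ‖e‖)
  have hce : 2 * ‖e‖ * c = ‖u‖ ^ 2 := mul_div_cancel₀ _ (by positivity)
  have hcτ : c * τ ≤ ‖e‖ := by
    have : c ≤ ‖e‖ := le_of_mul_le_mul_left (by nlinarith) (show 0 < 2 * ‖e‖ by positivity)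
    nlinarith
  have hnorm := norm_add_one_sub_smul_sq hu (1 - τ : ℝ)
  rw [show (1 : ℂ) - ((1 - τ : ℝ) : ℂ) = τ by push_cast; ring, Complex.norm_real,
    Real.norm_eq_abs, sq_abs] at hnorm
  have hsq : ‖e + (τ : ℂ) • u‖ ^ 2 ≤ (‖e‖ - c * τ) ^ 2 :=
    calc ‖e + (τ : ℂ) • u‖ ^ 2 = ‖e‖ ^ 2 - (2 - τ) * τ * ‖u‖ ^ 2 := by rw [hnorm]; ring
      _ ≤ ‖e‖ ^ 2 - 1 * τ * ‖u‖ ^ 2 := by gcongr; linarith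
      _ = ‖e‖ ^ 2 - 2 * ‖e‖ * c * τ := by rw [hce]; ring
      _ ≤ (‖e‖ - c * τ) ^ 2 := by linarith [sq_nonneg (c * τ)]
  refine ball_subset_ball' ?_
  rw [dist_eq_norm, show p + (τ : ℂ) • u - (p - e) = e + (τ : ℂ) • u by abel]
  linarith [le_of_sq_le_sq hsq (sub_nonneg.2 hcτ)]

theorem natCeil_div_mul_le {x τ : ℝ} (hx : 0 ≤ x) (hτ : 0 < τ) (hτ1 : τ ≤ 1) :
    (⌈x / τ⌉₊ : ℝ) * τ ≤ x + 1 :=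
  calc (⌈x / τ⌉₊ : ℝ) * τ ≤ (x / τ + 1) * τ := by
        gcongr; exact (Nat.ceil_lt_add_one (by positivity)).le
    _ = x + τ := by field_simp
    _ ≤ x + 1 := by gcongr

variable {F : E → E} {f : E → V} {Ω : Set E} {B : ℝ} {μ : ℂ}

theorem eventually_norm_le_mul_pow_of_comp_eq_smul (hμ : μ ≠ 1) {c K : ℝ} (hc : 0 < c)
    (hK : 0 < K) (hsub : ∀ τ : ℝ, 0 < τ → τ ≤ 1 → ball (p + (τ : ℂ) • u) (c * τ) ⊆ Ω)
    (hd : DifferentiableOn ℂ f Ω) (hB : ∀ w ∈ Ω, ‖f w‖ ≤ B) (heq : ∀ w ∈ Ω, f (F w) = μ • f w)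
    (ho : (fun z => F z - z) =o[𝓝[Ω] p] fun z => ‖z - p‖ ^ 2) :
    ∀ᶠ τ : ℝ in 𝓝[>] 0, ∀ m : ℕ, m * τ ≤ K → ∀ w ∈ ball (p + (τ : ℂ) • u) (c * τ / 2),
      ‖f w‖ ≤ B * (1 / 2) ^ m := by
  have hν : 0 < min ‖μ - 1‖ 1 := lt_min (norm_pos_iff.2 (sub_ne_zero.2 hμ)) one_pos
  filter_upwards [eventually_norm_sub_le_mul_sq ho (K := ‖u‖ + c)
    (ε := min ‖μ - 1‖ 1 * (c / (2 * K)) / 4) (by positivity) (by positivity),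
    Ioc_mem_nhdsGT one_pos] with τ hstep ⟨hτ, hτ1⟩ m hm w hw
  have hball := hsub τ hτ hτ1
  have hnear : ∀ x ∈ ball (p + (τ : ℂ) • u) (c * τ), ‖x - p‖ ≤ (‖u‖ + c) * τ := by
    intro x hx
    have htri := norm_sub_le_norm_sub_add_norm_sub x (p + (τ : ℂ) • u) p
    rw [add_sub_cancel_left, norm_smul, Complex.norm_real, Real.norm_of_nonneg hτ.le] at htri
    linarith [mem_ball_iff_norm.1 hx]
  have hms : m * (c / (2 * K) * τ ^ 2) ≤ c * τ / 2 :=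
    calc m * (c / (2 * K) * τ ^ 2) = m * τ * (c / (2 * K) * τ) := by ring
      _ ≤ K * (c / (2 * K) * τ) := by gcongr
      _ = c * τ / 2 := by field_simp
  refine norm_le_mul_pow_of_comp_eq_smul hμ (s := c / (2 * K) * τ ^ 2) (by positivity)
    (hd.mono hball) (fun x hx => hB x (hball hx)) (fun x hx => heq x (hball hx))
    (fun x hx => (hstep x (hball hx) (hnear x hx)).trans_eq (by ring)) m w
    (ball_subset_ball (by linarith) hw)

theorem eq_zero_of_comp_eq_smul_of_slice (hμ : μ ≠ 1) (hball : ball (p - e) ‖e‖ ⊆ Ω)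
    (hd : DifferentiableOn ℂ f Ω) (hB : ∀ w ∈ Ω, ‖f w‖ ≤ B) (heq : ∀ w ∈ Ω, f (F w) = μ • f w)
    (ho : (fun z => F z - z) =o[𝓝[Ω] p] fun z => ‖z - p‖ ^ 2) (hu0 : u ≠ 0)
    (hu : inner ℂ e u = -((‖u‖ ^ 2 : ℝ) : ℂ)) {ζ : ℂ} (hζ : ‖ζ‖ < 1) :
    f (p + (1 - ζ) • u) = 0 := by
  have hdisc : ∀ ζ : ℂ, ‖ζ‖ < 1 → p + (1 - ζ) • u ∈ Ω := fun ζ hζ =>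
    hball (add_one_sub_smul_mem_ball hu0 hu hζ)
  have hB0 : 0 ≤ B := (norm_nonneg _).trans (hB _ (hdisc ζ hζ))
  have hu1 := norm_pos_iff.2 hu0
  have hue := norm_le_of_inner_eq_neg_norm_sq hu
  have he := hu1.trans_le hue
  set c : ℝ := ‖u‖ ^ 2 / (2 * ‖e‖) with hc
  set r : ℝ := ‖u‖ / (32 * ‖e‖) with hr
  have hr0 : 0 < r := by positivity
  have hr2 : r ≤ 1 / 2 := by rw [hr, div_le_iff₀ (by positivity)]; linarith
  obtain ⟨t, ht⟩ := exists_pow_lt_of_lt_one hr0 (by norm_num : (1 / 2 : ℝ) < 1)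
  refine eq_zero_of_norm_moebius_le (f := fun ζ => f (p + (1 - ζ) • u)) (B := B) hr0
    (by linarith) (hd.comp (f := fun ζ : ℂ => p + (1 - ζ) • u) (by fun_prop)
      fun ζ hζ => hdisc ζ (by simpa using hζ)) (fun ζ hζ => hB _ (hdisc ζ hζ)) (fun K => ?_) hζ
  obtain ⟨τ, hsmall, hτ, hτ1⟩ := ((eventually_norm_le_mul_pow_of_comp_eq_smul (u := u)
    (c := c) (K := t * (|K| + 1) + 1) hμ (by positivity) (by positivity)
    (fun τ hτ hτ1 => (ball_add_smul_subset_ball hu0 hu hτ.le hτ1).trans hball) hd hB heq ho).and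
      (Ioc_mem_nhdsGT one_pos)).exists
  have hP := natCeil_div_mul_le (abs_nonneg K) hτ hτ1
  refine ⟨τ, hτ, hτ1, ⌈|K| / τ⌉₊, (le_abs_self K).trans ((div_le_iff₀ hτ).1 (Nat.le_ceil _)),
    fun w hw => ?_⟩
  have hmem : p + (1 - moebius (1 - τ) w) • u ∈ ball (p + (τ : ℂ) • u) (c * τ / 2) := by
    have hsub : p + (1 - moebius (1 - τ) w) • u - (p + (τ : ℂ) • u) =
        -(moebius (1 - τ) w - (1 - τ : ℝ)) • u := by push_cast; module
    rw [mem_ball_iff_norm, hsub, norm_smul, norm_neg]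
    calc ‖moebius (1 - τ) w - (1 - τ : ℝ)‖ * ‖u‖ ≤ 4 * τ * r * ‖u‖ := by
          gcongr; exact norm_moebius_one_sub_sub_le hτ.le hτ1 hr2 hw
      _ = c * τ / 4 := by rw [hc, hr]; field_simp; norm_num
      _ < c * τ / 2 := by linarith [show 0 < c * τ by positivity]
  calc ‖f (p + (1 - moebius (1 - τ) w) • u)‖ ≤ B * (1 / 2) ^ (t * ⌈|K| / τ⌉₊) :=
        hsmall _ (by push_cast; nlinarith) _ hmem
    _ ≤ B * r ^ ⌈|K| / τ⌉₊ := by rw [pow_mul]; gcongr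

theorem eqOn_zero_of_comp_eq_smul [CompleteSpace V] (hμ : μ ≠ 1) (hΩ : IsOpen Ω)
    (hc : IsPreconnected Ω) (he : e ≠ 0) (hball : ball (p - e) ‖e‖ ⊆ Ω)
    (hd : DifferentiableOn ℂ f Ω) (hB : ∀ w ∈ Ω, ‖f w‖ ≤ B) (heq : ∀ w ∈ Ω, f (F w) = μ • f w)
    (ho : (fun z => F z - z) =o[𝓝[Ω] p] fun z => ‖z - p‖ ^ 2) : EqOn f 0 Ω := by
  have he0 := norm_pos_iff.2 he
  refine eqOn_of_isPreconnected_of_eventuallyEq hΩ hc hd (differentiableOn_const 0)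
    (hball (mem_ball_self he0)) ?_
  filter_upwards [ball_mem_nhds (p - e) he0] with w hw
  obtain ⟨u, ζ, hu0, hu, hζ, rfl⟩ := exists_slice hw
  exact eq_zero_of_comp_eq_smul_of_slice hμ hball hd hB heq ho hu0 hu hζ

end Slices

section PowerBoundedOperators

variable {E : Type*} [NormedAddCommGroup E] [NormedSpace ℂ E]

theorem exists_eigenvector_of_mem_spectrum [FiniteDimensional ℂ E] {T : E →L[ℂ] E} {μ : ℂ}
    (hμ : μ ∈ spectrum ℂ T) : ∃ v ≠ 0, T v = μ • v := by
  have : CompleteSpace E := FiniteDimensional.complete ℂ E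
  by_contra! h
  have hinj : Injective (algebraMap ℂ (E →L[ℂ] E) μ - T) := by
    refine (injective_iff_map_eq_zero _).2 fun v hv => by_contra fun hv0 => h v hv0 ?_
    simpa [Algebra.algebraMap_eq_smul_one, sub_eq_zero, eq_comm (a := T v)] using hv
  exact hμ (ContinuousLinearMap.isUnit_iff_bijective.2
    ⟨hinj, LinearMap.surjective_of_injective (f := (algebraMap ℂ (E →L[ℂ] E) μ - T).toLinearMap)
      hinj⟩)

theorem tendsto_pow_zero_of_forall_eigenvalue_norm_lt_one [FiniteDimensional ℂ E] {T : E →L[ℂ] E}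
    (h : ∀ (μ : ℂ) (v : E), v ≠ 0 → T v = μ • v → ‖μ‖ < 1) :
    Tendsto (fun m : ℕ => T ^ m) atTop (𝓝 0) := by
  rcases subsingleton_or_nontrivial E with hE | hE
  · exact tendsto_const_nhds.congr fun m => Subsingleton.elim _ _
  have : CompleteSpace E := FiniteDimensional.complete ℂ E
  have hrad : spectralRadius ℂ T < 1 := spectrum.spectralRadius_lt_of_forall_lt T fun μ hμ => by
    obtain ⟨v, hv, hTv⟩ := exists_eigenvector_of_mem_spectrum hμ
    exact h μ v hv hTv
  obtain ⟨θ, hradθ, hθ⟩ := ENNReal.lt_iff_exists_nnreal_btwn.1 hrad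
  refine squeeze_zero_norm' ?_ (tendsto_pow_atTop_nhds_zero_of_lt_one θ.coe_nonneg
    (by exact_mod_cast hθ))
  have hroot := spectrum.pow_nnnorm_pow_one_div_tendsto_nhds_spectralRadius T
  filter_upwards [hroot.eventually_lt_const hradθ, eventually_gt_atTop 0] with m hm hm0
  have hpow := ENNReal.rpow_lt_rpow hm (z := m) (by positivity)
  rw [← ENNReal.rpow_mul, one_div_mul_cancel (by positivity), ENNReal.rpow_one,
    ENNReal.rpow_natCast] at hpow
  exact_mod_cast hpow.le

theorem sub_pow_succ_eq_pow_sub {R : Type*} [Ring R] {a p : R} (hpa : p * a = p)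
    (hap : a * p = p) (hp : p * p = p) (m : ℕ) : (a - p) ^ (m + 1) = a ^ (m + 1) - p := by
  have hpm : ∀ m : ℕ, a ^ m * p = p := fun m => by
    induction m with
    | zero => simp
    | succ m ih => rw [pow_succ, mul_assoc, hap, ih]
  induction m with
  | zero => simp
  | succ m ih =>
    rw [pow_succ, ih, sub_mul, mul_sub, mul_sub, hpm, hpa, hp, ← pow_succ]
    abel

-- `p` kills the range of `A - 1` and is the identity on its kernel, so these are complementary.
theorem mul_eq_of_mul_eq_of_fixed [FiniteDimensional ℂ E] {A p : E →L[ℂ] E} (hpA : p * A = p)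
    (hp : ∀ v, A v = v → p v = v) : A * p = p ∧ p * p = p := by
  set N := A.toLinearMap - 1
  have hprange : ∀ v, p (A v - v) = 0 := fun v => by
    rw [map_sub, ← mul_apply_eq_comp, hpA, sub_self]
  have hker : ∀ v, v ∈ LinearMap.ker N ↔ A v = v := fun v => by
    simp [N, LinearMap.mem_ker, sub_eq_zero]
  have hdisj : Disjoint (LinearMap.ker N) (LinearMap.range N) := by
    rw [Submodule.disjoint_def]
    rintro _ hv ⟨w, rfl⟩
    rw [← hp _ ((hker _).1 hv)]
    exact hprange w
  have htop : LinearMap.ker N ⊔ LinearMap.range N = ⊤ :=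
    Submodule.eq_top_of_disjoint _ _
      (by rw [add_comm, LinearMap.finrank_range_add_finrank_ker]) hdisj
  have hfix : ∀ v, A (p v) = p v ∧ p (p v) = p v := by
    intro v
    obtain ⟨k, hk, _, ⟨w, rfl⟩, rfl⟩ := Submodule.mem_sup.1 (htop ▸ Submodule.mem_top (x := v))
    have hk := (hker k).1 hk
    have hpv : p (k + N w) = k := by
      rw [map_add, hp k hk]
      simpa [N] using hprange w
    rw [hpv]
    exact ⟨hk, hp k hk⟩
  exact ⟨ContinuousLinearMap.ext fun v => (hfix v).1, ContinuousLinearMap.ext fun v => (hfix v).2⟩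

theorem norm_le_one_of_pow_bounded {A : E →L[ℂ] E} {C : ℝ} (hC : ∀ k : ℕ, ‖A ^ k‖ ≤ C) {μ : ℂ}
    {v : E} (hv : v ≠ 0) (hAv : A v = μ • v) : ‖μ‖ ≤ 1 := by
  by_contra! h
  obtain ⟨k, hk⟩ := pow_unbounded_of_one_lt C h
  have hle := (A ^ k).le_of_opNorm_le (hC k) v
  rw [pow_apply_eq_smul hAv, norm_smul, norm_pow] at hle
  exact hk.not_ge (le_of_mul_le_mul_right hle (norm_pos_iff.2 hv))

theorem tendsto_pow_of_pow_bounded [FiniteDimensional ℂ E] {A p : E →L[ℂ] E} {C : ℝ}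
    (hC : ∀ k : ℕ, ‖A ^ k‖ ≤ C)
    (hA : ∀ μ : ℂ, ‖μ‖ = 1 → μ ≠ 1 → ∀ v, A v = μ • v → v = 0)
    (hpA : p * A = p) (hp : ∀ v, A v = v → p v = v) :
    Tendsto (fun m : ℕ => A ^ m) atTop (𝓝 p) := by
  obtain ⟨hAp, hpp⟩ := mul_eq_of_mul_eq_of_fixed hpA hp
  have hpT : p * (A - p) = 0 := by rw [mul_sub, hpA, hpp, sub_self]
  have hT : Tendsto (fun m : ℕ => (A - p) ^ m) atTop (𝓝 0) := by
    refine tendsto_pow_zero_of_forall_eigenvalue_norm_lt_one fun μ v hv hTv => ?_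
    rcases eq_or_ne μ 0 with rfl | hμ
    · simp
    have hpv : p v = 0 := by
      have := congr($hpT v)
      rw [mul_apply_eq_comp, hTv, map_smul] at this
      exact (smul_eq_zero.1 this).resolve_left hμ
    have hAv : A v = μ • v := by simpa [hpv] using hTv
    refine (norm_le_one_of_pow_bounded hC hv hAv).lt_of_ne fun hμ1 => hv ?_
    rcases eq_or_ne μ 1 with rfl | hne
    · rw [← hp v (by simpa using hAv), hpv]
    · exact hA μ hμ1 hne v hAv
  rw [← tendsto_add_atTop_iff_nat 1]
  have := ((tendsto_add_atTop_iff_nat 1).2 hT).add_const p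
  simpa [sub_pow_succ_eq_pow_sub hpA hAp hpp] using this

end PowerBoundedOperators

section ExponentialDecay

variable {E V : Type*} [NormedAddCommGroup E] [NormedAddCommGroup V]

/-- Exponential decay of the sequence `Φ`, uniformly near `x`. -/
def DecaysAt (Φ : ℕ → E → V) (x : E) : Prop :=
  ∃ r > 0, ∃ C θ : ℝ, 0 < θ ∧ θ < 1 ∧ ∀ z ∈ ball x r, ∀ k : ℕ, ‖Φ k z‖ ≤ C * θ ^ k

theorem isOpen_setOf_decaysAt (Φ : ℕ → E → V) : IsOpen {x | DecaysAt Φ x} := by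
  rw [Metric.isOpen_iff]
  rintro y ⟨r, hr, C, θ, hθ, hθ1, h⟩
  refine ⟨r / 2, half_pos hr, fun w hw => ⟨r / 2, half_pos hr, C, θ, hθ, hθ1, fun z hz => h z ?_⟩⟩
  exact ball_subset_ball' (by linarith [mem_ball.1 hw]) hz

theorem exists_pow_div_le {q : ℝ} (hq : 0 < q) (hq1 : q < 1) {m : ℕ} (hm : 0 < m) :
    ∃ θ : ℝ, 0 < θ ∧ θ < 1 ∧ ∀ k : ℕ, q ^ (k / m) ≤ q⁻¹ * θ ^ k := by
  set θ : ℝ := q ^ (m⁻¹ : ℝ)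
  have hθ0 : 0 < θ := Real.rpow_pos_of_pos hq _
  have hθ1 : θ < 1 := Real.rpow_lt_one hq.le hq1 (by positivity)
  refine ⟨θ, hθ0, hθ1, fun k => (le_inv_mul_iff₀ hq).2 ?_⟩
  calc q * q ^ (k / m) = θ ^ (m * (k / m + 1)) := by
        rw [pow_mul, Real.rpow_inv_natCast_pow hq.le hm.ne', pow_succ']
    _ ≤ θ ^ k := pow_le_pow_of_le_one hθ0.le hθ1.le (Nat.lt_mul_div_succ k hm).le

variable [NormedSpace ℂ E] [NormedSpace ℂ V]

theorem norm_le_mul_div_pow_of_norm_le_ball {f : E → V} {y w : E} {s R B : ℝ} {p : ℕ}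
    (hs0 : 0 < s) (hd : DifferentiableOn ℂ f (ball y R)) (hB : ∀ z ∈ ball y R, ‖f z‖ ≤ B)
    (hs : ∀ z ∈ closedBall y s, ‖f z‖ ≤ B * (s / R) ^ p) (hw : w ∈ ball y R) (hsw : s ≤ dist w y) :
    ‖f w‖ ≤ B * (dist w y / R) ^ p := by
  set d : ℝ := dist w y
  have hd0 : 0 < d := hs0.trans_le hsw
  have hnorm : ∀ ζ : ℂ, dist (y + ζ • (d : ℂ)⁻¹ • (w - y)) y = ‖ζ‖ := fun ζ => by
    rw [dist_eq_norm, add_sub_cancel_left, norm_smul, norm_smul, norm_inv, Complex.norm_real,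
      Real.norm_of_nonneg hd0.le, ← dist_eq_norm w y, inv_mul_cancel₀ hd0.ne', mul_one]
  have hdnorm : ‖(d : ℂ)‖ = d := by rw [Complex.norm_real, Real.norm_of_nonneg hd0.le]
  have hline := norm_le_mul_div_pow_of_differentiableOn
    (f := fun ζ : ℂ => f (y + ζ • (d : ℂ)⁻¹ • (w - y))) (ζ := d) (R := R) (B := B) (p := p) hs0
    (hd.comp (by fun_prop) fun ζ hζ => by simpa [mem_ball, hnorm] using hζ)
    (fun ζ hζ => hB _ (by rwa [mem_ball, hnorm]))
    (fun ζ hζ => hs _ (by rw [mem_closedBall, hnorm, hζ])) (by rwa [hdnorm])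
    (by rw [hdnorm]; exact mem_ball.1 hw)
  rwa [hdnorm, smul_inv_smul₀ (by exact_mod_cast hd0.ne'), add_sub_cancel] at hline

theorem DecaysAt.of_dist_lt {Φ : ℕ → E → V} {B R : ℝ} {x y : E} (hy : DecaysAt Φ y)
    (hd : ∀ k, DifferentiableOn ℂ (Φ k) (ball x R)) (hB : ∀ k, ∀ z ∈ ball x R, ‖Φ k z‖ ≤ B)
    (hxy : dist x y < R / 4) : DecaysAt Φ x := by
  obtain ⟨r, hr, C, θ, hθ, hθ1, hdec⟩ := hy
  have hR : 0 < R := by linarith [dist_nonneg (x := x) (y := y)]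
  have hyx : ball y (3 / 4 * R) ⊆ ball x R := ball_subset_ball' (by rw [dist_comm]; linarith)
  set D : ℝ := max B C
  have hD : 0 ≤ D := ((norm_nonneg _).trans (hB 0 x (mem_ball_self hR))).trans (le_max_left _ _)
  set s : ℝ := min (r / 2) (R / 2)
  have hs : 0 < s := lt_min (half_pos hr) (half_pos hR)
  obtain ⟨m, hm⟩ := exists_pow_lt_of_lt_one (div_pos hs (show 0 < 3 / 4 * R by positivity)) hθ1
  have hm' : θ ^ (m + 1) ≤ s / (3 / 4 * R) :=
    (pow_le_pow_of_le_one hθ.le hθ1.le m.le_succ).trans hm.le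
  have hsmall : ∀ k, ∀ z ∈ closedBall y s, ‖Φ k z‖ ≤ D * (s / (3 / 4 * R)) ^ (k / (m + 1)) := by
    intro k z hz
    have hzr : z ∈ ball y r := closedBall_subset_ball
      ((min_le_left _ _).trans_lt (half_lt_self hr)) hz
    calc ‖Φ k z‖ ≤ D * θ ^ k := by
          grw [hdec z hzr k, show C ≤ D from le_max_right B C]
      _ ≤ D * (θ ^ (m + 1)) ^ (k / (m + 1)) := by
          rw [← pow_mul]
          gcongr 1
          exact pow_le_pow_of_le_one hθ.le hθ1.le (Nat.mul_div_le k _)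
      _ ≤ D * (s / (3 / 4 * R)) ^ (k / (m + 1)) := by gcongr
  obtain ⟨θ', hθ', hθ'1, hpow⟩ :=
    exists_pow_div_le (q := 2 / 3) (by norm_num) (by norm_num) m.succ_pos
  refine ⟨R / 4, by positivity, D * (2 / 3)⁻¹, θ', hθ', hθ'1, fun w hw k => ?_⟩
  have hwy : dist w y < R / 2 := by linarith [dist_triangle w x y, mem_ball.1 hw]
  have hratio : ∀ t ≤ R / 2, t / (3 / 4 * R) ≤ 2 / 3 := fun t ht => by
    rw [div_le_iff₀ (by positivity)]; linarith
  refine le_trans ?_ ((mul_le_mul_of_nonneg_left (hpow k) hD).trans_eq (mul_assoc _ _ _).symm)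
  rcases le_total (dist w y) s with hle | hle
  · refine (hsmall k w hle).trans ?_
    gcongr D * ?_ ^ _
    exact hratio s (min_le_right _ _)
  · refine (norm_le_mul_div_pow_of_norm_le_ball hs ((hd k).mono hyx)
      (fun z hz => (hB k z (hyx hz)).trans (le_max_left _ _)) (hsmall k)
      (by rw [mem_ball]; linarith) hle).trans ?_
    gcongr D * ?_ ^ _
    exact hratio _ hwy.le

theorem DecaysAt.of_isPreconnected {Φ : ℕ → E → V} {B : ℝ} {Ω : Set E} {x : E}
    (hdec : DecaysAt Φ x) (hΩ : IsOpen Ω) (hc : IsPreconnected Ω)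
    (hd : ∀ k, DifferentiableOn ℂ (Φ k) Ω) (hB : ∀ k, ∀ z ∈ Ω, ‖Φ k z‖ ≤ B) (hx : x ∈ Ω) :
    ∀ y ∈ Ω, DecaysAt Φ y := by
  refine hc.subset_of_closure_inter_subset (isOpen_setOf_decaysAt Φ) ⟨x, hx, hdec⟩ ?_
  rintro y ⟨hy, hyΩ⟩
  obtain ⟨R, hR, hball⟩ := Metric.isOpen_iff.1 hΩ y hyΩ
  obtain ⟨w, hw, hyw⟩ := Metric.mem_closure_iff.1 hy (R / 4) (by positivity)
  exact DecaysAt.of_dist_lt hw (fun k => (hd k).mono hball) (fun k z hz => hB k z (hball hz)) hyw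

end ExponentialDecay

section ConvergenceOfIterates

theorem le_mul_pow_div_of_le_mul {u : ℕ → ℝ} {C q : ℝ} {m : ℕ} (hm : 0 < m) (hq : 0 ≤ q)
    (hu : ∀ k, u k ≤ C) (hum : ∀ k, u (k + m) ≤ q * u k) (k : ℕ) : u k ≤ C * q ^ (k / m) := by
  induction k using Nat.strong_induction_on with
  | _ k ih =>
    rcases lt_or_ge k m with hk | hk
    · simpa [Nat.div_eq_of_lt hk] using hu k
    · obtain ⟨j, rfl⟩ := Nat.exists_eq_add_of_le' hk
      calc u (j + m) ≤ q * u j := hum j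
        _ ≤ q * (C * q ^ (j / m)) := by gcongr; exact ih j (by lia)
        _ = C * q ^ ((j + m) / m) := by rw [Nat.add_div_right _ hm, pow_succ]; ring

variable {E : Type*} [NormedAddCommGroup E] [NormedSpace ℂ E] {F : E → E} {Ω : Set E} {B : ℝ}
  {z : E}

theorem eventually_forall_iterate_mem (hΩ : IsOpen Ω) (hB : ∀ x ∈ Ω, ‖x‖ ≤ B)
    (hF : DifferentiableOn ℂ F Ω) (hFΩ : MapsTo F Ω Ω) (hz : z ∈ Ω) (hfix : F z = z) {s : Set E}
    (hs : s ∈ 𝓝 z) : ∀ᶠ w in 𝓝 z, ∀ k, F^[k] w ∈ s := by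
  obtain ⟨r, hr, hball⟩ := Metric.isOpen_iff.1 hΩ z hz
  obtain ⟨ε, hε, hs⟩ := Metric.mem_nhds_iff.1 hs
  have hlim : Tendsto (fun w => 2 * B / r * ‖w - z‖) (𝓝 z) (𝓝 0) := by
    have : Continuous fun w => 2 * B / r * ‖w - z‖ := by fun_prop
    simpa using this.tendsto z
  filter_upwards [ball_mem_nhds z hr, hlim.eventually_lt_const hε] with w hw hwε k
  refine hs (mem_ball_iff_norm.2 (lt_of_le_of_lt ?_ hwε))
  have hle := norm_sub_le_of_norm_le_ball ((differentiableOn_iterate hF hFΩ k).mono hball)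
    (fun x hx => hB _ (hFΩ.iterate k (hball hx))) hw
  rwa [iterate_fixed hfix] at hle

theorem norm_fderiv_pow_le {r : ℝ} (hr : 0 < r) (hball : ball z r ⊆ Ω) (hB : ∀ x ∈ Ω, ‖x‖ ≤ B)
    (hF : DifferentiableOn ℂ F Ω) (hFΩ : MapsTo F Ω Ω) (hfix : F z = z) (k : ℕ) :
    ‖fderiv ℂ F z ^ k‖ ≤ 2 * B / r := by
  have hFz : HasFDerivAt F (fderiv ℂ F z) z :=
    (hF.differentiableAt (mem_of_superset (ball_mem_nhds z hr) hball)).hasFDerivAt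
  rw [← (hFz.iterate hfix k).fderiv]
  exact norm_fderiv_le_of_norm_le_ball hr ((differentiableOn_iterate hF hFΩ k).mono hball)
    fun x hx => hB _ (hFΩ.iterate k (hball hx))

variable [FiniteDimensional ℂ E]

-- An invariant function whose derivative is the identity on the fixed vectors of `dF(z)` replaces
-- the limit of the iterates, whose existence is not yet known.
theorem exists_invariant_tendsto_fderiv_pow (hΩ : IsOpen Ω) (hB : ∀ x ∈ Ω, ‖x‖ ≤ B)
    (hF : DifferentiableOn ℂ F Ω) (hFΩ : MapsTo F Ω Ω) (hz : z ∈ Ω) (hfix : F z = z)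
    (hA : ∀ μ : ℂ, ‖μ‖ = 1 → μ ≠ 1 → ∀ v, fderiv ℂ F z v = μ • v → v = 0) :
    ∃ f : E → E, DifferentiableOn ℂ f Ω ∧ (∀ w ∈ Ω, f (F w) = f w) ∧
      Tendsto (fun m : ℕ => fderiv ℂ F z ^ m) atTop (𝓝 (fderiv ℂ f z)) := by
  obtain ⟨r, hr, hball⟩ := Metric.isOpen_iff.1 hΩ z hz
  have hFz : HasFDerivAt F (fderiv ℂ F z) z :=
    (hF.differentiableAt (hΩ.mem_nhds hz)).hasFDerivAt
  obtain ⟨f, hf, -, hfF, hfker⟩ := exists_eigenfunction hΩ hB hF hFΩ hz hfix hFz norm_one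
  simp only [one_smul] at hfF hfker
  refine ⟨f, hf, hfF, tendsto_pow_of_pow_bounded (norm_fderiv_pow_le hr hball hB hF hFΩ hfix) hA
    ?_ hfker⟩
  have hfz : HasFDerivAt f (fderiv ℂ f z) (F z) := by
    rw [hfix]; exact (hf.differentiableAt (hΩ.mem_nhds hz)).hasFDerivAt
  have heq : f ∘ F =ᶠ[𝓝 z] f := by filter_upwards [hΩ.mem_nhds hz] with w hw using hfF w hw
  exact (hfz.comp z hFz).fderiv.symm.trans heq.fderiv_eq

theorem decaysAt_iterate_succ_sub (hΩ : IsOpen Ω) (hB : ∀ x ∈ Ω, ‖x‖ ≤ B)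
    (hF : DifferentiableOn ℂ F Ω) (hFΩ : MapsTo F Ω Ω) (hz : z ∈ Ω) (hfix : F z = z)
    (hA : ∀ μ : ℂ, ‖μ‖ = 1 → μ ≠ 1 → ∀ v, fderiv ℂ F z v = μ • v → v = 0) :
    DecaysAt (fun k w => F^[k + 1] w - F^[k] w) z := by
  obtain ⟨f, hf, hfF, hlim⟩ := exists_invariant_tendsto_fderiv_pow hΩ hB hF hFΩ hz hfix hA
  obtain ⟨m, hmlt, hm⟩ := ((hlim.eventually (ball_mem_nhds _ one_half_pos)).and
    (eventually_gt_atTop 0)).exists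
  have hFz : HasStrictFDerivAt F (fderiv ℂ F z) z :=
    hasStrictFDerivAt_of_differentiableOn hΩ hF hz
  have hFm : HasStrictFDerivAt F^[m] (fderiv ℂ F z ^ m) z := hFz.iterate hfix m
  obtain ⟨s, hs, hlip⟩ :=
    (hFm.sub (hasStrictFDerivAt_of_differentiableOn hΩ hf hz)).exists_lipschitzOnWith_of_nnnorm_lt
      (1 / 2) (by simpa [dist_eq_norm, ← NNReal.coe_lt_coe] using hmlt)
  obtain ⟨r, hr, horbit⟩ := Metric.eventually_nhds_iff_ball.1
    (eventually_forall_iterate_mem hΩ hB hF hFΩ hz hfix (inter_mem hs (hΩ.mem_nhds hz)))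
  obtain ⟨θ, hθ, hθ1, hpow⟩ := exists_pow_div_le (q := 1 / 2) (by norm_num) (by norm_num) hm
  have hB0 : 0 ≤ B := (norm_nonneg z).trans (hB z hz)
  refine ⟨r, hr, 2 * B * (1 / 2)⁻¹, θ, hθ, hθ1, fun w hw k => ?_⟩
  have hhalf : ∀ k, ‖F^[k + m + 1] w - F^[k + m] w‖ ≤ 1 / 2 * ‖F^[k + 1] w - F^[k] w‖ := by
    intro k
    have hinv : f (F^[k + 1] w) = f (F^[k] w) := by
      rw [iterate_succ_apply', hfF _ (horbit w hw k).2]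
    have hle := hlip.norm_sub_le (horbit w hw (k + 1)).1 (horbit w hw k).1
    simp only [Pi.sub_apply, hinv, sub_sub_sub_cancel_right, ← iterate_add_apply] at hle
    rw [show k + m + 1 = m + (k + 1) by lia, add_comm k m]
    simpa using hle
  have hbound : ∀ k, ‖F^[k + 1] w - F^[k] w‖ ≤ 2 * B := fun k => by
    linarith [norm_sub_le (F^[k + 1] w) (F^[k] w), hB _ (horbit w hw (k + 1)).2,
      hB _ (horbit w hw k).2]
  calc ‖F^[k + 1] w - F^[k] w‖ ≤ 2 * B * (1 / 2) ^ (k / m) :=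
        le_mul_pow_div_of_le_mul (u := fun k => ‖F^[k + 1] w - F^[k] w‖) hm (by norm_num) hbound
          hhalf k
    _ ≤ 2 * B * (1 / 2)⁻¹ * θ ^ k := by
        rw [mul_assoc (2 * B)]
        exact mul_le_mul_of_nonneg_left (hpow k) (by linarith)

theorem exists_limit_of_decaysAt_succ_sub {V : Type*} [NormedAddCommGroup V] [CompleteSpace V]
    {X : Type*} [NormedAddCommGroup X] {f : ℕ → X → V} {Ω : Set X}
    (hdec : ∀ x ∈ Ω, DecaysAt (fun k w => f (k + 1) w - f k w) x) :
    ∃ g : X → V, ∀ x ∈ Ω, Tendsto (fun k => f k x) atTop (𝓝 (g x)) := by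
  have hlim : ∀ x, ∃ y, x ∈ Ω → Tendsto (fun k => f k x) atTop (𝓝 y) := fun x => by
    by_cases hx : x ∈ Ω
    · obtain ⟨r, hr, C, θ, -, hθ1, hC⟩ := hdec x hx
      have hcauchy : CauchySeq fun k => f k x := cauchySeq_of_le_geometric θ C hθ1 fun k => by
        rw [dist_comm, dist_eq_norm]; exact hC x (mem_ball_self hr) k
      exact (cauchySeq_tendsto_of_complete hcauchy).imp fun y hy _ => hy
    · exact ⟨0, fun h => absurd h hx⟩
  choose g hg using hlim
  exact ⟨g, hg⟩

theorem DecaysAt.sub_limit {V : Type*} [NormedAddCommGroup V]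
    {X : Type*} [NormedAddCommGroup X] {f : ℕ → X → V} {g : X → V} {Ω : Set X} {x : X}
    (hΩ : Ω ∈ 𝓝 x) (hlim : ∀ y ∈ Ω, Tendsto (fun k => f k y) atTop (𝓝 (g y)))
    (hdec : DecaysAt (fun k w => f (k + 1) w - f k w) x) :
    DecaysAt (fun k w => f k w - g w) x := by
  obtain ⟨r, hr, C, θ, hθ, hθ1, hC⟩ := hdec
  obtain ⟨s, hs, hball⟩ := Metric.mem_nhds_iff.1 hΩ
  refine ⟨min r s, lt_min hr hs, C / (1 - θ), θ, hθ, hθ1, fun w hw k => ?_⟩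
  have hle := dist_le_of_le_geometric_of_tendsto θ C hθ1
    (fun k => by
      rw [dist_comm, dist_eq_norm]; exact hC w (ball_subset_ball (min_le_left r s) hw) k)
    (hlim w (hball (ball_subset_ball (min_le_right r s) hw))) k
  rwa [dist_eq_norm, mul_div_right_comm] at hle

theorem exists_limit_iterates (hΩ : IsOpen Ω) (hc : IsPreconnected Ω)
    (hB : ∀ x ∈ Ω, ‖x‖ ≤ B) (hF : DifferentiableOn ℂ F Ω) (hFΩ : MapsTo F Ω Ω) (hz : z ∈ Ω)
    (hfix : F z = z)
    (hA : ∀ μ : ℂ, ‖μ‖ = 1 → μ ≠ 1 → ∀ v, fderiv ℂ F z v = μ • v → v = 0) :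
    ∃ g : E → E, DifferentiableOn ℂ g Ω ∧ (∀ x ∈ Ω, Tendsto (F^[·] x) atTop (𝓝 (g x))) ∧
      ∀ x ∈ Ω, DecaysAt (fun k w => F^[k] w - g w) x := by
  have : CompleteSpace E := FiniteDimensional.complete ℂ E
  have hFk : ∀ k, DifferentiableOn ℂ F^[k] Ω := differentiableOn_iterate hF hFΩ
  have hFB : ∀ k, ∀ x ∈ Ω, ‖F^[k] x‖ ≤ B := fun k x hx => hB _ (hFΩ.iterate k hx)
  have hdec := (decaysAt_iterate_succ_sub hΩ hB hF hFΩ hz hfix hA).of_isPreconnected (B := B + B)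
    hΩ hc (fun k => (hFk (k + 1)).sub (hFk k))
    (fun k x hx => (norm_sub_le _ _).trans (add_le_add (hFB _ x hx) (hFB k x hx))) hz
  obtain ⟨g, hg⟩ := exists_limit_of_decaysAt_succ_sub hdec
  refine ⟨g, fun x hx => ?_, hg, fun x hx => (hdec x hx).sub_limit (hΩ.mem_nhds hx) hg⟩
  obtain ⟨D, hD, -⟩ := exists_hasFDerivAt_of_tendsto_ultrafilter (U := hyperfilter ℕ) hΩ hFk hFB
    (fun y hy => (hg y hy).mono_left Nat.hyperfilter_le_atTop) hx
  exact hD.differentiableAt.differentiableWithinAt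

end ConvergenceOfIterates

section PeakFunctions

variable {E : Type*} [NormedAddCommGroup E]

/-- The size of `w` relative to the peak point `p`: the two terms weigh the complex normal and the
complex tangential directions, `L` being a holomorphic peak function at `p`. -/
def peakSize (L : E → ℂ) (p w : E) : ℝ := ‖L w‖ + ‖w - p‖ ^ 2

theorem peakSize_nonneg (L : E → ℂ) (p w : E) : 0 ≤ peakSize L p w :=
  add_nonneg (norm_nonneg _) (sq_nonneg _)

theorem norm_le_peakSize (L : E → ℂ) (p w : E) : ‖L w‖ ≤ peakSize L p w :=
  le_add_of_nonneg_right (sq_nonneg _)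

theorem sq_norm_sub_le_peakSize (L : E → ℂ) (p w : E) : ‖w - p‖ ^ 2 ≤ peakSize L p w :=
  le_add_of_nonneg_left (norm_nonneg _)

theorem norm_sub_le_two_mul_sqrt_peakSize (L : E → ℂ) (p v w : E) :
    ‖v - w‖ ≤ 2 * √(peakSize L p v + peakSize L p w) := by
  have hle {x y : E} : ‖x - p‖ ≤ √(peakSize L p x + peakSize L p y) := Real.le_sqrt_of_sq_le <|
    (sq_norm_sub_le_peakSize L p x).trans (le_add_of_nonneg_right (peakSize_nonneg L p y))
  have hw : ‖p - w‖ ≤ √(peakSize L p v + peakSize L p w) := by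
    rw [norm_sub_rev, add_comm]; exact hle
  linarith [norm_sub_le_norm_sub_add_norm_sub v p w, hle (x := v) (y := w)]

variable [NormedSpace ℂ E] {L : E → ℂ} {X : Set E} {p : E} {c δ : ℝ}

/-- `L` is holomorphic, vanishes at `p`, and its real part is at most `-c‖z - p‖ ^ 2` on the part
of `X` within distance `δ` of `p`; so `exp ∘ L` peaks at `p` there. -/
structure IsPeakFunction (L : E → ℂ) (X : Set E) (p : E) (c δ : ℝ) : Prop where
  contDiff : ContDiff ℂ 1 L
  map_point : L p = 0
  c_pos : 0 < c
  δ_pos : 0 < δ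
  re_le : ∀ z ∈ X, ‖z - p‖ < δ → (L z).re ≤ -(c * ‖z - p‖ ^ 2)

namespace IsPeakFunction

theorem on_closure (h : IsPeakFunction L X p c δ) : IsPeakFunction L (closure X) p c δ := by
  refine ⟨h.contDiff, h.map_point, h.c_pos, h.δ_pos, fun z hz hzδ => ?_⟩
  have hL := h.contDiff.continuous
  have hclosed : IsClosed {z | (L z).re ≤ -(c * ‖z - p‖ ^ 2)} :=
    isClosed_le (by fun_prop) (by fun_prop)
  have hzcl : z ∈ closure (ball p δ ∩ X) :=
    isOpen_ball.inter_closure ⟨mem_ball_iff_norm.2 hzδ, hz⟩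
  exact closure_minimal (fun w hw => h.re_le w hw.2 (mem_ball_iff_norm.1 hw.1)) hclosed hzcl

theorem continuous_peakSize (h : IsPeakFunction L X p c δ) : Continuous (peakSize L p) :=
  h.contDiff.continuous.norm.add (by fun_prop)

theorem sq_norm_sub_le (h : IsPeakFunction L X p c δ) {z : E} (hz : z ∈ X) (hzδ : ‖z - p‖ < δ) :
    ‖z - p‖ ^ 2 ≤ ‖L z‖ / c := by
  rw [le_div_iff₀ h.c_pos]
  linarith [h.re_le z hz hzδ, (abs_le.1 (Complex.abs_re_le_norm (L z))).1]

end IsPeakFunction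

end PeakFunctions

section Harnack

theorem norm_le_three_mul_of_re_nonpos {f : ℂ → ℂ} {R : ℝ} (hR : 0 < R)
    (hd : DifferentiableOn ℂ f (ball 0 R)) (hre : ∀ ζ ∈ ball (0 : ℂ) R, (f ζ).re ≤ 0) {ζ : ℂ}
    (hζ : ‖ζ‖ ≤ R / 2) : ‖f ζ‖ ≤ 3 * ‖f 0‖ := by
  have hpos : 0 < R - ‖ζ‖ := by linarith
  refine le_of_forall_pos_le_add fun ε hε => ?_
  calc ‖f ζ‖ ≤ 2 * (ε / 2) * ‖ζ‖ / (R - ‖ζ‖) + ‖f 0‖ * (R + ‖ζ‖) / (R - ‖ζ‖) :=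
        Complex.borelCaratheodory (half_pos hε) hd
          (fun w hw => (hre w hw).trans (half_pos hε).le) hR (mem_ball_zero_iff.2 (by linarith))
    _ ≤ ε + 3 * ‖f 0‖ := by
        gcongr
        · rw [div_le_iff₀ hpos, mul_div_cancel₀ _ two_ne_zero]
          gcongr
          linarith
        · rw [div_le_iff₀ hpos, mul_right_comm, mul_comm]
          gcongr
          linarith
    _ = 3 * ‖f 0‖ + ε := add_comm _ _

variable {E : Type*} [NormedAddCommGroup E] [NormedSpace ℂ E]

/-- A Harnack inequality for the function `u` along holomorphic discs in `X`, with exponent `A`. -/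
def SatisfiesHarnack (u : E → ℝ) (X : Set E) (A : ℕ) : Prop :=
  ∀ G : ℂ → E, DifferentiableOn ℂ G (ball 0 1) → MapsTo G (ball 0 1) X →
    ∀ ζ : ℂ, ‖ζ‖ < 1 → u (G ζ) ≤ (4 / (1 - ‖ζ‖ ^ 2)) ^ A * u (G 0)

section Chain

variable {u : E → ℝ} {X : Set E} {ρ C : ℝ}

theorem mapsTo_add_mul_ball {q : ℝ} (hq : 0 < q) {ζ : ℂ} (hζ : ‖ζ‖ ≤ 1 - q) :
    MapsTo (fun w : ℂ => ζ + q * w) (ball 0 1) (ball 0 1) := by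
  intro w hw
  rw [mem_ball_zero_iff] at hw ⊢
  calc ‖ζ + q * w‖ ≤ ‖ζ‖ + q * ‖w‖ := by
        simpa [Complex.norm_real, abs_of_pos hq] using norm_add_le ζ (q * w)
    _ < (1 - q) + q * 1 := add_lt_add_of_le_of_lt hζ (by gcongr)
    _ = 1 := by ring

-- Each link of the chain covers the fraction `ρ` of the remaining distance to the circle.
theorem apply_le_pow_mul_of_norm_le (hρ : 0 < ρ) (hρ1 : ρ < 1) (hC : 0 ≤ C)
    (hlink : ∀ G : ℂ → E, DifferentiableOn ℂ G (ball 0 1) → MapsTo G (ball 0 1) X →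
      ∀ ζ : ℂ, ‖ζ‖ ≤ ρ → u (G ζ) ≤ C * u (G 0))
    {G : ℂ → E} (hG : DifferentiableOn ℂ G (ball 0 1)) (hGX : MapsTo G (ball 0 1) X) (j : ℕ) :
    ∀ ζ : ℂ, ‖ζ‖ ≤ 1 - (1 - ρ) ^ j → u (G ζ) ≤ C ^ j * u (G 0) := by
  induction j with
  | zero =>
    intro ζ hζ
    have : ζ = 0 := norm_le_zero_iff.1 (by simpa using hζ)
    simp [this]
  | succ j ih =>
    intro ζ hζ
    set q : ℝ := (1 - ρ) ^ j
    have hq : 0 < q := pow_pos (by linarith) j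
    have hq1 : q ≤ 1 := pow_le_one₀ (by linarith) (by linarith)
    rw [pow_succ] at hζ
    have hlt : q * (1 - ρ) < 1 := by nlinarith
    set s : ℝ := (1 - q) / (1 - q * (1 - ρ))
    have hs0 : 0 ≤ s := div_nonneg (by linarith) (by linarith)
    have hs_mul : s * (1 - q * (1 - ρ)) = 1 - q := div_mul_cancel₀ _ (by linarith)
    have hs1 : s ≤ 1 := (div_le_one (by linarith)).2 (by nlinarith)
    have hsζ : ‖(s : ℂ) * ζ‖ ≤ 1 - q := by
      rw [norm_mul, Complex.norm_real, Real.norm_of_nonneg hs0, ← hs_mul]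
      gcongr
    have hζs : ‖(ζ - s * ζ) / q‖ ≤ ρ := by
      have : ζ - s * ζ = ((1 - s : ℝ) : ℂ) * ζ := by push_cast; ring
      rw [norm_div, this, norm_mul, Complex.norm_real, Complex.norm_real,
        Real.norm_of_nonneg (sub_nonneg.2 hs1), Real.norm_of_nonneg hq.le, div_le_iff₀ hq]
      calc (1 - s) * ‖ζ‖ ≤ (1 - s) * (1 - q * (1 - ρ)) := by gcongr
        _ = ρ * q := by linear_combination -hs_mul
    have hmaps := mapsTo_add_mul_ball hq hsζ
    have hstep := hlink (fun w => G (s * ζ + q * w)) (hG.comp (by fun_prop) hmaps)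
      (hGX.comp hmaps) _ hζs
    simp only [mul_div_cancel₀ _ (Complex.ofReal_ne_zero.2 hq.ne'), mul_zero, add_zero,
      add_sub_cancel] at hstep
    calc u (G ζ) ≤ C * u (G (s * ζ)) := hstep
      _ ≤ C * (C ^ j * u (G 0)) := by gcongr; exact ih _ hsζ
      _ = C ^ (j + 1) * u (G 0) := by ring

theorem exists_satisfiesHarnack_of_forall_norm_le (hu : ∀ w, 0 ≤ u w) (hρ : 0 < ρ)
    (hρ2 : ρ ≤ 1 / 2) (hC : 0 ≤ C)
    (hlink : ∀ G : ℂ → E, DifferentiableOn ℂ G (ball 0 1) → MapsTo G (ball 0 1) X →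
      ∀ ζ : ℂ, ‖ζ‖ ≤ ρ → u (G ζ) ≤ C * u (G 0)) :
    ∃ A : ℕ, SatisfiesHarnack u X A := by
  have hρ' : 0 < 1 - ρ := by linarith
  have hy1 : 1 < 1 / (1 - ρ) := (one_lt_div hρ').2 (by linarith)
  obtain ⟨A, hA⟩ := pow_unbounded_of_one_lt C hy1
  refine ⟨A, fun G hG hGX ζ hζ => ?_⟩
  have hdist : 0 < 1 - ‖ζ‖ := sub_pos.2 hζ
  obtain ⟨j, hj, hj'⟩ := exists_nat_pow_near (x := 1 / (1 - ‖ζ‖)) (y := 1 / (1 - ρ))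
    ((one_le_div hdist).2 (by linarith [norm_nonneg ζ])) hy1
  rw [one_div_pow, one_div_lt_one_div hdist (pow_pos hρ' _)] at hj'
  have hbase : (1 / (1 - ρ)) ^ (j + 1) ≤ 4 / (1 - ‖ζ‖ ^ 2) := by
    have hfac : 1 - ‖ζ‖ ^ 2 = (1 - ‖ζ‖) * (1 + ‖ζ‖) := by ring
    calc (1 / (1 - ρ)) ^ (j + 1) ≤ 1 / (1 - ‖ζ‖) * 2 := by
          rw [pow_succ]
          gcongr
          rw [div_le_iff₀ hρ']
          linarith
      _ ≤ 4 / (1 - ‖ζ‖ ^ 2) := by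
          rw [div_mul_eq_mul_div, one_mul, div_le_div_iff₀ hdist (by rw [hfac]; positivity), hfac]
          nlinarith
  calc u (G ζ) ≤ C ^ (j + 1) * u (G 0) :=
        apply_le_pow_mul_of_norm_le hρ (by linarith) hC hlink hG hGX (j + 1) ζ (by linarith)
    _ ≤ ((1 / (1 - ρ)) ^ A) ^ (j + 1) * u (G 0) := by gcongr; exact hu _
    _ = ((1 / (1 - ρ)) ^ (j + 1)) ^ A * u (G 0) := by rw [pow_right_comm]
    _ ≤ (4 / (1 - ‖ζ‖ ^ 2)) ^ A * u (G 0) := by gcongr; exact hu _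

end Chain

section PeakSize

variable {L : E → ℂ} {X : Set E} {p : E} {c δ : ℝ}

theorem IsPeakFunction.peakSize_le_of_forall_norm_lt (h : IsPeakFunction L X p c δ) {G : ℂ → E}
    {R : ℝ} (hR : 0 < R) (hG : DifferentiableOn ℂ G (ball 0 R)) (hGX : MapsTo G (ball 0 R) X)
    (hGδ : ∀ ζ ∈ ball (0 : ℂ) R, ‖G ζ - p‖ < δ) {ζ : ℂ} (hζ : ‖ζ‖ ≤ R / 2) :
    peakSize L p (G ζ) ≤ 3 * (1 + 1 / c) * peakSize L p (G 0) := by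
  have hc := h.c_pos
  have hζR : ζ ∈ ball (0 : ℂ) R := mem_ball_zero_iff.2 (by linarith)
  have hL : ‖L (G ζ)‖ ≤ 3 * ‖L (G 0)‖ :=
    norm_le_three_mul_of_re_nonpos hR
      ((h.contDiff.differentiable (by simp)).comp_differentiableOn hG)
      (fun w hw => (h.re_le _ (hGX hw) (hGδ w hw)).trans (neg_nonpos.2 (by positivity))) hζ
  calc peakSize L p (G ζ) ≤ ‖L (G ζ)‖ + ‖L (G ζ)‖ / c := by
        unfold peakSize; gcongr; exact h.sq_norm_sub_le (hGX hζR) (hGδ ζ hζR)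
    _ = (1 + 1 / c) * ‖L (G ζ)‖ := by ring
    _ ≤ (1 + 1 / c) * (3 * peakSize L p (G 0)) := by grw [hL, norm_le_peakSize L p]
    _ = 3 * (1 + 1 / c) * peakSize L p (G 0) := by ring

theorem IsPeakFunction.exists_satisfiesHarnack (h : IsPeakFunction L X p c δ) (hX : IsCompact X) :
    ∃ A : ℕ, SatisfiesHarnack (peakSize L p) X A := by
  obtain ⟨B, hB0, hB⟩ := hX.isBounded.exists_pos_norm_le
  obtain ⟨M, hM⟩ := hX.exists_bound_of_continuousOn h.continuous_peakSize.continuousOn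
  have hδ := h.δ_pos
  set R : ℝ := min 1 (δ / (4 * B))
  have hR0 : 0 < R := by positivity
  have hR1 : R ≤ 1 := min_le_left _ _
  have hδR : 2 * B * R ≤ δ / 2 :=
    calc 2 * B * R ≤ 2 * B * (δ / (4 * B)) := by gcongr; exact min_le_right _ _
      _ = δ / 2 := by field_simp; norm_num
  have hsub : ball (0 : ℂ) R ⊆ ball 0 1 := ball_subset_ball hR1
  have hc := h.c_pos
  refine exists_satisfiesHarnack_of_forall_norm_le (C := max (3 * (1 + 1 / c)) (M / (δ / 2) ^ 2))
    (peakSize_nonneg L p) (half_pos hR0) (by linarith) (by positivity) fun G hG hGX ζ hζ => ?_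
  have hs := peakSize_nonneg L p (G 0)
  rcases lt_or_ge ‖G 0 - p‖ (δ / 2) with hnear | hfar
  · refine (h.peakSize_le_of_forall_norm_lt hR0 (hG.mono hsub) (hGX.mono_left hsub)
      (fun w hw => ?_) hζ).trans (by gcongr; exact le_max_left _ _)
    have hw0 : ‖G w - G 0‖ ≤ 2 * B * ‖w‖ := by
      simpa using norm_sub_le_of_norm_le_ball hG (fun x hx => hB _ (hGX hx)) (hsub hw)
    have hwR : 2 * B * ‖w‖ ≤ 2 * B * R := by gcongr; exact (mem_ball_zero_iff.1 hw).le
    linarith [norm_sub_le_norm_sub_add_norm_sub (G w) (G 0) p]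
  · have hbound : peakSize L p (G ζ) ≤ M :=
      (le_abs_self _).trans (hM _ (hGX (mem_ball_zero_iff.2 (by linarith))))
    have hM0 : 0 ≤ M := (peakSize_nonneg _ _ _).trans hbound
    calc peakSize L p (G ζ) ≤ M / (δ / 2) ^ 2 * (δ / 2) ^ 2 := by
          rwa [div_mul_cancel₀ _ (by positivity)]
      _ ≤ M / (δ / 2) ^ 2 * peakSize L p (G 0) := by
          gcongr
          grw [← sq_norm_sub_le_peakSize, hfar]
      _ ≤ _ := by gcongr; exact le_max_right _ _

end PeakSize

end Harnack

section DiscComparison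

/-- A holomorphic function on the disc, bounded by `1` and of modulus at least `1 / 3` near `1 - τ`,
whose square absorbs the growth of the Harnack constant centred at `1 - τ`. -/
def boundaryWeight (τ : ℝ) (ζ : ℂ) : ℂ := τ / (1 - (1 - τ : ℝ) * ζ)

section BoundaryWeight

variable {τ : ℝ} {ζ b : ℂ}

theorem le_norm_one_sub_mul (hτ1 : τ ≤ 1) (hζ : ‖ζ‖ ≤ 1) : τ ≤ ‖1 - (1 - τ : ℝ) * ζ‖ := by
  have htri := norm_sub_norm_le (1 : ℂ) ((1 - τ : ℝ) * ζ)
  rw [norm_one, norm_mul, Complex.norm_real, Real.norm_of_nonneg (sub_nonneg.2 hτ1)] at htri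
  linarith [mul_le_of_le_one_right (sub_nonneg.2 hτ1) hζ]

theorem norm_boundaryWeight (hτ : 0 ≤ τ) (ζ : ℂ) :
    ‖boundaryWeight τ ζ‖ = τ / ‖1 - (1 - τ : ℝ) * ζ‖ := by
  rw [boundaryWeight, norm_div, Complex.norm_real, Real.norm_of_nonneg hτ]

theorem norm_boundaryWeight_le_one (hτ : 0 ≤ τ) (hτ1 : τ ≤ 1) (hζ : ‖ζ‖ ≤ 1) :
    ‖boundaryWeight τ ζ‖ ≤ 1 := by
  rw [norm_boundaryWeight hτ]
  exact div_le_one_of_le₀ (le_norm_one_sub_mul hτ1 hζ) (norm_nonneg _)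

theorem differentiableOn_boundaryWeight (hτ : 0 < τ) (hτ1 : τ ≤ 1) :
    DifferentiableOn ℂ (boundaryWeight τ) (ball 0 1) :=
  DifferentiableOn.div (by fun_prop) (by fun_prop) fun _ hζ =>
    norm_pos_iff.1 (hτ.trans_le (le_norm_one_sub_mul hτ1 (mem_ball_zero_iff.1 hζ).le))

theorem one_le_three_mul_norm_boundaryWeight (hτ : 0 < τ) (hτ1 : τ ≤ 1) (hb1 : ‖b‖ ≤ 1)
    (hb : ‖b - (1 - τ : ℝ)‖ ≤ τ / 4) : 1 ≤ 3 * ‖boundaryWeight τ b‖ := by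
  have heq : 1 - (1 - τ : ℝ) * b = (τ * (2 - τ) : ℝ) - (1 - τ : ℝ) * (b - (1 - τ : ℝ)) := by
    push_cast; ring
  rw [norm_boundaryWeight hτ.le, mul_div_assoc',
    one_le_div (hτ.trans_le (le_norm_one_sub_mul hτ1 hb1))]
  calc ‖1 - (1 - τ : ℝ) * b‖ ≤ τ * (2 - τ) + (1 - τ) * ‖b - (1 - τ : ℝ)‖ := by
        rw [heq]
        refine (norm_sub_le _ _).trans_eq ?_
        rw [norm_mul, Complex.norm_real, Complex.norm_real, Real.norm_of_nonneg (sub_nonneg.2 hτ1),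
          Real.norm_of_nonneg (mul_nonneg hτ.le (by linarith : 0 ≤ 2 - τ))]
    _ ≤ τ * (2 - τ) + 1 * (τ / 4) := by gcongr; linarith
    _ ≤ 3 * τ := by nlinarith

theorem norm_mem_Icc_of_norm_sub_le (hτ1 : τ ≤ 1) (hb : ‖b - (1 - τ : ℝ)‖ ≤ τ / 4) :
    ‖b‖ ∈ Icc (1 - 5 / 4 * τ) (1 - 3 / 4 * τ) := by
  have htri := abs_norm_sub_norm_le b (1 - τ : ℝ)
  rw [Complex.norm_real, Real.norm_of_nonneg (sub_nonneg.2 hτ1), abs_le] at htri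
  constructor <;> linarith [htri.1, htri.2]

end BoundaryWeight

theorem norm_le_mul_pow_of_growth {V : Type*} [NormedAddCommGroup V] [NormedSpace ℂ V] {f : ℂ → V}
    {τ B r : ℝ} {A q : ℕ} (hτ : 0 < τ) (hτ2 : τ ≤ 1 / 2) (hr : 0 < r) (hr4 : r ≤ 1 / 4)
    (hd : DifferentiableOn ℂ f (ball 0 1))
    (hB : ∀ ζ : ℂ, ‖ζ‖ < 1 - τ / 2 → ‖boundaryWeight τ ζ‖ ^ (2 * A) * ‖f ζ‖ ≤ 8 ^ A * B)
    (hs : ∀ ζ : ℂ, ‖ζ‖ ≤ r → ‖f ζ‖ ≤ B * r ^ q) {b : ℂ} (hb : ‖b - (1 - τ : ℝ)‖ ≤ τ / 4) :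
    ‖f b‖ ≤ 72 ^ A * (1 - τ / 4) ^ q * B := by
  set R : ℝ := 1 - τ / 2 with hR
  have hRpos : 0 < R := by linarith
  have hB0 : 0 ≤ B := nonneg_of_mul_nonneg_left ((norm_nonneg _).trans (hs 0 (by simp [hr.le])))
    (pow_pos hr q)
  obtain ⟨hb_low, hb_up⟩ := norm_mem_Icc_of_norm_sub_le (by linarith) hb
  have hkey : ‖boundaryWeight τ b ^ (2 * A) • f b‖ ≤ 8 ^ A * B * (‖b‖ / R) ^ q := by
    refine norm_le_mul_div_pow_of_differentiableOn
      (f := fun ζ => boundaryWeight τ ζ ^ (2 * A) • f ζ) hr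
      ((((differentiableOn_boundaryWeight hτ (by linarith)).pow _).smul hd).mono
        (ball_subset_ball (by linarith)))
      (fun ζ hζ => by simpa only [norm_smul, norm_pow] using hB ζ hζ) (fun ζ hζ => ?_)
      (by linarith) (by linarith)
    rw [norm_smul, norm_pow]
    calc _ ≤ 1 * (B * r ^ q) := by
          gcongr
          · exact pow_le_one₀ (norm_nonneg _)
              (norm_boundaryWeight_le_one hτ.le (by linarith) (by linarith))
          · exact hs ζ hζ.le
      _ ≤ 8 ^ A * (B * (r / R) ^ q) := by
          gcongr
          · exact one_le_pow₀ (by norm_num)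
          · exact le_div_self hr.le hRpos (by linarith)
      _ = 8 ^ A * B * (r / R) ^ q := by ring
  calc ‖f b‖ ≤ (3 * ‖boundaryWeight τ b‖) ^ (2 * A) * ‖f b‖ :=
        le_mul_of_one_le_left (norm_nonneg _) (one_le_pow₀
          (one_le_three_mul_norm_boundaryWeight hτ (by linarith) (by linarith) hb))
    _ = 3 ^ (2 * A) * ‖boundaryWeight τ b ^ (2 * A) • f b‖ := by
        rw [norm_smul, norm_pow, mul_pow, mul_assoc]
    _ ≤ 3 ^ (2 * A) * (8 ^ A * B * (1 - τ / 4) ^ q) := by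
        grw [hkey]
        gcongr
        rw [div_le_iff₀ hRpos]
        nlinarith
    _ = 72 ^ A * (1 - τ / 4) ^ q * B := by
        rw [pow_mul, show (72 : ℝ) = 3 ^ 2 * 8 by norm_num, mul_pow]; ring

variable {E : Type*} [NormedAddCommGroup E] [NormedSpace ℂ E]

namespace SatisfiesHarnack

variable {u : E → ℝ} {X : Set E} {A : ℕ} {G : ℂ → E}

theorem apply_half_le (h : SatisfiesHarnack u X A) (hG : DifferentiableOn ℂ G (ball 0 1))
    (hGX : MapsTo G (ball 0 1) X) (hu : 0 ≤ u (G 0)) : u (G (1 / 2)) ≤ 6 ^ A * u (G 0) := by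
  refine (h G hG hGX (1 / 2) (by norm_num)).trans ?_
  have hhalf : ‖(1 / 2 : ℂ)‖ = 1 / 2 := by simp
  rw [hhalf]
  gcongr
  norm_num

theorem norm_boundaryWeight_pow_mul_le (h : SatisfiesHarnack u X A)
    (hG : DifferentiableOn ℂ G (ball 0 1)) (hGX : MapsTo G (ball 0 1) X) {τ : ℝ} (hτ : 0 < τ)
    (hτ1 : τ ≤ 1) (hu : 0 ≤ u (G (1 - τ : ℝ))) {ζ : ℂ} (hζ : ‖ζ‖ < 1 - τ / 2) :
    ‖boundaryWeight τ ζ‖ ^ (2 * A) * u (G ζ) ≤ 8 ^ A * u (G (1 - τ : ℝ)) := by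
  have hζ1 : ‖ζ‖ < 1 := by linarith
  have ha : |1 - τ| < 1 := abs_lt.2 ⟨by linarith, by linarith⟩
  have ha' : |-(1 - τ)| < 1 := by rwa [abs_neg]
  have hmain := h (G ∘ moebius (1 - τ)) (hG.comp (differentiableOn_moebius ha) (mapsTo_moebius ha))
    (hGX.comp (mapsTo_moebius ha)) _ (norm_moebius_lt_one ha' hζ1)
  have h0 : moebius (1 - τ) 0 = (1 - τ : ℝ) := by simp [moebius]
  rw [comp_apply, comp_apply, moebius_moebius_neg ha hζ1, h0] at hmain
  grw [hmain, pow_mul, ← mul_assoc, ← mul_pow]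
  have hmoebius : 1 - ‖moebius (-(1 - τ)) ζ‖ ^ 2 =
      τ * (2 - τ) * (1 - ‖ζ‖ ^ 2) / ‖1 - (1 - τ : ℝ) * ζ‖ ^ 2 := by
    rw [one_sub_sq_norm_moebius ha'.le hζ1, ofReal_neg, neg_mul, ← sub_eq_add_neg]
    ring
  have hpos := hτ.trans_le (le_norm_one_sub_mul hτ1 hζ1.le)
  have hfar : τ / 2 ≤ 1 - ‖ζ‖ ^ 2 := by nlinarith [norm_nonneg ζ]
  have hfar_pos : 0 < 1 - ‖ζ‖ ^ 2 := by linarith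
  have hτ2 : 0 < 2 - τ := by linarith
  rw [norm_boundaryWeight hτ.le, hmoebius]
  gcongr ?_ ^ A * _
  calc (τ / ‖1 - (1 - τ : ℝ) * ζ‖) ^ 2 *
        (4 / (τ * (2 - τ) * (1 - ‖ζ‖ ^ 2) / ‖1 - (1 - τ : ℝ) * ζ‖ ^ 2))
      = 4 * τ / ((2 - τ) * (1 - ‖ζ‖ ^ 2)) := by field_simp
    _ ≤ 8 := by
      rw [div_le_iff₀ (by positivity)]
      nlinarith

end SatisfiesHarnack

section PeakSize

variable {L : E → ℂ} {X : Set E} {p : E} {A q : ℕ} {φ χ : ℂ → E} {τ r S : ℝ}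

theorem SatisfiesHarnack.norm_comp_sub_le_and_norm_sub_le (h : SatisfiesHarnack (peakSize L p) X A)
    (hL : Differentiable ℂ L) (hφ : DifferentiableOn ℂ φ (ball 0 1)) (hφX : MapsTo φ (ball 0 1) X)
    (hχ : DifferentiableOn ℂ χ (ball 0 1)) (hχX : MapsTo χ (ball 0 1) X) (hτ : 0 < τ)
    (hτ2 : τ ≤ 1 / 2) (hr : 0 < r) (hr4 : r ≤ 1 / 4)
    (hs : ∀ ζ : ℂ, ‖ζ‖ ≤ r → ‖φ ζ - χ ζ‖ ≤ τ * r ^ q ∧ ‖L (φ ζ) - L (χ ζ)‖ ≤ τ * r ^ q)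
    (hS : peakSize L p (φ (1 - τ : ℝ)) + peakSize L p (χ (1 - τ : ℝ)) ≤ S) (hτS : τ ≤ S) {b : ℂ}
    (hb : ‖b - (1 - τ : ℝ)‖ ≤ τ / 4) :
    ‖L (φ b) - L (χ b)‖ ≤ 72 ^ A * (1 - τ / 4) ^ q * S ∧
      ‖φ b - χ b‖ ≤ 72 ^ A * (1 - τ / 4) ^ q * (2 * √S) := by
  have hsize {ζ : ℂ} (hζ : ‖ζ‖ < 1 - τ / 2) : ‖boundaryWeight τ ζ‖ ^ (2 * A) *
      (peakSize L p (φ ζ) + peakSize L p (χ ζ)) ≤ 8 ^ A * S := by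
    grw [mul_add, h.norm_boundaryWeight_pow_mul_le hφ hφX hτ (by linarith)
      (peakSize_nonneg _ _ _) hζ, h.norm_boundaryWeight_pow_mul_le hχ hχX hτ (by linarith)
      (peakSize_nonneg _ _ _) hζ, ← mul_add, hS]
  have hτ_sqrt : τ ≤ 2 * √S := by
    have : τ ≤ √S := Real.le_sqrt_of_sq_le (by nlinarith)
    linarith
  constructor
  · refine norm_le_mul_pow_of_growth (f := fun ζ => L (φ ζ) - L (χ ζ)) hτ hτ2 hr hr4
      ((hL.comp_differentiableOn hφ).sub (hL.comp_differentiableOn hχ)) (fun ζ hζ => ?_)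
      (fun ζ hζ => by grw [(hs ζ hζ).2, hτS]) hb
    grw [norm_sub_le, norm_le_peakSize L p, norm_le_peakSize L p]
    exact hsize hζ
  · refine norm_le_mul_pow_of_growth (f := fun ζ => φ ζ - χ ζ) hτ hτ2 hr hr4 (hφ.sub hχ)
      (fun ζ hζ => ?_) (fun ζ hζ => by grw [(hs ζ hζ).1, hτ_sqrt]) hb
    have hW : ‖boundaryWeight τ ζ‖ ^ (2 * A) ≤ 1 :=
      pow_le_one₀ (norm_nonneg _) (norm_boundaryWeight_le_one hτ.le (by linarith) (by linarith))
    set W := ‖boundaryWeight τ ζ‖ ^ (2 * A)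
    have hW0 : 0 ≤ W := by positivity
    calc W * ‖φ ζ - χ ζ‖ ≤ √W * (2 * √(peakSize L p (φ ζ) + peakSize L p (χ ζ))) := by
          gcongr
          · exact Real.le_sqrt_of_sq_le (pow_le_of_le_one hW0 hW two_ne_zero)
          · exact norm_sub_le_two_mul_sqrt_peakSize L p _ _
      _ = 2 * √(W * (peakSize L p (φ ζ) + peakSize L p (χ ζ))) := by
          rw [Real.sqrt_mul hW0]; ring
      _ ≤ 2 * (√(8 ^ A) * √S) := by
          rw [← Real.sqrt_mul (by positivity)]
          gcongr 2 * √?_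
          exact hsize hζ
      _ ≤ 2 * (8 ^ A * √S) := by
          gcongr
          exact (Real.sqrt_le_left (by positivity)).2
            (le_self_pow₀ (one_le_pow₀ (by norm_num)) two_ne_zero)
      _ = 8 ^ A * (2 * √S) := by ring

end PeakSize

end DiscComparison

section AnisotropicBox

variable {E : Type*} [NormedAddCommGroup E] [InnerProductSpace ℂ E] {c₀ e ξ : E} {τ : ℝ}

/-- A point at distance about `2τ‖e‖` from the boundary point `c₀ + e` of the ball with centre `c₀`
and radius `‖e‖`. The square makes it the point with parameter `1 - τ` on the disc
`ζ ↦ c₀ + ((1 - τ) * ζ) • e`. -/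
def radialPoint (c₀ e : E) (τ : ℝ) : E := c₀ + ((1 - τ : ℝ) ^ 2 : ℂ) • e

/-- The neighbourhood of `radialPoint c₀ e τ` of size `τ` in the complex direction `e` and of size
`√τ` in the complex directions orthogonal to it. -/
def anisotropicBox (c₀ e : E) (τ : ℝ) : Set E :=
  {w | ∃ (β : ℂ) (ξ : E), ‖β - (1 - τ : ℝ) ^ 2‖ ≤ τ / 8 ∧ inner ℂ e ξ = 0 ∧
    4 * ‖ξ‖ ^ 2 ≤ τ * ‖e‖ ^ 2 ∧ w = c₀ + β • e + ξ}

theorem radialPoint_add_mem_anisotropicBox (hτ : 0 ≤ τ) (hξ : inner ℂ e ξ = 0)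
    (hξτ : 4 * ‖ξ‖ ^ 2 ≤ τ * ‖e‖ ^ 2) : radialPoint c₀ e τ + ξ ∈ anisotropicBox c₀ e τ :=
  ⟨_, ξ, by rw [sub_self, norm_zero]; positivity, hξ, hξτ, rfl⟩

theorem radialPoint_mem_anisotropicBox (c₀ e : E) (hτ : 0 ≤ τ) :
    radialPoint c₀ e τ ∈ anisotropicBox c₀ e τ := by
  simpa using radialPoint_add_mem_anisotropicBox (c₀ := c₀) hτ (inner_zero_right e)
    (by rw [norm_zero, zero_pow two_ne_zero, mul_zero]; positivity)

theorem radialPoint_add_smul_mem_anisotropicBox (hτ : 0 ≤ τ) {ζ : ℂ} (hζ : ‖ζ‖ ≤ τ / 8) :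
    radialPoint c₀ e τ + ζ • e ∈ anisotropicBox c₀ e τ :=
  ⟨(1 - τ : ℝ) ^ 2 + ζ, 0, by rwa [add_sub_cancel_left], inner_zero_right e,
    by rw [norm_zero, zero_pow two_ne_zero, mul_zero]; positivity,
    by rw [radialPoint, add_smul, add_zero, add_assoc]⟩

theorem add_smul_add_mem_ball (he : e ≠ 0) (hτ : 0 < τ) (hτ1 : τ < 1) {β : ℂ} (hβ : ‖β‖ ≤ 1 - τ)
    (hξ : inner ℂ e ξ = 0) (hξτ : ‖ξ‖ ^ 2 ≤ τ * ‖e‖ ^ 2) : c₀ + β • e + ξ ∈ ball c₀ ‖e‖ := by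
  have he0 : 0 < ‖e‖ ^ 2 := pow_pos (norm_pos_iff.2 he) 2
  have hpyth : ‖β • e + ξ‖ ^ 2 = ‖β‖ ^ 2 * ‖e‖ ^ 2 + ‖ξ‖ ^ 2 := by
    rw [@norm_add_sq ℂ, inner_smul_left, hξ, norm_smul, mul_pow]
    simp
  rw [mem_ball_iff_norm, add_assoc, add_sub_cancel_left]
  refine lt_of_pow_lt_pow_left₀ 2 (norm_nonneg _) ?_
  calc ‖β • e + ξ‖ ^ 2 ≤ (1 - τ) ^ 2 * ‖e‖ ^ 2 + τ * ‖e‖ ^ 2 := by rw [hpyth]; gcongr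
    _ < ‖e‖ ^ 2 := by nlinarith [mul_pos (mul_pos hτ (sub_pos.2 hτ1)) he0]

theorem norm_sq_one_sub (hτ1 : τ ≤ 1) : ‖((1 - τ : ℝ) ^ 2 : ℂ)‖ = (1 - τ) ^ 2 := by
  rw [norm_pow, Complex.norm_real, Real.norm_of_nonneg (sub_nonneg.2 hτ1)]

theorem anisotropicBox_subset_ball (he : e ≠ 0) (hτ : 0 < τ) (hτ2 : τ ≤ 1 / 2) :
    anisotropicBox c₀ e τ ⊆ ball c₀ ‖e‖ := by
  rintro _ ⟨β, ξ, hβ, hξ, hξτ, rfl⟩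
  refine add_smul_add_mem_ball he hτ (by linarith) ?_ hξ (by linarith [sq_nonneg ‖ξ‖])
  have htri := norm_sub_norm_le β ((1 - τ : ℝ) ^ 2)
  rw [norm_sq_one_sub (by linarith)] at htri
  nlinarith

theorem radialPoint_mem_ball (he : e ≠ 0) (hτ : 0 < τ) (hτ2 : τ ≤ 1 / 2) :
    radialPoint c₀ e τ ∈ ball c₀ ‖e‖ :=
  anisotropicBox_subset_ball he hτ hτ2 (radialPoint_mem_anisotropicBox c₀ e hτ.le)

/-- The disc in the direction `e`, displaced by `ξ`, which passes through
`radialPoint c₀ e τ + ξ` at the parameter `1 - τ`. -/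
def displacedDisc (c₀ e ξ : E) (τ : ℝ) (ζ : ℂ) : E := c₀ + ((1 - τ : ℝ) * ζ) • e + ξ

theorem differentiable_displacedDisc : Differentiable ℂ (displacedDisc c₀ e ξ τ) := by
  unfold displacedDisc
  fun_prop

theorem displacedDisc_one_sub :
    displacedDisc c₀ e ξ τ (1 - τ : ℝ) = radialPoint c₀ e τ + ξ := by
  simp only [displacedDisc, radialPoint, pow_two]

theorem mapsTo_displacedDisc (he : e ≠ 0) (hτ : 0 < τ) (hτ1 : τ < 1) (hξ : inner ℂ e ξ = 0)
    (hξτ : 4 * ‖ξ‖ ^ 2 ≤ τ * ‖e‖ ^ 2) :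
    MapsTo (displacedDisc c₀ e ξ τ) (ball 0 1) (ball c₀ ‖e‖) := by
  intro ζ hζ
  have hτ' : 0 ≤ 1 - τ := by linarith
  refine add_smul_add_mem_ball he hτ hτ1 ?_ hξ (by linarith [sq_nonneg ‖ξ‖])
  rw [norm_mul, Complex.norm_real, Real.norm_of_nonneg hτ']
  exact mul_le_of_le_one_right hτ' (mem_ball_zero_iff.1 hζ).le

theorem norm_displacedDisc_sub_le {r : ℝ} (hr : 0 ≤ r) (hτ : 0 ≤ τ) (hτ1 : τ ≤ 1) (hτr : τ ≤ r ^ 2)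
    (hξτ : 4 * ‖ξ‖ ^ 2 ≤ τ * ‖e‖ ^ 2) {ζ : ℂ} (hζ : ‖ζ‖ ≤ r) :
    ‖displacedDisc c₀ e ξ τ ζ - c₀‖ ≤ 2 * r * ‖e‖ := by
  have hξr : ‖ξ‖ ≤ r * ‖e‖ := by
    refine le_of_sq_le_sq ?_ (mul_nonneg hr (norm_nonneg e))
    have : τ * ‖e‖ ^ 2 ≤ r ^ 2 * ‖e‖ ^ 2 := by gcongr
    rw [mul_pow]
    linarith [sq_nonneg ‖ξ‖]
  have hζr : ‖((1 - τ : ℝ) * ζ : ℂ) • e‖ ≤ 1 * r * ‖e‖ := by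
    rw [norm_smul, norm_mul, Complex.norm_real, Real.norm_of_nonneg (sub_nonneg.2 hτ1)]
    gcongr
    linarith
  rw [displacedDisc, add_assoc, add_sub_cancel_left]
  linarith [norm_add_le (((1 - τ : ℝ) * ζ : ℂ) • e) ξ]

end AnisotropicBox

section Comparison

variable {E : Type*} [NormedAddCommGroup E] [InnerProductSpace ℂ E] {L : E → ℂ} {X : Set E}
  {p c₀ e : E} {f g : E → E} {A q : ℕ} {τ r : ℝ}

theorem SatisfiesHarnack.apply_radialPoint_add_le {u : E → ℝ} (h : SatisfiesHarnack u X A)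
    (hf : DifferentiableOn ℂ f (ball c₀ ‖e‖)) (hfX : MapsTo f (ball c₀ ‖e‖) X) (hu : ∀ w, 0 ≤ u w)
    (he : e ≠ 0) (hτ : 0 < τ) (hτ2 : τ ≤ 1 / 2) {ξ : E} (hξ : inner ℂ e ξ = 0)
    (hξτ : 4 * ‖ξ‖ ^ 2 ≤ τ * ‖e‖ ^ 2) :
    u (f (radialPoint c₀ e τ + ξ)) ≤ 6 ^ A * u (f (radialPoint c₀ e τ)) := by
  have hmaps : MapsTo (fun ζ : ℂ => radialPoint c₀ e τ + ζ • (2 : ℂ) • ξ) (ball 0 1)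
      (ball c₀ ‖e‖) := by
    intro ζ hζ
    refine add_smul_add_mem_ball he hτ (by linarith) ?_ ?_ ?_
    · rw [norm_sq_one_sub (by linarith)]
      nlinarith
    · rw [inner_smul_right, inner_smul_right, hξ, mul_zero, mul_zero]
    · rw [norm_smul, norm_smul, Complex.norm_ofNat]
      calc (‖ζ‖ * (2 * ‖ξ‖)) ^ 2 ≤ (1 * (2 * ‖ξ‖)) ^ 2 := by
            gcongr
            exact (mem_ball_zero_iff.1 hζ).le
        _ = 4 * ‖ξ‖ ^ 2 := by ring
        _ ≤ τ * ‖e‖ ^ 2 := hξτ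
  simpa [smul_smul] using
    h.apply_half_le (hf.comp (by fun_prop) hmaps) (hfX.comp hmaps) (hu _)

/-- `f` and `g` map the ball with centre `c₀` and radius `‖e‖` holomorphically to `X`, and agree up
to `τ * r ^ q` on the concentric ball of radius `2 * r * ‖e‖`, also after composition with `L`. -/
structure IsCloseNearCenter (L : E → ℂ) (X : Set E) (c₀ e : E) (f g : E → E) (τ r : ℝ) (q : ℕ) :
    Prop where
  differentiableOn_left : DifferentiableOn ℂ f (ball c₀ ‖e‖)
  mapsTo_left : MapsTo f (ball c₀ ‖e‖) X
  differentiableOn_right : DifferentiableOn ℂ g (ball c₀ ‖e‖)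
  mapsTo_right : MapsTo g (ball c₀ ‖e‖) X
  τ_pos : 0 < τ
  τ_le : τ ≤ r ^ 2
  r_pos : 0 < r
  r_le : r ≤ 1 / 4
  norm_sub_le : ∀ w, ‖w - c₀‖ ≤ 2 * r * ‖e‖ →
    ‖f w - g w‖ ≤ τ * r ^ q ∧ ‖L (f w) - L (g w)‖ ≤ τ * r ^ q

theorem IsCloseNearCenter.τ_le_half (hfg : IsCloseNearCenter L X c₀ e f g τ r q) : τ ≤ 1 / 2 := by
  nlinarith [hfg.τ_le, hfg.r_le, hfg.r_pos]

theorem SatisfiesHarnack.norm_sub_le_of_mem_anisotropicBox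
    (h : SatisfiesHarnack (peakSize L p) X A) (hL : Differentiable ℂ L)
    (hfg : IsCloseNearCenter L X c₀ e f g τ r q) (he : e ≠ 0) {S : ℝ}
    (hS : 6 ^ A * (peakSize L p (f (radialPoint c₀ e τ)) + peakSize L p (g (radialPoint c₀ e τ))) ≤
      S) (hτS : τ ≤ S) {w : E} (hw : w ∈ anisotropicBox c₀ e τ) :
    ‖L (f w) - L (g w)‖ ≤ 72 ^ A * (1 - τ / 4) ^ q * S ∧
      ‖f w - g w‖ ≤ 72 ^ A * (1 - τ / 4) ^ q * (2 * √S) := by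
  obtain ⟨β, ξ, hβ, hξ, hξτ, rfl⟩ := hw
  have hτ := hfg.τ_pos
  have hτ2 := hfg.τ_le_half
  have hτ' : 0 < 1 - τ := by linarith
  have hτ'' : ((1 - τ : ℝ) : ℂ) ≠ 0 := Complex.ofReal_ne_zero.2 hτ'.ne'
  set ψ := displacedDisc c₀ e ξ τ
  have hψd : DifferentiableOn ℂ ψ (ball 0 1) := differentiable_displacedDisc.differentiableOn
  have hψm : MapsTo ψ (ball 0 1) (ball c₀ ‖e‖) :=
    mapsTo_displacedDisc he hτ (by linarith) hξ hξτ
  have hψβ : ψ (β / (1 - τ : ℝ)) = c₀ + β • e + ξ := by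
    simp only [ψ, displacedDisc, mul_div_cancel₀ _ hτ'']
  have hb : ‖β / (1 - τ : ℝ) - (1 - τ : ℝ)‖ ≤ τ / 4 := by
    rw [div_sub' hτ'', ← pow_two, norm_div, Complex.norm_real, Real.norm_of_nonneg hτ'.le,
      div_le_iff₀ hτ']
    nlinarith
  have hsum : peakSize L p (f (displacedDisc c₀ e ξ τ (1 - τ : ℝ))) +
      peakSize L p (g (displacedDisc c₀ e ξ τ (1 - τ : ℝ))) ≤ S := by
    rw [displacedDisc_one_sub]
    grw [h.apply_radialPoint_add_le hfg.differentiableOn_left hfg.mapsTo_left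
      (peakSize_nonneg L p) he hτ hτ2 hξ hξτ, h.apply_radialPoint_add_le hfg.differentiableOn_right
      hfg.mapsTo_right (peakSize_nonneg L p) he hτ hτ2 hξ hξτ, ← mul_add, hS]
  rw [← hψβ]
  exact h.norm_comp_sub_le_and_norm_sub_le hL (hfg.differentiableOn_left.comp hψd hψm)
    (hfg.mapsTo_left.comp hψm) (hfg.differentiableOn_right.comp hψd hψm)
    (hfg.mapsTo_right.comp hψm) hτ hτ2 hfg.r_pos hfg.r_le
    (fun ζ hζ => hfg.norm_sub_le _ (norm_displacedDisc_sub_le hfg.r_pos.le hτ.le (by linarith)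
      hfg.τ_le hξτ hζ)) hsum hτS hb

end Comparison

section SmallComparison

theorem exists_forall_mul_one_sub_pow_le {a t : ℝ} (ha : 0 ≤ a) (ht : 0 < t) :
    ∃ M > 0, ∀ (τ : ℝ) (q : ℕ), τ ≤ 1 → M ≤ q * τ → a * (1 - τ / 4) ^ q ≤ t := by
  have hlim : Tendsto (fun M : ℝ => a * Real.exp (-(M / 4))) atTop (𝓝 (a * 0)) :=
    (Real.tendsto_exp_neg_atTop_nhds_zero.comp
      (tendsto_id.atTop_div_const (by norm_num))).const_mul _
  obtain ⟨M, hM0, hM⟩ := ((eventually_gt_atTop (0 : ℝ)).and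
    (hlim.eventually (eventually_lt_nhds (by rwa [mul_zero])))).exists
  refine ⟨M, hM0, fun τ q hτ1 hq => hM.le.trans' ?_⟩
  gcongr
  calc (1 - τ / 4) ^ q ≤ Real.exp (-(τ / 4)) ^ q :=
        pow_le_pow_left₀ (by linarith) (Real.one_sub_le_exp_neg _) q
    _ = Real.exp (-(q * τ / 4)) := by rw [← Real.exp_nat_mul]; ring_nf
    _ ≤ _ := by gcongr

theorem peakSize_le_of_norm_sub_le {E : Type*} [NormedAddCommGroup E] {L : E → ℂ} {p v w : E}
    {t S : ℝ} (ht : 0 ≤ t) (ht1 : t ≤ 1) (hS : 0 ≤ S) (hL : ‖L v - L w‖ ≤ t * S)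
    (hvw : ‖v - w‖ ≤ t * (2 * √S)) : peakSize L p w ≤ 2 * peakSize L p v + 9 * (t * S) := by
  have hLw : ‖L w‖ ≤ ‖L v‖ + t * S := by
    linarith [norm_sub_norm_le (L w) (L v), norm_sub_rev (L w) (L v)]
  have hwp : ‖w - p‖ ^ 2 ≤ 2 * ‖v - p‖ ^ 2 + 8 * (t * S) :=
    calc ‖w - p‖ ^ 2 ≤ (t * (2 * √S) + ‖v - p‖) ^ 2 := by
          gcongr
          grw [norm_sub_le_norm_sub_add_norm_sub w v p, norm_sub_rev w v, hvw]
      _ ≤ 2 * ((t * (2 * √S)) ^ 2 + ‖v - p‖ ^ 2) := add_sq_le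
      _ = 2 * ‖v - p‖ ^ 2 + 8 * (t ^ 2 * S) := by
          rw [mul_pow, mul_pow, Real.sq_sqrt hS]; ring
      _ ≤ 2 * ‖v - p‖ ^ 2 + 8 * (t * S) := by gcongr; exact pow_le_of_le_one ht ht1 two_ne_zero
  unfold peakSize
  linarith [norm_nonneg (L v)]

variable {E : Type*} [NormedAddCommGroup E] [InnerProductSpace ℂ E] {L : E → ℂ} {X : Set E}
  {p c₀ e : E} {f g : E → E} {A q : ℕ} {τ r : ℝ}

-- A factor this small lets the right-hand side of the comparison be absorbed.
theorem SatisfiesHarnack.peakSize_radialPoint_le (h : SatisfiesHarnack (peakSize L p) X A)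
    (hL : Differentiable ℂ L) (hfg : IsCloseNearCenter L X c₀ e f g τ r q) (he : e ≠ 0)
    (ht : 72 ^ A * (1 - τ / 4) ^ q ≤ 1 / (18 * 6 ^ A)) :
    peakSize L p (g (radialPoint c₀ e τ)) ≤ 5 * peakSize L p (f (radialPoint c₀ e τ)) + τ := by
  set x := peakSize L p (f (radialPoint c₀ e τ))
  set y := peakSize L p (g (radialPoint c₀ e τ))
  set t : ℝ := 72 ^ A * (1 - τ / 4) ^ q
  have hx : 0 ≤ x := peakSize_nonneg _ _ _
  have hy : 0 ≤ y := peakSize_nonneg _ _ _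
  have hτ := hfg.τ_pos
  have hC : (1 : ℝ) ≤ 6 ^ A := one_le_pow₀ (by norm_num)
  have ht0 : 0 ≤ t := mul_nonneg (by positivity) (pow_nonneg (by linarith [hfg.τ_le_half]) q)
  rw [le_div_iff₀ (by positivity)] at ht
  have ht1 : 18 * t ≤ 1 := by nlinarith
  obtain ⟨hL', hvw⟩ := h.norm_sub_le_of_mem_anisotropicBox hL hfg he (S := 6 ^ A * (x + y) + τ)
    (by linarith) (le_add_of_nonneg_left (by positivity))
    (radialPoint_mem_anisotropicBox c₀ e hτ.le)
  have hyx := peakSize_le_of_norm_sub_le (p := p) ht0 (by linarith) (by positivity) hL' hvw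
  have hS : 18 * (t * (6 ^ A * (x + y) + τ)) ≤ (x + y) + τ := by
    calc _ = t * (18 * 6 ^ A) * (x + y) + 18 * t * τ := by ring
      _ ≤ 1 * (x + y) + 1 * τ := by gcongr
      _ = x + y + τ := by ring
  linarith

theorem SatisfiesHarnack.exists_forall_mem_anisotropicBox_norm_sub_le
    (h : SatisfiesHarnack (peakSize L p) X A) (hL : Differentiable ℂ L) {K ϑ : ℝ} (hK : 0 ≤ K)
    (hϑ : 0 < ϑ) :
    ∃ M > 0, ∀ {c₀ e : E} {f g : E → E} {τ r : ℝ} {q : ℕ}, e ≠ 0 →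
      IsCloseNearCenter L X c₀ e f g τ r q → M ≤ q * τ →
      peakSize L p (f (radialPoint c₀ e τ)) ≤ K * τ →
      ∀ w ∈ anisotropicBox c₀ e τ, ‖L (f w) - L (g w)‖ ≤ ϑ * τ ∧ ‖f w - g w‖ ≤ ϑ * √τ := by
  set C : ℝ := 6 ^ A * (6 * K + 1) + 1
  have hC1 : 1 ≤ C := le_add_of_nonneg_left (by positivity)
  obtain ⟨M, hM0, hM⟩ := exists_forall_mul_one_sub_pow_le (a := 72 ^ A)
    (t := min (1 / (18 * 6 ^ A)) (ϑ / (2 * C))) (by positivity) (by positivity)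
  refine ⟨M, hM0, fun {c₀ e f g τ r q} he hfg hq hx w hw => ?_⟩
  have hτ := hfg.τ_pos
  have ht := hM τ q (by linarith [hfg.τ_le_half]) hq
  have hy := h.peakSize_radialPoint_le hL hfg he (ht.trans (min_le_left _ _))
  have ht0 : 0 ≤ 72 ^ A * (1 - τ / 4) ^ q :=
    mul_nonneg (by positivity) (pow_nonneg (by linarith [hfg.τ_le_half]) q)
  replace ht := (le_div_iff₀ (by positivity)).1 (ht.trans (min_le_right _ _))
  set t : ℝ := 72 ^ A * (1 - τ / 4) ^ q
  obtain ⟨hLw, hw⟩ := h.norm_sub_le_of_mem_anisotropicBox hL hfg he (S := C * τ)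
    (by
      grw [hy, hx]
      linarith)
    (le_mul_of_one_le_left hτ.le hC1) hw
  constructor
  · calc _ ≤ t * (C * τ) := hLw
      _ = t * C * τ := by ring
      _ ≤ ϑ * τ := by gcongr; linarith [mul_nonneg ht0 (zero_le_one.trans hC1)]
  · calc _ ≤ t * (2 * √(C * τ)) := hw
      _ = t * (2 * √C) * √τ := by rw [Real.sqrt_mul (by positivity)]; ring
      _ ≤ t * (2 * C) * √τ := by gcongr; exact (Real.sqrt_le_left (by positivity)).2 (by nlinarith)
      _ ≤ ϑ * √τ := by gcongr

end SmallComparison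

section AnisotropicLinearAlgebra

variable {E : Type*} [NormedAddCommGroup E] [InnerProductSpace ℂ E] {e : E}

theorem exists_eq_smul_add_of_inner_eq_zero (he : e ≠ 0) (v : E) :
    ∃ (α : ℂ) (u : E), v = α • e + u ∧ inner ℂ e u = 0 ∧ ‖u‖ ≤ ‖v‖ := by
  have hee : inner ℂ e e ≠ 0 := inner_self_ne_zero.2 he
  set α : ℂ := inner ℂ e v / inner ℂ e e
  have horth : inner ℂ e (v - α • e) = 0 := by
    rw [inner_sub_right, inner_smul_right, div_mul_cancel₀ _ hee, sub_self]
  refine ⟨α, v - α • e, by abel, horth, le_of_sq_le_sq ?_ (norm_nonneg v)⟩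
  have hpyth : ‖α • e + (v - α • e)‖ ^ 2 = ‖α • e‖ ^ 2 + ‖v - α • e‖ ^ 2 := by
    rw [@norm_add_sq ℂ, inner_smul_left, horth]
    simp
  rw [add_sub_cancel] at hpyth
  linarith [sq_nonneg ‖α • e‖]

theorem norm_coeff_le_of_apply_eq_zero {E : Type*} [NormedAddCommGroup E] [NormedSpace ℂ E]
    {φ χ : E →L[ℂ] ℂ} {e u : E} {α : ℂ} {c C s : ℝ} (hc : 0 < c) (hχ : χ (α • e + u) = 0)
    (hφe : c ≤ ‖φ e‖) (hφu : ‖φ u‖ ≤ C * s * ‖u‖) (hde : ‖(φ - χ) e‖ ≤ c / 2)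
    (hdu : ‖(φ - χ) u‖ ≤ s * ‖u‖) : ‖α‖ ≤ 2 * (C + 1) / c * s * ‖u‖ := by
  have hφ : α * φ e = α * (φ - χ) e + (φ - χ) u - φ u := by
    simp only [_root_.sub_apply, map_add, map_smul, smul_eq_mul] at hχ ⊢
    linear_combination hχ
  have hα : ‖α‖ * c ≤ ‖α‖ * (c / 2) + s * ‖u‖ + C * s * ‖u‖ :=
    calc ‖α‖ * c ≤ ‖α * φ e‖ := by rw [norm_mul]; gcongr
      _ ≤ ‖α * (φ - χ) e‖ + ‖(φ - χ) u‖ + ‖φ u‖ := by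
        grw [hφ, norm_sub_le, norm_add_le]
      _ ≤ ‖α‖ * (c / 2) + s * ‖u‖ + C * s * ‖u‖ := by rw [norm_mul]; gcongr
  calc ‖α‖ ≤ (C + 1) * s * ‖u‖ / (c / 2) := by
        rw [le_div_iff₀ (half_pos hc)]
        linarith
    _ = 2 * (C + 1) / c * s * ‖u‖ := by field_simp

-- On the kernel of `S`, `φ` bounds the component along `e` by that orthogonal to `e`, and then `T`
-- bounds the latter by a small multiple of itself.
theorem exists_injective_of_anisotropic_estimates (he : e ≠ 0) {c C : ℝ} (hc : 0 < c)
    (hC : 0 ≤ C) :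
    ∃ η > 0, ∀ {T S : E →L[ℂ] E} {φ χ : E →L[ℂ] ℂ} {s : ℝ}, 0 < s →
      (∀ v, ‖v‖ / 2 ≤ ‖T v‖) → (∀ v, S v = 0 → χ v = 0) →
      c ≤ ‖φ e‖ → (∀ v, inner ℂ e v = 0 → ‖φ v‖ ≤ C * s * ‖v‖) →
      ‖(φ - χ) e‖ ≤ η → (∀ v, inner ℂ e v = 0 → ‖(φ - χ) v‖ ≤ η * s * ‖v‖) →
      ‖(T - S) e‖ ≤ η / s → (∀ v, inner ℂ e v = 0 → ‖(T - S) v‖ ≤ η * ‖v‖) → Injective S := by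
  set D : ℝ := 2 * (C + 1) / c + 1
  set η : ℝ := min (min 1 (c / 2)) (1 / (4 * D))
  have hD : 0 < D := by positivity
  have hη : 0 < η := by positivity
  have hη1 : η ≤ 1 := (min_le_left _ _).trans (min_le_left _ _)
  have hηD : η * D ≤ 1 / 4 := by
    calc η * D ≤ 1 / (4 * D) * D := by gcongr; exact min_le_right _ _
      _ = 1 / 4 := by field_simp
  refine ⟨η, hη, fun {T S φ χ s} hs hT hker hφe hφv hde hdv hTe hTv => ?_⟩
  refine (injective_iff_map_eq_zero S).2 fun v hv => ?_
  obtain ⟨α, u, hvu, heu, huv⟩ := exists_eq_smul_add_of_inner_eq_zero he v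
  have hα : ‖α‖ ≤ 2 * (C + 1) / c * s * ‖u‖ :=
    norm_coeff_le_of_apply_eq_zero hc (hvu ▸ hker v hv) hφe (hφv u heu)
      (hde.trans ((min_le_left _ _).trans (min_le_right _ _)))
      ((hdv u heu).trans (by gcongr; exact mul_le_of_le_one_left hs.le hη1))
  have hu : ‖u‖ / 2 ≤ η * D * ‖u‖ := by
    calc ‖u‖ / 2 ≤ ‖T v‖ := by grw [huv, hT v]
      _ = ‖α • (T - S) e + (T - S) u‖ := by
        rw [← map_smul, ← map_add, ← hvu, _root_.sub_apply, hv, sub_zero]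
      _ ≤ ‖α‖ * (η / s) + η * ‖u‖ := by grw [norm_add_le, norm_smul, hTe, hTv u heu]
      _ ≤ 2 * (C + 1) / c * s * ‖u‖ * (η / s) + η * ‖u‖ := by gcongr
      _ = η * D * ‖u‖ := by simp only [D]; field_simp
  have hu0 : u = 0 := norm_le_zero_iff.1 (by nlinarith [norm_nonneg u])
  rw [hu0, norm_zero, mul_zero] at hα
  rw [hvu, hu0, norm_le_zero_iff.1 hα, zero_smul, add_zero]

end AnisotropicLinearAlgebra

section AnisotropicCauchyEstimates

variable {E V : Type*} [NormedAddCommGroup E] [InnerProductSpace ℂ E] [NormedAddCommGroup V]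
  [NormedSpace ℂ V] {G : E → V} {c₀ e v : E} {τ B : ℝ}

theorem norm_fderiv_radialPoint_apply_le (he : e ≠ 0) (hd : DifferentiableOn ℂ G (ball c₀ ‖e‖))
    (hτ : 0 < τ) (hτ2 : τ ≤ 1 / 2)
    (hB : ∀ ξ, inner ℂ e ξ = 0 → 4 * ‖ξ‖ ^ 2 ≤ τ * ‖e‖ ^ 2 → ‖G (radialPoint c₀ e τ + ξ)‖ ≤ B)
    (hv : inner ℂ e v = 0) :
    ‖fderiv ℂ G (radialPoint c₀ e τ) v‖ ≤ 4 * B / ‖e‖ / √τ * ‖v‖ := by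
  have : 0 < ‖e‖ := norm_pos_iff.2 he
  rcases eq_or_ne v 0 with rfl | hv0
  · simp
  have : 0 < ‖v‖ := norm_pos_iff.2 hv0
  have hξ (ζ : ℂ) (hζ : ‖ζ‖ < √τ * ‖e‖ / (2 * ‖v‖)) :
      inner ℂ e (ζ • v) = 0 ∧ 4 * ‖ζ • v‖ ^ 2 ≤ τ * ‖e‖ ^ 2 := by
    refine ⟨by rw [inner_smul_right, hv, mul_zero], ?_⟩
    rw [lt_div_iff₀ (by positivity)] at hζ
    rw [norm_smul]
    calc 4 * (‖ζ‖ * ‖v‖) ^ 2 = (‖ζ‖ * (2 * ‖v‖)) ^ 2 := by ring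
      _ ≤ (√τ * ‖e‖) ^ 2 := by gcongr
      _ = τ * ‖e‖ ^ 2 := by rw [mul_pow, Real.sq_sqrt hτ.le]
  refine (norm_fderiv_apply_le_of_norm_le_disc (r := √τ * ‖e‖ / (2 * ‖v‖)) (by positivity)
    (fun ζ hζ => ?_) (fun ζ hζ => hB _ (hξ ζ hζ).1 (hξ ζ hζ).2)).trans_eq ?_
  · exact hd.differentiableAt (isOpen_ball.mem_nhds (anisotropicBox_subset_ball he hτ hτ2
      (radialPoint_add_mem_anisotropicBox hτ.le (hξ ζ hζ).1 (hξ ζ hζ).2)))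
  · field_simp
    ring

theorem norm_fderiv_radialPoint_apply_self_le (he : e ≠ 0)
    (hd : DifferentiableOn ℂ G (ball c₀ ‖e‖)) (hτ : 0 < τ) (hτ2 : τ ≤ 1 / 2)
    (hB : ∀ w ∈ anisotropicBox c₀ e τ, ‖G w‖ ≤ B) :
    ‖fderiv ℂ G (radialPoint c₀ e τ) e‖ ≤ 16 * B / τ := by
  have hbox (ζ : ℂ) (hζ : ‖ζ‖ < τ / 8) := radialPoint_add_smul_mem_anisotropicBox (c₀ := c₀)
    (e := e) hτ.le hζ.le
  refine (norm_fderiv_apply_le_of_norm_le_disc (r := τ / 8) (by positivity)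
    (fun ζ hζ => hd.differentiableAt (isOpen_ball.mem_nhds
      (anisotropicBox_subset_ball he hτ hτ2 (hbox ζ hζ)))) fun ζ hζ => hB _ (hbox ζ hζ)).trans_eq ?_
  field_simp
  ring

variable {F : E → V}

theorem norm_fderiv_sub_radialPoint_le {η : ℝ} (hη : 0 ≤ η) (hB : 0 ≤ B) (he : e ≠ 0)
    (hF : DifferentiableOn ℂ F (ball c₀ ‖e‖)) (hG : DifferentiableOn ℂ G (ball c₀ ‖e‖)) (hτ : 0 < τ)
    (hτ2 : τ ≤ 1 / 2)
    (hFG : ∀ w ∈ anisotropicBox c₀ e τ, ‖F w - G w‖ ≤ η * min (1 / 16) (‖e‖ / 4) * B) :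
    ‖(fderiv ℂ F (radialPoint c₀ e τ) - fderiv ℂ G (radialPoint c₀ e τ)) e‖ ≤ η * (B / τ) ∧
      ∀ v, inner ℂ e v = 0 → ‖(fderiv ℂ F (radialPoint c₀ e τ) -
        fderiv ℂ G (radialPoint c₀ e τ)) v‖ ≤ η * (B / √τ) * ‖v‖ := by
  have : 0 < ‖e‖ := norm_pos_iff.2 he
  have hnhds := isOpen_ball.mem_nhds (radialPoint_mem_ball (c₀ := c₀) he hτ hτ2)
  rw [← fderiv_sub (hF.differentiableAt hnhds) (hG.differentiableAt hnhds)]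
  constructor
  · calc _ ≤ 16 * (η * min (1 / 16) (‖e‖ / 4) * B) / τ :=
          norm_fderiv_radialPoint_apply_self_le he (hF.sub hG) hτ hτ2 hFG
      _ ≤ 16 * (η * (1 / 16) * B) / τ := by gcongr; exact min_le_left _ _
      _ = η * (B / τ) := by ring
  · intro v hv
    calc _ ≤ 4 * (η * min (1 / 16) (‖e‖ / 4) * B) / ‖e‖ / √τ * ‖v‖ :=
          norm_fderiv_radialPoint_apply_le he (hF.sub hG) hτ hτ2
            (fun ξ hξ hξτ => hFG _ (radialPoint_add_mem_anisotropicBox hτ.le hξ hξτ)) hv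
      _ ≤ 4 * (η * (‖e‖ / 4) * B) / ‖e‖ / √τ * ‖v‖ := by gcongr; exact min_le_right _ _
      _ = η * (B / √τ) * ‖v‖ := by field_simp

end AnisotropicCauchyEstimates

section NearIdentity

variable {E : Type*} [NormedAddCommGroup E]

section Normed

variable [NormedSpace ℂ E]

theorem half_norm_le_norm_fderiv {f : E → E} {z : E} {r ε : ℝ} (hr : 0 < r)
    (hd : DifferentiableOn ℂ f (ball z r)) (hε : 4 * ε ≤ r)
    (hB : ∀ w ∈ ball z r, ‖f w - w‖ ≤ ε) (v : E) : ‖v‖ / 2 ≤ ‖fderiv ℂ f z v‖ := by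
  have hsub := norm_fderiv_le_of_norm_le_ball hr (hd.sub differentiableOn_id) hB
  rw [fderiv_sub (hd.differentiableAt (ball_mem_nhds z hr)) differentiableAt_id, fderiv_id] at hsub
  have hv : ‖v - fderiv ℂ f z v‖ ≤ 1 / 2 * ‖v‖ :=
    calc ‖v - fderiv ℂ f z v‖ = ‖(fderiv ℂ f z - ContinuousLinearMap.id ℂ E) v‖ := norm_sub_rev _ _
      _ ≤ 2 * ε / r * ‖v‖ := ContinuousLinearMap.le_of_opNorm_le _ hsub v
      _ ≤ 1 / 2 * ‖v‖ := by
        gcongr ?_ * _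
        rw [div_le_iff₀ hr]
        linarith
  linarith [norm_sub_norm_le v (fderiv ℂ f z v)]

theorem norm_fderiv_sub_apply_le {L : E → ℂ} {X : Set E} {f : E → E} {K : NNReal} {z e : E}
    {τ ε : ℝ} (hK : LipschitzOnWith K L X) (hL : Differentiable ℂ L) (hτ : 0 < τ)
    (hf : DifferentiableOn ℂ f (ball z (τ * ‖e‖))) (hfX : MapsTo f (ball z (τ * ‖e‖)) X)
    (hzX : ball z (τ * ‖e‖) ⊆ X) (he : e ≠ 0) (hdrift : ∀ w ∈ ball z (τ * ‖e‖), ‖f w - w‖ ≤ ε * τ) :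
    ‖fderiv ℂ (L ∘ f) z e - fderiv ℂ L z e‖ ≤ 2 * K * ε := by
  have : 0 < ‖e‖ := norm_pos_iff.2 he
  have hmem (ζ : ℂ) (hζ : ‖ζ‖ < τ) : z + ζ • e ∈ ball z (τ * ‖e‖) := by
    rw [mem_ball_iff_norm, add_sub_cancel_left, norm_smul]
    gcongr
  have hLf (w : E) (hw : w ∈ ball z (τ * ‖e‖)) : DifferentiableAt ℂ (L ∘ f) w :=
    (hL _).comp w (hf.differentiableAt (isOpen_ball.mem_nhds hw))
  rw [← _root_.sub_apply,
    ← fderiv_sub (hLf z (mem_ball_self (by positivity))) (hL z)]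
  refine (norm_fderiv_apply_le_of_norm_le_disc (B := K * (ε * τ)) hτ
    (fun ζ hζ => (hLf _ (hmem ζ hζ)).sub (hL _)) fun ζ hζ => ?_).trans_eq (by field_simp)
  exact (hK.norm_sub_le (hfX (hmem ζ hζ)) (hzX (hmem ζ hζ))).trans
    (by gcongr; exact hdrift _ (hmem ζ hζ))

end Normed

theorem peakSize_le_mul_of_lipschitzOnWith {L : E → ℂ} {X : Set E} {p w : E} {K : NNReal} {a τ : ℝ}
    (hK : LipschitzOnWith K L X) (hp : p ∈ X) (hLp : L p = 0) (hw : w ∈ X) (hτ : 0 ≤ τ)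
    (hτ1 : τ ≤ 1) (hwp : ‖w - p‖ ≤ a * τ) : peakSize L p w ≤ (K * a + a ^ 2) * τ := by
  have hLw := hK.norm_sub_le hw hp
  rw [hLp, sub_zero] at hLw
  calc peakSize L p w ≤ K * (a * τ) + (a * τ) ^ 2 := by
        unfold peakSize
        grw [hLw, hwp]
    _ ≤ K * (a * τ) + a ^ 2 * τ := by
        rw [mul_pow]
        gcongr
        exact pow_le_of_le_one hτ hτ1 two_ne_zero
    _ = (K * a + a ^ 2) * τ := by ring

variable [InnerProductSpace ℂ E] {p e c₀ : E} {τ : ℝ}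

theorem norm_radialPoint_sub_le (hτ : 0 ≤ τ) (hτ1 : τ ≤ 1) :
    ‖radialPoint (p - e) e τ - p‖ ≤ 2 * τ * ‖e‖ := by
  have heq : radialPoint (p - e) e τ - p = ((τ ^ 2 - 2 * τ : ℝ) : ℂ) • e := by
    have hcoeff : ((1 - τ : ℝ) ^ 2 : ℂ) = ((τ ^ 2 - 2 * τ : ℝ) : ℂ) + 1 := by push_cast; ring
    rw [radialPoint, hcoeff, add_smul, one_smul]
    abel
  rw [heq, norm_smul, Complex.norm_real, Real.norm_eq_abs]
  gcongr
  rw [abs_le]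
  constructor <;> nlinarith

theorem ball_radialPoint_subset (hτ : 0 ≤ τ) (hτ1 : τ ≤ 1) :
    ball (radialPoint c₀ e τ) (τ * ‖e‖) ⊆ ball c₀ ‖e‖ := by
  refine ball_subset_ball' ?_
  rw [dist_eq_norm, radialPoint, add_sub_cancel_left, norm_smul, norm_sq_one_sub hτ1, ← add_mul]
  exact mul_le_of_le_one_left (norm_nonneg _) (by nlinarith)

end NearIdentity

section Injectivity

variable {E : Type*} [NormedAddCommGroup E] [InnerProductSpace ℂ E] {L : E → ℂ} {X : Set E}
  {p e : E} {c δ : ℝ} {A : ℕ}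

theorem IsPeakFunction.exists_lipschitzOnWith (hP : IsPeakFunction L X p c δ) (hX : IsCompact X) :
    ∃ K, LipschitzOnWith K L X :=
  hP.contDiff.locallyLipschitz.locallyLipschitzOn.exists_lipschitzOnWith_of_compact hX

theorem SatisfiesHarnack.norm_fderiv_comp_radialPoint_apply_le
    (h : SatisfiesHarnack (peakSize L p) X A) (hL : Differentiable ℂ L) {c₀ : E} {f : E → E}
    (hf : DifferentiableOn ℂ f (ball c₀ ‖e‖)) (hfX : MapsTo f (ball c₀ ‖e‖) X) (he : e ≠ 0)
    {K τ : ℝ} (hτ : 0 < τ) (hτ2 : τ ≤ 1 / 2)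
    (hK : peakSize L p (f (radialPoint c₀ e τ)) ≤ K * τ) {v : E}
    (hv : inner ℂ e v = 0) :
    ‖fderiv ℂ (L ∘ f) (radialPoint c₀ e τ) v‖ ≤ 4 * 6 ^ A * K / ‖e‖ * √τ * ‖v‖ := by
  refine (norm_fderiv_radialPoint_apply_le (B := 6 ^ A * (K * τ)) he (hL.comp_differentiableOn hf)
    hτ hτ2 (fun ξ hξ hξτ => ?_) hv).trans_eq ?_
  · grw [← hK, ← h.apply_radialPoint_add_le hf hfX (peakSize_nonneg L p) he hτ hτ2 hξ hξτ]
    exact norm_le_peakSize L p _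
  · congr 1
    rw [div_eq_iff (Real.sqrt_pos.2 hτ).ne', mul_assoc _ √τ, Real.mul_self_sqrt hτ.le]
    ring

theorem tendsto_radialPoint (p e : E) : Tendsto (radialPoint (p - e) e) (𝓝[>] 0) (𝓝 p) := by
  have hcont : Continuous (radialPoint (p - e) e) := by unfold radialPoint; fun_prop
  have h0 : radialPoint (p - e) e 0 = p := by simp [radialPoint]
  exact (hcont.tendsto' 0 p h0).mono_left nhdsWithin_le_nhds

theorem IsPeakFunction.eventually_lt_norm_fderiv_radialPoint (hP : IsPeakFunction L X p c δ)
    {d : ℝ} (hd : d < ‖fderiv ℂ L p e‖) :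
    ∀ᶠ τ : ℝ in 𝓝[>] 0, d < ‖fderiv ℂ L (radialPoint (p - e) e τ) e‖ := by
  have hcont : Continuous fun z => ‖fderiv ℂ L z e‖ :=
    ((hP.contDiff.continuous_fderiv one_ne_zero).clm_apply continuous_const).norm
  exact ((hcont.tendsto p).comp (tendsto_radialPoint p e)).eventually (lt_mem_nhds hd)

theorem IsCloseNearCenter.norm_fderiv_sub_le {c₀ : E} {f g : E → E} {η τ r : ℝ} {q : ℕ}
    (hfg : IsCloseNearCenter L X c₀ e f g τ r q) (hL : Differentiable ℂ L) (he : e ≠ 0) (hη : 0 ≤ η)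
    (hbox : ∀ w ∈ anisotropicBox c₀ e τ, ‖L (f w) - L (g w)‖ ≤ η * min (1 / 16) (‖e‖ / 4) * τ ∧
      ‖f w - g w‖ ≤ η * min (1 / 16) (‖e‖ / 4) * √τ) :
    let z := radialPoint c₀ e τ
    ‖(fderiv ℂ (L ∘ f) z - fderiv ℂ (L ∘ g) z) e‖ ≤ η ∧
      (∀ v, inner ℂ e v = 0 →
        ‖(fderiv ℂ (L ∘ f) z - fderiv ℂ (L ∘ g) z) v‖ ≤ η * √τ * ‖v‖) ∧
      ‖(fderiv ℂ f z - fderiv ℂ g z) e‖ ≤ η / √τ ∧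
      ∀ v, inner ℂ e v = 0 → ‖(fderiv ℂ f z - fderiv ℂ g z) v‖ ≤ η * ‖v‖ := by
  obtain ⟨hLn, hLt⟩ := norm_fderiv_sub_radialPoint_le hη hfg.τ_pos.le he
    (hL.comp_differentiableOn hfg.differentiableOn_left)
    (hL.comp_differentiableOn hfg.differentiableOn_right) hfg.τ_pos hfg.τ_le_half
    fun w hw => (hbox w hw).1
  obtain ⟨hn, ht⟩ := norm_fderiv_sub_radialPoint_le hη (Real.sqrt_nonneg τ) he
    hfg.differentiableOn_left hfg.differentiableOn_right hfg.τ_pos hfg.τ_le_half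
    fun w hw => (hbox w hw).2
  rw [div_self hfg.τ_pos.ne', mul_one] at hLn
  rw [Real.div_sqrt] at hLt
  rw [Real.sqrt_div_self, ← div_eq_mul_inv] at hn
  rw [div_self (Real.sqrt_pos.2 hfg.τ_pos).ne', mul_one] at ht
  exact ⟨hLn, hLt, hn, ht⟩

theorem exists_pos_le_and_mul_le {a b K : ℝ} (ha : 0 < a) (hb : 0 < b) (hK : 0 ≤ K) :
    ∃ ε > 0, ε ≤ a ∧ K * ε ≤ b := by
  refine ⟨min a (b / (K + 1)), by positivity, min_le_left _ _, ?_⟩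
  calc K * min a (b / (K + 1)) ≤ (K + 1) * (b / (K + 1)) := by
        gcongr
        · exact le_add_of_nonneg_right zero_le_one
        · exact min_le_right _ _
    _ = b := by field_simp

-- The comparison of `f` with `g` on the anisotropic box costs `q * τ ≥ M`, while `f` is only within
-- `ε * τ` of the identity when `q * τ` is bounded; `M` and `ε` depend on `L`, `X`, `p`, `e` only.
theorem IsPeakFunction.exists_eventually_injective_fderiv (hP : IsPeakFunction L X p c δ)
    (hX : IsCompact X) (hpX : p ∈ X) (hball : ball (p - e) ‖e‖ ⊆ X) (hLe : fderiv ℂ L p e ≠ 0) :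
    ∃ M > 0, ∃ ε > 0, ∀ᶠ τ : ℝ in 𝓝[>] 0, ∀ {f g : E → E} {r : ℝ} {q : ℕ},
      IsCloseNearCenter L X (p - e) e f g τ r q → M ≤ q * τ →
      (∀ w ∈ ball (radialPoint (p - e) e τ) (τ * ‖e‖), ‖f w - w‖ ≤ ε * τ) →
      Injective (fderiv ℂ g (radialPoint (p - e) e τ)) := by
  have he : e ≠ 0 := by rintro rfl; simp at hLe
  have he0 : 0 < ‖e‖ := norm_pos_iff.2 he
  have hd : 0 < ‖fderiv ℂ L p e‖ := norm_pos_iff.2 hLe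
  obtain ⟨A, hA⟩ := hP.exists_satisfiesHarnack hX
  obtain ⟨K, hK⟩ := hP.exists_lipschitzOnWith hX
  have hL : Differentiable ℂ L := hP.contDiff.differentiable (by simp)
  set d : ℝ := ‖fderiv ℂ L p e‖
  set Q : ℝ := K * (3 * ‖e‖) + (3 * ‖e‖) ^ 2
  obtain ⟨η, hη, hinj⟩ := exists_injective_of_anisotropic_estimates he (half_pos hd)
    (C := 4 * 6 ^ A * Q / ‖e‖) (by positivity)
  obtain ⟨M, hM, hcmp⟩ := hA.exists_forall_mem_anisotropicBox_norm_sub_le hL (K := Q)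
    (ϑ := η * min (1 / 16) (‖e‖ / 4)) (by positivity) (by positivity)
  obtain ⟨ε, hε, hεe, hεd⟩ := exists_pos_le_and_mul_le (a := ‖e‖ / 4) (b := d / 4) (K := 2 * K)
    (by positivity) (by positivity) (by positivity)
  refine ⟨M, hM, ε, hε, ?_⟩
  filter_upwards [hP.eventually_lt_norm_fderiv_radialPoint
    (show 3 / 4 * d < ‖fderiv ℂ L p e‖ by linarith)] with τ hLz f g r q hfg hMq hdrift
  have hτ := hfg.τ_pos
  have hτ2 := hfg.τ_le_half
  have hετ : ε * τ ≤ ‖e‖ / 4 * τ := by gcongr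
  have hzp := norm_radialPoint_sub_le (p := p) (e := e) hτ.le (by linarith)
  set z := radialPoint (p - e) e τ
  have hsub : ball z (τ * ‖e‖) ⊆ ball (p - e) ‖e‖ := ball_radialPoint_subset hτ.le (by linarith)
  have hz : z ∈ ball z (τ * ‖e‖) := mem_ball_self (mul_pos hτ he0)
  have hQ : peakSize L p (f z) ≤ Q * τ := by
    refine peakSize_le_mul_of_lipschitzOnWith hK hpX hP.map_point (hfg.mapsTo_left (hsub hz)) hτ.le
      (by linarith) ?_
    nlinarith [norm_sub_le_norm_sub_add_norm_sub (f z) z p, hdrift z hz]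
  have hLf := norm_fderiv_sub_apply_le hK hL hτ (hfg.differentiableOn_left.mono hsub)
    (hfg.mapsTo_left.mono_left hsub) (hsub.trans hball) he hdrift
  obtain ⟨hLn, hLt, hn, ht⟩ := hfg.norm_fderiv_sub_le hL he hη.le (hcmp he hfg hMq hQ)
  refine hinj (Real.sqrt_pos.2 hτ) (half_norm_le_norm_fderiv (mul_pos hτ he0)
    (hfg.differentiableOn_left.mono hsub) (by linarith) hdrift) (fun v hv => ?_) ?_
    (fun v => hA.norm_fderiv_comp_radialPoint_apply_le hL hfg.differentiableOn_left
      hfg.mapsTo_left he hτ hτ2 hQ) hLn hLt hn ht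
  · rw [fderiv_comp z (hL _) (hfg.differentiableOn_right.differentiableAt
      (isOpen_ball.mem_nhds (hsub hz))), ContinuousLinearMap.comp_apply, hv, map_zero]
  · linarith [norm_sub_norm_le (fderiv ℂ L z e) (fderiv ℂ (L ∘ f) z e), norm_sub_rev
      (fderiv ℂ L z e) (fderiv ℂ (L ∘ f) z e)]

end Injectivity

section Scales

theorem tendsto_natCeil_div_nhdsGT_zero {M : ℝ} (hM : 0 < M) :
    Tendsto (fun τ : ℝ => ⌈M / τ⌉₊) (𝓝[>] 0) atTop := by
  simpa only [div_eq_mul_inv, comp_def] using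
    tendsto_nat_ceil_atTop.comp (tendsto_inv_nhdsGT_zero.const_mul_atTop hM)

theorem exists_eventually_mul_pow_le {D θ r : ℝ} (hD : 0 ≤ D) (hθ : 0 < θ) (hθ1 : θ < 1)
    (hr : 0 < r) :
    ∃ t : ℕ, ∀ M > 0, ∀ᶠ τ : ℝ in 𝓝[>] 0, ∃ q : ℕ, M ≤ q * τ ∧ q * τ ≤ M + 1 ∧
      D * θ ^ (t * q) ≤ τ * r ^ q := by
  obtain ⟨t, ht⟩ := exists_pow_lt_of_lt_one (half_pos hr) hθ1
  refine ⟨t, fun M hM => ?_⟩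
  have hlim : Tendsto (fun q : ℕ => D / M * ((q : ℝ) * (1 / 2) ^ q)) atTop (𝓝 0) := by
    simpa using (tendsto_self_mul_const_pow_of_lt_one (r := (1 / 2 : ℝ)) (by norm_num)
      (by norm_num)).const_mul (D / M)
  filter_upwards [(hlim.comp (tendsto_natCeil_div_nhdsGT_zero hM)).eventually
    (ge_mem_nhds one_pos), Ioc_mem_nhdsGT one_pos] with τ hsmall ⟨hτ, hτ1⟩
  dsimp only [comp_apply] at hsmall
  have hMq : M ≤ ⌈M / τ⌉₊ * τ := (div_le_iff₀ hτ).1 (Nat.le_ceil _)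
  refine ⟨⌈M / τ⌉₊, hMq, natCeil_div_mul_le hM.le hτ hτ1, ?_⟩
  set q := ⌈M / τ⌉₊
  have hDτ : D * (1 / 2) ^ q ≤ τ :=
    calc D * (1 / 2) ^ q ≤ D * (1 / 2) ^ q * (q * τ / M) :=
          le_mul_of_one_le_right (by positivity) ((one_le_div hM).2 hMq)
      _ = D / M * (q * (1 / 2) ^ q) * τ := by ring
      _ ≤ τ := mul_le_of_le_one_left hτ.le hsmall
  calc D * θ ^ (t * q) = D * (θ ^ t) ^ q := by rw [pow_mul]
    _ ≤ D * (r / 2) ^ q := by gcongr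
    _ = D * (1 / 2) ^ q * r ^ q := by rw [mul_assoc, ← mul_pow]; congr 2; ring
    _ ≤ τ * r ^ q := by gcongr

variable {E : Type*} [NormedAddCommGroup E] [InnerProductSpace ℂ E] {L : E → ℂ}
  {X : Set E} {c₀ e : E} {Φ : ℕ → E → E} {g : E → E} {K : NNReal}

theorem DecaysAt.exists_eventually_isCloseNearCenter (hdec : DecaysAt (fun k w => Φ k w - g w) c₀)
    (he : e ≠ 0) (hK : LipschitzOnWith K L X) (hΦ : ∀ k, DifferentiableOn ℂ (Φ k) (ball c₀ ‖e‖))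
    (hΦX : ∀ k, MapsTo (Φ k) (ball c₀ ‖e‖) X) (hg : DifferentiableOn ℂ g (ball c₀ ‖e‖))
    (hgX : MapsTo g (ball c₀ ‖e‖) X) :
    ∃ t : ℕ, ∀ M > 0, ∀ᶠ τ : ℝ in 𝓝[>] 0, ∃ (q : ℕ) (r : ℝ), M ≤ q * τ ∧ q * τ ≤ M + 1 ∧
      IsCloseNearCenter L X c₀ e (Φ (t * q)) g τ r q := by
  have : 0 < ‖e‖ := norm_pos_iff.2 he
  obtain ⟨R, hR, C, θ, hθ, hθ1, hC⟩ := hdec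
  have hC0 : 0 ≤ C := by simpa using (norm_nonneg _).trans (hC c₀ (mem_ball_self hR) 0)
  obtain ⟨r, hr, hr4, hrR⟩ := exists_pos_le_and_mul_le (a := 1 / 4) (b := R / 2) (K := 2 * ‖e‖)
    (by norm_num) (by positivity) (by positivity)
  obtain ⟨t, ht⟩ := exists_eventually_mul_pow_le (D := (K + 1) * C) (by positivity) hθ hθ1 hr
  refine ⟨t, fun M hM => ?_⟩
  filter_upwards [ht M hM, Ioc_mem_nhdsGT (show 0 < r ^ 2 by positivity)]
    with τ ⟨q, hMq, hqM, hsmall⟩ ⟨hτ, hτr⟩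
  refine ⟨q, r, hMq, hqM, hΦ _, hΦX _, hg, hgX, hτ, hτr, hr, hr4, fun w hw => ?_⟩
  have hwe : w ∈ ball c₀ ‖e‖ := mem_ball_iff_norm.2 (by nlinarith)
  have hΦg : (K + 1) * ‖Φ (t * q) w - g w‖ ≤ τ * r ^ q := by
    grw [hC w (mem_ball_iff_norm.2 (by linarith)) (t * q), ← mul_assoc, hsmall]
  rw [add_one_mul] at hΦg
  constructor
  · linarith [mul_nonneg K.coe_nonneg (norm_nonneg (Φ (t * q) w - g w))]
  · linarith [hK.norm_sub_le (hΦX (t * q) hwe) (hgX hwe), norm_nonneg (Φ (t * q) w - g w)]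

end Scales

section LimitIsIdentity

-- An open subset of the image of `g` meets `Ω`, and there `F (g u) = g u` by continuity of `F`.
theorem eqOn_id_of_tendsto_iterate_of_surjective_fderiv {E : Type*} [NormedAddCommGroup E]
    [NormedSpace ℂ E] [CompleteSpace E] {F g : E → E} {Ω : Set E} {z : E} (hΩ : IsOpen Ω)
    (hc : IsPreconnected Ω) (hF : DifferentiableOn ℂ F Ω) (hFΩ : MapsTo F Ω Ω)
    (hg : DifferentiableOn ℂ g Ω) (hlim : ∀ x ∈ Ω, Tendsto (F^[·] x) atTop (𝓝 (g x))) (hz : z ∈ Ω)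
    (hsurj : Surjective (fderiv ℂ g z)) : EqOn F id Ω := by
  have himage : g '' Ω ∈ 𝓝 (g z) := by
    rw [← (hasStrictFDerivAt_of_differentiableOn hΩ hg hz).map_nhds_eq_of_surj
      (LinearMap.range_eq_top.2 hsurj)]
    exact image_mem_map (hΩ.mem_nhds hz)
  have hcl : g z ∈ closure Ω :=
    mem_closure_of_tendsto (hlim z hz) (Eventually.of_forall fun k => hFΩ.iterate k hz)
  obtain ⟨y, hy, hyΩ⟩ := mem_closure_iff_nhds.1 hcl _ (interior_mem_nhds.2 himage)
  refine eqOn_of_isPreconnected_of_eventuallyEq hΩ hc hF differentiableOn_id hyΩ ?_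
  filter_upwards [mem_interior_iff_mem_nhds.1 hy, hΩ.mem_nhds hyΩ] with w ⟨u, hu, hw⟩ hwΩ
  subst hw
  have hFg : Tendsto (fun k => F^[k + 1] u) atTop (𝓝 (F (g u))) := by
    simp only [iterate_succ_apply']
    exact (hF.differentiableAt (hΩ.mem_nhds hwΩ)).continuousAt.tendsto.comp (hlim u hu)
  exact tendsto_nhds_unique hFg ((tendsto_add_atTop_iff_nat 1).2 (hlim u hu))

variable {E : Type*} [NormedAddCommGroup E] [InnerProductSpace ℂ E] [FiniteDimensional ℂ E]
  {F : E → E} {Ω : Set E} {L : E → ℂ} {p e z₀ : E} {c δ : ℝ}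

theorem IsPeakFunction.exists_injective_fderiv_limit (hP : IsPeakFunction L Ω p c δ)
    (hb : Bornology.IsBounded Ω) (hp : p ∈ closure Ω) (hball : ball (p - e) ‖e‖ ⊆ Ω)
    (hLe : fderiv ℂ L p e ≠ 0) (hF : DifferentiableOn ℂ F Ω) (hFΩ : MapsTo F Ω Ω)
    (ho : (fun z => F z - z) =o[𝓝[Ω] p] fun z => ‖z - p‖ ^ 2) {g : E → E}
    (hg : DifferentiableOn ℂ g Ω) (hgΩ : MapsTo g Ω (closure Ω))
    (hdec : DecaysAt (fun k w => F^[k] w - g w) (p - e)) :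
    ∃ z ∈ Ω, Injective (fderiv ℂ g z) := by
  have : ProperSpace E := FiniteDimensional.proper ℂ E
  have he : e ≠ 0 := by rintro rfl; simp at hLe
  have he0 : 0 < ‖e‖ := norm_pos_iff.2 he
  have hX : IsCompact (closure Ω) := hb.isCompact_closure
  obtain ⟨K, hK⟩ := hP.on_closure.exists_lipschitzOnWith hX
  obtain ⟨M, hM, ε, hε, hinj⟩ := hP.on_closure.exists_eventually_injective_fderiv hX hp
    (hball.trans subset_closure) hLe
  obtain ⟨t, ht⟩ := hdec.exists_eventually_isCloseNearCenter (Φ := fun k => F^[k]) he hK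
    (fun k => (differentiableOn_iterate hF hFΩ k).mono hball)
    (fun k w hw => subset_closure (hFΩ.iterate k (hball hw))) (hg.mono hball)
    (hgΩ.mono_left hball)
  obtain ⟨τ, hinj, ⟨q, r, hMq, hqM, hclose⟩, hdrift⟩ := (hinj.and ((ht M hM).and
    (eventually_norm_iterate_sub_le hFΩ ho (show 0 < 3 * ‖e‖ by positivity)
      (show 0 < t * (M + 1) + 1 by positivity) hε))).exists
  have hτ := hclose.τ_pos
  have hτ1 : τ ≤ 1 := by linarith [hclose.τ_le_half]
  have hsub : ball (radialPoint (p - e) e τ) (τ * ‖e‖) ⊆ Ω :=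
    (ball_radialPoint_subset hτ.le hτ1).trans hball
  refine ⟨_, hsub (mem_ball_self (mul_pos hτ he0)), hinj hclose hMq fun w hw =>
    hdrift w (hsub hw) ?_ (t * q) ?_⟩
  · linarith [norm_sub_le_norm_sub_add_norm_sub w (radialPoint (p - e) e τ) p,
      mem_ball_iff_norm.1 hw, norm_radialPoint_sub_le (p := p) (e := e) hτ.le hτ1]
  · push_cast
    nlinarith [mul_le_mul_of_nonneg_left hqM t.cast_nonneg (α := ℝ)]

theorem fderiv_apply_eq_smul_imp_eq_zero (hΩ : IsOpen Ω) (hc : IsPreconnected Ω) {B : ℝ}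
    (hB : ∀ x ∈ Ω, ‖x‖ ≤ B) (hF : DifferentiableOn ℂ F Ω) (hFΩ : MapsTo F Ω Ω) (hz₀ : z₀ ∈ Ω)
    (hfix : F z₀ = z₀) (he : e ≠ 0) (hball : ball (p - e) ‖e‖ ⊆ Ω)
    (ho : (fun z => F z - z) =o[𝓝[Ω] p] fun z => ‖z - p‖ ^ 2) {μ : ℂ} (hμ : ‖μ‖ = 1) (hμ1 : μ ≠ 1)
    {v : E} (hv : fderiv ℂ F z₀ v = μ • v) : v = 0 := by
  have : CompleteSpace E := FiniteDimensional.complete ℂ E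
  have hFz := (hF.differentiableAt (hΩ.mem_nhds hz₀)).hasFDerivAt
  obtain ⟨f, hf, hfB, hfF, hfz⟩ := exists_eigenfunction hΩ hB hF hFΩ hz₀ hfix hFz hμ
  have hf0 := eqOn_zero_of_comp_eq_smul hμ1 hΩ hc he hball hf hfB hfF ho
  rw [← hfz v hv, (hf0.eventuallyEq_of_mem (hΩ.mem_nhds hz₀)).fderiv_eq]
  simp

theorem IsPeakFunction.eqOn_id (hP : IsPeakFunction L Ω p c δ) (hΩ : IsOpen Ω)
    (hc : IsPreconnected Ω) (hb : Bornology.IsBounded Ω) (hp : p ∈ closure Ω)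
    (hball : ball (p - e) ‖e‖ ⊆ Ω) (hLe : fderiv ℂ L p e ≠ 0) (hF : DifferentiableOn ℂ F Ω)
    (hFΩ : MapsTo F Ω Ω) (hz₀ : z₀ ∈ Ω) (hfix : F z₀ = z₀)
    (ho : (fun z => F z - z) =o[𝓝[Ω] p] fun z => ‖z - p‖ ^ 2) : EqOn F id Ω := by
  have : CompleteSpace E := FiniteDimensional.complete ℂ E
  have he : e ≠ 0 := by rintro rfl; simp at hLe
  obtain ⟨B, hB⟩ := hb.exists_norm_le
  obtain ⟨g, hg, hlim, hdec⟩ := exists_limit_iterates hΩ hc hB hF hFΩ hz₀ hfix fun μ hμ hμ1 v =>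
    fderiv_apply_eq_smul_imp_eq_zero hΩ hc hB hF hFΩ hz₀ hfix he hball ho hμ hμ1
  have hgΩ : MapsTo g Ω (closure Ω) := fun x hx =>
    mem_closure_of_tendsto (hlim x hx) (Eventually.of_forall fun k => hFΩ.iterate k hx)
  obtain ⟨z, hz, hinj⟩ := hP.exists_injective_fderiv_limit hb hp hball hLe hF hFΩ ho hg hgΩ
    (hdec _ (hball (mem_ball_self (norm_pos_iff.2 he))))
  exact eqOn_id_of_tendsto_iterate_of_surjective_fderiv hΩ hc hF hFΩ hg hlim hz
    (LinearMap.injective_iff_surjective.1 hinj)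

end LimitIsIdentity

section SecondOrderExpansion

variable {E : Type*} [NormedAddCommGroup E] [NormedSpace ℝ E] {f : E → ℝ} {p : E}

theorem isLittleO_sub_taylor_two (hf : ContDiffAt ℝ 2 f p) :
    (fun z => f z - f p - fderiv ℝ f p (z - p) -
        1 / 2 * fderiv ℝ (fderiv ℝ f) p (z - p) (z - p)) =o[𝓝 p] fun z => ‖z - p‖ ^ 2 := by
  set D := fderiv ℝ (fderiv ℝ f) p
  have hD : HasFDerivAt (fderiv ℝ f) D p :=
    ((hf.fderiv_right (m := 1) (by norm_num)).differentiableAt (by norm_num)).hasFDerivAt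
  have hsymm : ∀ x y, D x y = D y x := (hf.isSymmSndFDerivAt (by simp)).eq
  obtain ⟨δ, hδ, hdiff⟩ := eventually_nhds_iff_ball.1
    ((hf.eventually (by simp)).mono fun z hz => hz.differentiableAt (by norm_num))
  have hderiv : ∀ x ∈ ball p δ, HasFDerivWithinAt
      (fun z => f z - fderiv ℝ f p (z - p) - 1 / 2 * D (z - p) (z - p))
      (fderiv ℝ f x - fderiv ℝ f p - D (x - p)) (ball p δ) x := fun x hx => by
    have hsub : HasFDerivAt (fun z : E => z - p) (ContinuousLinearMap.id ℝ E) x :=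
      (hasFDerivAt_id x).sub_const p
    refine HasFDerivAt.hasFDerivWithinAt ((((hdiff x hx).hasFDerivAt.sub
      ((fderiv ℝ f p).hasFDerivAt.comp x hsub)).sub
      (((D.hasFDerivAt.comp x hsub).clm_apply hsub).const_mul (1 / 2))).congr_fderiv ?_)
    ext v
    have hsymm' := hsymm v (x - p)
    simp only [map_sub, sub_apply] at hsymm'
    simp [hsymm']
    ring
  have hrem := (convex_ball p δ).isLittleO_pow_succ (n := 1) (mem_ball_self hδ) hderiv (by
    simpa using hD.isLittleO.norm_right.mono nhdsWithin_le_nhds)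
  rw [nhdsWithin_eq_nhds.2 (ball_mem_nhds p hδ)] at hrem
  refine hrem.congr_left fun z => ?_
  simp
  ring

theorem isBigO_sub_fderiv (hf : ContDiffAt ℝ 2 f p) :
    (fun z => f z - f p - fderiv ℝ f p (z - p)) =O[𝓝 p] fun z => ‖z - p‖ ^ 2 := by
  set D := fderiv ℝ (fderiv ℝ f) p
  have hD : (fun z => 1 / 2 * D (z - p) (z - p)) =O[𝓝 p] fun z => ‖z - p‖ ^ 2 :=
    .const_mul_left (.of_bound ‖D‖ (Eventually.of_forall fun z => by
      simpa [pow_two, mul_assoc] using D.le_opNorm₂ (z - p) (z - p))) _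
  simpa [D] using (isLittleO_sub_taylor_two hf).isBigO.add hD

theorem isLittleO_sq_sub_sq_fderiv {l : E →L[ℝ] ℝ} (hf : HasFDerivAt f l p) (hp : f p = 0) :
    (fun z => f z ^ 2 - l (z - p) ^ 2) =o[𝓝 p] fun z => ‖z - p‖ ^ 2 := by
  have hlin : (fun z => f z - l (z - p)) =o[𝓝 p] fun z => ‖z - p‖ := by
    simpa [hp] using hf.isLittleO.norm_right
  have hl : (fun z => l (z - p)) =O[𝓝 p] fun z => ‖z - p‖ :=
    (l.isBigO_sub (𝓝 p) p).norm_right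
  refine (hlin.mul_isBigO (hlin.isBigO.add (hl.const_mul_left 2))).congr (fun z => ?_) fun z => ?_
  · ring
  · ring

end SecondOrderExpansion

section Penalization

theorem exists_forall_le_add_mul {X : Type*} [TopologicalSpace X] {S : Set X} (hS : IsCompact S)
    {f q : X → ℝ} (hf : Continuous f) (hq : Continuous q) (hq0 : ∀ x, 0 ≤ q x)
    (h : ∀ x ∈ S, q x = 0 → 0 < f x) : ∃ K c : ℝ, 0 < c ∧ ∀ x ∈ S, c ≤ f x + K * q x := by
  have hcover : S ⊆ ⋃ k : ℕ, {x | 1 / ((k : ℝ) + 1) < f x + k * q x} := fun x hx => by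
    have hinv : Tendsto (fun k : ℕ => 1 / ((k : ℝ) + 1)) atTop (𝓝 0) :=
      tendsto_one_div_add_atTop_nhds_zero_nat
    rw [mem_iUnion]
    rcases (hq0 x).eq_or_lt with hqx | hqx
    · obtain ⟨k, hk⟩ := (hinv.eventually_lt_const (h x hx hqx.symm)).exists
      exact ⟨k, by simpa [← hqx] using hk⟩
    · have htop : Tendsto (fun k : ℕ => f x + k * q x) atTop atTop :=
        tendsto_atTop_add_const_left _ _ (tendsto_natCast_atTop_atTop.atTop_mul_const hqx)
      obtain ⟨k, hk1, hk2⟩ :=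
        ((hinv.eventually_lt_const one_pos).and (htop.eventually_ge_atTop 1)).exists
      exact ⟨k, hk1.trans_le hk2⟩
  have hmono : Monotone fun k : ℕ => {x | 1 / ((k : ℝ) + 1) < f x + k * q x} :=
    fun i j hij x (hx : 1 / ((i : ℝ) + 1) < f x + i * q x) => by
      have := hq0 x
      calc 1 / ((j : ℝ) + 1) ≤ 1 / (i + 1) := by gcongr
        _ < f x + i * q x := hx
        _ ≤ f x + j * q x := by gcongr
  obtain ⟨k, hk⟩ := hS.elim_directed_cover _ (fun k => isOpen_lt (by fun_prop) (by fun_prop))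
    hcover hmono.directed_le
  exact ⟨k, 1 / ((k : ℝ) + 1), by positivity, fun x hx => (hk hx).le⟩

theorem exists_forall_mul_sq_norm_le_add_mul {E : Type*} [NormedAddCommGroup E] [NormedSpace ℝ E]
    [ProperSpace E] {f q : E → ℝ} (hf : Continuous f) (hq : Continuous q)
    (hfs : ∀ (r : ℝ) x, f (r • x) = r ^ 2 * f x) (hqs : ∀ (r : ℝ) x, q (r • x) = r ^ 2 * q x)
    (hq0 : ∀ x, 0 ≤ q x) (h : ∀ x ≠ 0, q x = 0 → 0 < f x) :
    ∃ K c : ℝ, 0 < c ∧ ∀ x, c * ‖x‖ ^ 2 ≤ f x + K * q x := by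
  obtain ⟨K, c, hc, hK⟩ := exists_forall_le_add_mul (isCompact_sphere 0 1) hf hq hq0
    fun x hx => h x (ne_zero_of_mem_unit_sphere ⟨x, hx⟩)
  refine ⟨K, c, hc, fun x => ?_⟩
  rcases eq_or_ne x 0 with rfl | hx
  · simpa using (congr_arg₂ (· + K * ·) (hfs 0 0) (hqs 0 0)).ge
  have hx0 : 0 < ‖x‖ := norm_pos_iff.2 hx
  have hunit := hK (‖x‖⁻¹ • x) (by simp [norm_smul, hx0.ne'])
  rw [hfs, hqs] at hunit
  calc c * ‖x‖ ^ 2 ≤ (‖x‖⁻¹ ^ 2 * f x + K * (‖x‖⁻¹ ^ 2 * q x)) * ‖x‖ ^ 2 := by gcongr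
    _ = f x + K * q x := by field_simp

end Penalization

section ComplexLinearPart

/-- The `ℂ`-linear part of a real linear map between complex vector spaces. -/
def complexLinearPart {E V : Type*} [AddCommGroup E] [Module ℂ E] [Module ℝ E]
    [IsScalarTower ℝ ℂ E] [AddCommGroup V] [Module ℂ V] [Module ℝ V] [IsScalarTower ℝ ℂ V]
    (T : E →ₗ[ℝ] V) : E →ₗ[ℂ] V where
  toFun x := (1 / 2 : ℂ) • (T x - I • T (I • x))
  map_add' x y := by
    simp only [smul_add, map_add]
    module
  map_smul' c x := by
    have hT : ∀ y, T (c • y) = (c.re : ℂ) • T y + (c.im : ℂ) • T (I • y) := fun y => by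
      nth_rewrite 1 [← Complex.re_add_im c]
      rw [add_smul, mul_smul, map_add]
      simp_rw [← RCLike.ofReal_eq_complex_ofReal, ← RCLike.real_smul_eq_coe_smul (K := ℂ), map_smul]
    rw [smul_comm I c, hT, hT, smul_smul I I, I_mul_I, neg_one_smul, map_neg, RingHom.id_apply]
    nth_rewrite 5 [← Complex.re_add_im c]
    match_scalars
    · ring
    · linear_combination (c.im : ℂ) / 2 * I_sq

variable {E : Type*} [NormedAddCommGroup E] [NormedSpace ℂ E] [NormedSpace ℝ E]
  [IsScalarTower ℝ ℂ E]

theorem exists_bilin_re_apply_self_eq [FiniteDimensional ℂ E] (M : E →L[ℝ] E →L[ℝ] ℝ) :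
    ∃ B : E →L[ℂ] E →L[ℂ] ℂ, ∀ x, (B x x).re = 1 / 2 * (M x x - M (I • x) (I • x)) := by
  refine ⟨(complexLinearPart (StrongDual.extendRCLikeₗ.toLinearMap ∘ₗ
    M.toLinearMap)).toContinuousLinearMap, fun x => ?_⟩
  simp [complexLinearPart, StrongDual.extendRCLikeₗ_apply, StrongDual.extendRCLike_apply]

end ComplexLinearPart

section PeakFunctionOfLeviForm

variable {E : Type*} [NormedAddCommGroup E] [NormedSpace ℂ E] [NormedSpace ℝ E]
  [IsScalarTower ℝ ℂ E] [FiniteDimensional ℂ E] {Ω : Set E} {p : E} {l : StrongDual ℝ E}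

-- Half of `M x x` is the Levi form plus the real part of a holomorphic quadratic form, which
-- together with the complexification of `l` makes up the peak function (the Levi polynomial).
theorem exists_isPeakFunction_of_isLittleO {ψ : E → ℝ} {M : E →L[ℝ] E →L[ℝ] ℝ} {c : ℝ}
    (hc : 0 < c) (hψ : (fun z => ψ z - l (z - p) - 1 / 2 * M (z - p) (z - p)) =o[𝓝 p]
      fun z => ‖z - p‖ ^ 2)
    (hM : ∀ x, c * ‖x‖ ^ 2 ≤ 1 / 4 * (M x x + M (I • x) (I • x)))
    (hneg : ∀ᶠ z in 𝓝 p, z ∈ Ω → ψ z ≤ 0) :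
    ∃ (L : E → ℂ) (δ : ℝ), IsPeakFunction L Ω p (c / 2) δ ∧
      fderiv ℂ L p = StrongDual.extendRCLike l := by
  obtain ⟨B, hB⟩ := exists_bilin_re_apply_self_eq M
  obtain ⟨δ, hδ, hball⟩ := eventually_nhds_iff_ball.1 (hneg.and (hψ.def (half_pos hc)))
  have hsub : HasFDerivAt (fun z : E => z - p) (ContinuousLinearMap.id ℂ E) p :=
    (hasFDerivAt_id p).sub_const p
  have hlC := (StrongDual.extendRCLike (𝕜 := ℂ) l).hasFDerivAt.comp p hsub
  have hBd := ((B.hasFDerivAt.comp p hsub).clm_apply hsub).const_mul (1 / 2)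
  refine ⟨fun z => StrongDual.extendRCLike l (z - p) + 1 / 2 * B (z - p) (z - p), δ,
    ⟨?_, by simp, half_pos hc, hδ, fun z hz hzδ => ?_⟩, ?_⟩
  · have : ContDiff ℂ 1 fun z : E => z - p := contDiff_id.sub contDiff_const
    fun_prop
  · obtain ⟨hψz, hrem⟩ := hball z (mem_ball_iff_norm.2 hzδ)
    have hre : (StrongDual.extendRCLike l (z - p) + 1 / 2 * B (z - p) (z - p) : ℂ).re =
        l (z - p) + 1 / 4 * (M (z - p) (z - p) - M (I • (z - p)) (I • (z - p))) := by
      have hlre : (StrongDual.extendRCLike l (z - p) : ℂ).re = l (z - p) :=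
        StrongDual.re_extendRCLike_apply (𝕜 := ℂ) l _
      have hBre : (1 / 2 * B (z - p) (z - p)).re = 1 / 2 * (B (z - p) (z - p)).re := by simp
      rw [add_re, hlre, hBre, hB]
      ring
    rw [Real.norm_eq_abs, norm_pow, norm_norm] at hrem
    rw [hre]
    linarith [hM (z - p), hψz hz, (abs_le.1 hrem).1]
  · refine ((hlC.add hBd).congr_fderiv ?_).fderiv
    ext x
    simp

theorem exists_isPeakFunction_of_contDiffAt {ρ : E → ℝ} (hρ : ContDiffAt ℝ 2 ρ p) (hp : ρ p = 0)
    (hΩ : ∀ᶠ z in 𝓝 p, z ∈ Ω → ρ z < 0)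
    (hLevi : ∀ ξ ≠ 0, fderiv ℝ ρ p ξ = 0 → fderiv ℝ ρ p (I • ξ) = 0 →
      0 < 1 / 4 * (fderiv ℝ (fderiv ℝ ρ) p ξ ξ + fderiv ℝ (fderiv ℝ ρ) p (I • ξ) (I • ξ))) :
    ∃ (L : E → ℂ) (c δ : ℝ), IsPeakFunction L Ω p c δ ∧
      fderiv ℂ L p = StrongDual.extendRCLike (fderiv ℝ ρ p) := by
  have : ProperSpace E := FiniteDimensional.proper ℂ E
  set l := fderiv ℝ ρ p
  set D := fderiv ℝ (fderiv ℝ ρ) p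
  have hd : HasFDerivAt ρ l p := (hρ.differentiableAt (by norm_num)).hasFDerivAt
  obtain ⟨K, c, hc, hK⟩ := exists_forall_mul_sq_norm_le_add_mul
    (f := fun ξ => 1 / 4 * (D ξ ξ + D (I • ξ) (I • ξ)))
    (q := fun ξ => 1 / 2 * (l ξ ^ 2 + l (I • ξ) ^ 2)) (by fun_prop) (by fun_prop)
    (fun r x => by simp [smul_comm I r]; ring) (fun r x => by simp [smul_comm I r]; ring)
    (fun x => by positivity) fun x hx h0 => by
      obtain ⟨hx1, hx2⟩ := (add_eq_zero_iff_of_nonneg (sq_nonneg (l x))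
        (sq_nonneg (l (I • x)))).1 (by linarith)
      exact hLevi x hx (sq_eq_zero_iff.1 hx1) (sq_eq_zero_iff.1 hx2)
  -- `ρ + K ρ²` is negative where `ρ` is, and its Levi form is positive in every direction.
  have hneg : ∀ᶠ z in 𝓝 p, z ∈ Ω → ρ z + K * ρ z ^ 2 ≤ 0 := by
    have hpos : ∀ᶠ z in 𝓝 p, 0 < 1 + K * ρ z :=
      (continuousAt_const.add (hρ.continuousAt.const_mul K)).eventually_const_lt (by simp [hp])
    filter_upwards [hΩ, hpos] with z hz hzpos hzΩ
    nlinarith [hz hzΩ]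
  obtain ⟨L, δ, hL⟩ := exists_isPeakFunction_of_isLittleO (l := l) (ψ := fun z => ρ z + K * ρ z ^ 2)
    (M := D + (2 * K) • l.smulRight l) hc
    (((isLittleO_sub_taylor_two hρ).add
      ((isLittleO_sq_sub_sq_fderiv hd hp).const_mul_left K)).congr_left fun z => by
        simp [hp, l, D]; ring)
    (fun x => (hK x).trans_eq (by simp; ring)) hneg
  exact ⟨L, _, δ, hL⟩

end PeakFunctionOfLeviForm

section InnerTangentBall

variable {𝕜 E : Type*} [RCLike 𝕜] [NormedAddCommGroup E] [InnerProductSpace 𝕜 E]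

theorem exists_ball_sub_smul_subset {ρ : E → ℝ} {Ω : Set E} {p v : E}
    (hρ : (fun z => ρ z - RCLike.re (inner 𝕜 v (z - p))) =O[𝓝 p] fun z => ‖z - p‖ ^ 2)
    (hΩ : ∀ᶠ z in 𝓝 p, ρ z < 0 → z ∈ Ω) :
    ∃ t : ℝ, 0 < t ∧ ball (p - (t : 𝕜) • v) ‖(t : 𝕜) • v‖ ⊆ Ω := by
  obtain ⟨A, hA, hbound⟩ := hρ.exists_pos
  obtain ⟨δ, hδ, hball⟩ := eventually_nhds_iff_ball.1 (hbound.bound.and hΩ)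
  obtain ⟨t, ht, htA, htδ⟩ := exists_pos_le_and_mul_le (a := 1 / (2 * A)) (b := δ) (K := 2 * ‖v‖)
    (by positivity) hδ (by positivity)
  rw [le_div_iff₀ (by positivity)] at htA
  refine ⟨t, ht, fun z hz => ?_⟩
  rw [mem_ball_iff_norm, ← sub_add, norm_smul, RCLike.norm_ofReal, abs_of_pos ht] at hz
  have hzδ : ‖z - p‖ < δ := by
    have := norm_sub_le (z - p + (t : 𝕜) • v) ((t : 𝕜) • v)
    rw [add_sub_cancel_right, norm_smul, RCLike.norm_ofReal, abs_of_pos ht] at this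
    linarith
  obtain ⟨hrem, hmem⟩ := hball z (mem_ball_iff_norm.2 hzδ)
  rw [Real.norm_eq_abs, norm_pow, norm_norm] at hrem
  have hinner : RCLike.re (inner 𝕜 (z - p) ((t : 𝕜) • v)) = t * RCLike.re (inner 𝕜 v (z - p)) := by
    rw [inner_smul_right, RCLike.re_ofReal_mul, inner_re_symm]
  have hsq : ‖z - p + (t : 𝕜) • v‖ ^ 2 < (t * ‖v‖) ^ 2 := by gcongr
  rw [norm_add_sq (𝕜 := 𝕜), hinner, norm_smul, RCLike.norm_ofReal, abs_of_pos ht] at hsq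
  refine hmem (neg_of_mul_neg_right ?_ ht.le)
  nlinarith [(abs_le.1 hrem).2, sq_nonneg ‖z - p‖]

end InnerTangentBall

theorem LittleOh.isLittleO {n k : ℕ} {Ω : Set (En n)} {F : En n → En n} {p : En n}
    (h : LittleOh Ω F p k) (hp : p ∉ Ω) :
    (fun z => F z - z) =o[𝓝[Ω] p] fun z => ‖z - p‖ ^ k := by
  refine .of_norm_left ((Asymptotics.isLittleO_iff_tendsto' ?_).2 h)
  filter_upwards [self_mem_nhdsWithin] with z hz hzp
  have hzp' : z = p := sub_eq_zero.1 (norm_eq_zero.1 (eq_zero_of_pow_eq_zero hzp))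
  exact absurd (hzp' ▸ hz) hp

theorem StronglyPcxAt.exists_isPeakFunction_and_ball_subset {n : ℕ} {Ω : Set (En n)} {ρ : En n → ℝ}
    {p : En n} (hspc : StronglyPcxAt ρ p) (hρ : ContDiffAt ℝ 2 ρ p) (hp : ρ p = 0)
    (hne : fderiv ℝ ρ p ≠ 0) (hΩ : ∀ᶠ z in 𝓝 p, z ∈ Ω ↔ ρ z < 0) :
    ∃ (L : En n → ℂ) (e : En n) (c δ : ℝ), IsPeakFunction L Ω p c δ ∧ fderiv ℂ L p e ≠ 0 ∧
      ball (p - e) ‖e‖ ⊆ Ω := by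
  obtain ⟨L, c, δ, hL, hLp⟩ := exists_isPeakFunction_of_contDiffAt hρ hp
    (hΩ.mono fun _ => Iff.mp) fun ξ hξ h1 h2 => by
      simpa [LeviForm, iteratedFDeriv_two_apply] using hspc ξ hξ ⟨h1, h2⟩
  set l : StrongDual ℂ (En n) := StrongDual.extendRCLike (fderiv ℝ ρ p)
  set v := (InnerProductSpace.toDual ℂ (En n)).symm l
  have hv : ∀ x, inner ℂ v x = l x := fun x => InnerProductSpace.toDual_symm_apply
  have hlre : ∀ x, (l x).re = fderiv ℝ ρ p x := StrongDual.re_extendRCLike_apply (𝕜 := ℂ) _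
  have hv0 : v ≠ 0 := fun h0 => hne <| by
    ext x
    rw [← hlre, ← hv, h0]
    simp
  obtain ⟨t, ht, hball⟩ := exists_ball_sub_smul_subset (𝕜 := ℂ) (v := v) (ρ := ρ) (Ω := Ω)
    (by simpa only [hv, RCLike.re_to_complex, hlre, hp, sub_zero] using isBigO_sub_fderiv hρ)
    (hΩ.mono fun _ => Iff.mpr)
  refine ⟨L, (t : ℂ) • v, c, δ, hL, ?_, hball⟩
  rw [hLp, map_smul, ← hv]
  simp [ht.ne', hv0]

theorem huang_conjecture_general {n : ℕ} (Ω : Set (En n)) (ρ : En n → ℝ) (hΩ : IsOpen Ω)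
    (hc : IsPreconnected Ω) (hbd : Bornology.IsBounded Ω) (p : En n) (hρ : ContDiffAt ℝ 2 ρ p)
    (hp : ρ p = 0) (hne : fderiv ℝ ρ p ≠ 0) (hloc : ∀ᶠ z in 𝓝 p, z ∈ Ω ↔ ρ z < 0)
    (hspc : StronglyPcxAt ρ p) (F : En n → En n) (hF : DifferentiableOn ℂ F Ω)
    (hFself : MapsTo F Ω Ω) (z₀ : En n) (hz₀ : z₀ ∈ Ω) (hfix : F z₀ = z₀)
    (ho : LittleOh Ω F p 2) : ∀ z ∈ Ω, F z = z := by
  obtain ⟨L, e, c, δ, hL, hLe, hball⟩ :=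
    hspc.exists_isPeakFunction_and_ball_subset hρ hp hne hloc
  have hpΩ : p ∉ Ω := fun h => (hloc.self_of_nhds.1 h).ne hp
  have he : ‖e‖ ≠ 0 := norm_ne_zero_iff.2 fun h => hLe (by rw [h, map_zero])
  have hpcl : p ∈ closure Ω := by
    refine closure_mono hball ?_
    rw [closure_ball _ he]
    simp
  exact hL.eqOn_id hΩ hc hbd hpcl hball hLe hF hFself hz₀ hfix (ho.isLittleO hpΩ)

theorem huang_conjecture
    {n : ℕ} (hn : 2 ≤ n) (Ω : Set (En n)) (ρ : En n → ℝ)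
    (hΩ : IsDomain' Ω) (hbd : Bornology.IsBounded Ω)
    (hρ : IsPcxCinfBoundary Ω ρ)
    (p : En n) (hp : p ∈ frontier Ω) (hspc : StronglyPcxAt ρ p)
    (F : En n → En n) (hF : DifferentiableOn ℂ F Ω) (hFself : MapsTo F Ω Ω)
    (z₀ : En n) (hz₀ : z₀ ∈ Ω) (hfix : F z₀ = z₀)
    (ho : LittleOh Ω F p 2) :
    ∀ z ∈ Ω, F z = z := by
  obtain ⟨⟨hsm, hneg, hzero, hne⟩, -⟩ := hρ
  exact huang_conjecture_general Ω ρ hΩ.1 hΩ.2.isPreconnected hbd p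
    (hsm.of_le (WithTop.coe_le_coe.2 (le_top : (2 : ℕ∞) ≤ ⊤))).contDiffAt (hzero.subset hp)
    (hne p hp) (Eventually.of_forall fun z => Set.ext_iff.1 hneg z) hspc F hF hFself z₀ hz₀
    hfix ho
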